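/- Assume the Riemann Hypothesis. There exists an absolute constant C > 0 such that for all real r and x with r > 1, ln x > 2·ln r, and √x / r ≥ 2657, there exists ã ∈ [(1 − 2·ln r/(ln x + 2·ln r))², (1 + 2·ln r/(ln x − 2·ln r))²] with |N^{ALG}_r(x) − ã·(4x/ln²x)·(ln r − (ln r)/r)| ≤ C·x^{3/4}·r^{1/2}, where N^{ALG}_r(x) = #{(p,q) : p, q prime, √x/r < p ≤ √x and x/(r·p) < q ≤ x/p}. -/

import Mathlib

/-- Prime-pair count of the algorithmically inspired notion: ordered pairs of primes `(p,q)`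
with `√x/r < p ≤ √x` and `x/(r·p) < q ≤ x/p`. -/
noncomputable def NALG (r x : ℝ) : ℕ :=
  Nat.card {pq : ℕ × ℕ // pq.1.Prime ∧ pq.2.Prime ∧
    Real.sqrt x / r < (pq.1 : ℝ) ∧ (pq.1 : ℝ) ≤ Real.sqrt x ∧
    x / (r * (pq.1 : ℝ)) < (pq.2 : ℝ) ∧ (pq.2 : ℝ) ≤ x / (pq.1 : ℝ)}

/-!
Under the Riemann Hypothesis every zero `ρ` of `ζ` seen from `s = 1/2 + δ + it` satisfies
`|s - ρ| ^ 2 = δ ^ 2 + (t - im ρ) ^ 2`. Jensen's inequality leaves `O(log |t|)` zeros in each unit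
window, and away from them `(ζ'/ζ)'` is `O(log |t|)` by Borel–Carathéodory; as `1 / |s - ρ| ^ 2`
integrates to `O(1 / δ)` over a vertical line, so does `(ζ'/ζ)'` over each window up to a factor
`log |t|`. Mellin inversion turns this into a bound for the increments of the logarithmic average of
`E(x) = ∑_{n ≤ x} log n · Λ(n) - ∫ log`. Increments over `[x, x exp (± 1 / √x)]` with
`δ = 1 / log x`, together with the monotonicity of the sum, give `E(x) = O(√x (log x) ^ 3)`, and
partial summation gives `π(x) = Li(x) + O(√x log x)`.

For `y = √x`, the number of pairs is `∑_{y/r < p ≤ y} (π(y²/p) - π(y²/(rp)))`. Replacing `π` by `Li`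
inside costs `≪ y log y ∑_{p ≤ y} p^{-1/2} ≪ y^{3/2}`; partial summation over `p` replaces the sum
by `∫ (Li(y²/s) - Li(y²/(rs))) ds / log s` at a cost `≪ y^{3/2} r^{1/2}`. In this integral both
logarithms lie between `log y - log r` and `log y + log r`, whence the interval for `ã`.
-/

section SecondLogDeriv

open Filter Topology

/-- The second logarithmic derivative `(log f)'' = (f' / f)'`. Unlike `f' / f` itself, its size near
a zero of `f` is the inverse square of the distance, which is integrable along vertical lines. -/
noncomputable def logDeriv₂ (f : ℂ → ℂ) : ℂ → ℂ := deriv (logDeriv f)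

lemma analyticAt_logDeriv {f : ℂ → ℂ} {z : ℂ} (hf : AnalyticAt ℂ f z) (hz : f z ≠ 0) :
    AnalyticAt ℂ (logDeriv f) z :=
  hf.deriv.div hf hz

lemma differentiableAt_logDeriv₂ {f : ℂ → ℂ} {z : ℂ} (hf : AnalyticAt ℂ f z) (hz : f z ≠ 0) :
    DifferentiableAt ℂ (logDeriv₂ f) z :=
  (analyticAt_logDeriv hf hz).deriv.differentiableAt

lemma logDeriv₂_mul {f g : ℂ → ℂ} {z : ℂ} (hf : AnalyticAt ℂ f z) (hg : AnalyticAt ℂ g z)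
    (hfz : f z ≠ 0) (hgz : g z ≠ 0) :
    logDeriv₂ (fun w ↦ f w * g w) z = logDeriv₂ f z + logDeriv₂ g z := by
  have hsplit : logDeriv (fun w ↦ f w * g w) =ᶠ[𝓝 z] logDeriv f + logDeriv g := by
    filter_upwards [hf.eventually_analyticAt, hg.eventually_analyticAt,
      hf.continuousAt.eventually_ne hfz, hg.continuousAt.eventually_ne hgz] with w hfw hgw hfw0 hgw0
    exact logDeriv_mul w hfw0 hgw0 hfw.differentiableAt hgw.differentiableAt
  rw [logDeriv₂, hsplit.deriv_eq, deriv_add (analyticAt_logDeriv hf hfz).differentiableAt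
    (analyticAt_logDeriv hg hgz).differentiableAt, logDeriv₂, logDeriv₂]

lemma logDeriv₂_prod {ι : Type*} (s : Finset ι) {f : ι → ℂ → ℂ} {z : ℂ}
    (hf : ∀ i ∈ s, AnalyticAt ℂ (f i) z) (hz : ∀ i ∈ s, f i z ≠ 0) :
    logDeriv₂ (fun w ↦ ∏ i ∈ s, f i w) z = ∑ i ∈ s, logDeriv₂ (f i) z := by
  classical
  induction s using Finset.induction_on with
  | empty => simp [logDeriv₂]
  | insert j s hj ih =>
    rw [Finset.forall_mem_insert] at hf hz
    simp_rw [Finset.prod_insert hj, Finset.sum_insert hj]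
    rw [logDeriv₂_mul hf.1 (s.analyticAt_fun_prod hf.2) hz.1 (Finset.prod_ne_zero_iff.2 hz.2),
      ih hf.2 hz.2]

lemma logDeriv₂_affine (b c z : ℂ) (hz : b + c * z ≠ 0) :
    logDeriv₂ (fun w ↦ b + c * w) z = -(c / (b + c * z)) ^ 2 := by
  have hderiv (w : ℂ) : HasDerivAt (fun w ↦ b + c * w) c w := by
    simpa using ((hasDerivAt_id w).const_mul c).const_add b
  have hlog : logDeriv (fun w ↦ b + c * w) = fun w ↦ c * (b + c * w)⁻¹ := by
    funext w
    rw [logDeriv_apply, (hderiv w).deriv, div_eq_mul_inv]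
  rw [logDeriv₂, hlog, (((hderiv z).fun_inv hz).const_mul c).deriv, div_pow]
  ring

lemma logDeriv₂_const_mul_comp_const_add {b : ℂ} (hb : b ≠ 0) (f : ℂ → ℂ) (c z : ℂ) :
    logDeriv₂ (fun w ↦ b * f (c + w)) z = logDeriv₂ f (c + z) := by
  have hlog : logDeriv (fun w ↦ b * f (c + w)) = fun w ↦ logDeriv f (c + w) := by
    funext w
    rw [logDeriv_const_mul _ _ hb, logDeriv_apply, logDeriv_apply, deriv_comp_const_add]
  rw [logDeriv₂, hlog, deriv_comp_const_add, logDeriv₂]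

end SecondLogDeriv

section ZeroFree

open Complex Metric

variable {f : ℂ → ℂ} {r : ℝ}

lemma exists_hasDerivAt_logDeriv_and_eq_mul_exp (hr : 0 < r) (hf : DifferentiableOn ℂ f (ball 0 r))
    (hne : ∀ z ∈ ball 0 r, f z ≠ 0) :
    ∃ h : ℂ → ℂ, h 0 = 0 ∧ ∀ z ∈ ball 0 r,
      HasDerivAt h (logDeriv f z) z ∧ f z = f 0 * cexp (h z) := by
  have hlog : DifferentiableOn ℂ (logDeriv f) (ball 0 r) :=
    (hf.deriv isOpen_ball).div hf hne
  obtain ⟨p, hp⟩ := hlog.isExactOn_ball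
  refine ⟨fun z ↦ p z - p 0, sub_self _, fun z hz ↦ ⟨(hp z hz).sub_const _, ?_⟩⟩
  have hquot (w : ℂ) (hw : w ∈ ball 0 r) : HasDerivAt (fun w ↦ f w * cexp (-p w)) 0 w := by
    have hfw := (hf.differentiableAt (isOpen_ball.mem_nhds hw)).hasDerivAt
    refine (hfw.mul (hp w hw).neg.cexp).congr_deriv ?_
    rw [logDeriv_apply]
    field_simp [hne w hw]
    ring
  have hconst : f z * cexp (-p z) = f 0 * cexp (-p 0) :=
    isOpen_ball.is_const_of_deriv_eq_zero (convex_ball _ _).isPreconnected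
      (fun w hw ↦ (hquot w hw).differentiableAt.differentiableWithinAt)
      (fun w hw ↦ (hquot w hw).deriv) hz (mem_ball_self hr)
  calc f z = f z * cexp (-p z) * cexp (p z) := by
        rw [mul_assoc, ← exp_add, neg_add_cancel, exp_zero, mul_one]
    _ = f 0 * cexp (p z - p 0) := by
        rw [hconst, mul_assoc, ← exp_add, neg_add_eq_sub]

lemma norm_logDeriv₂_le_of_forall_ne_zero {L d : ℝ} (hL : 0 < L) (hd : 0 < d) (hr : 0 < r)
    (hf : DifferentiableOn ℂ f (ball 0 r)) (hne : ∀ z ∈ ball 0 r, f z ≠ 0) (hf0 : 1 ≤ ‖f 0‖)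
    (hfL : ∀ z ∈ ball 0 r, ‖f z‖ ≤ Real.exp L) {z : ℂ} (hz : ‖z‖ ≤ r - 2 * d) :
    ‖logDeriv₂ f z‖ ≤ 4 * L * r / d ^ 3 := by
  obtain ⟨h, h0, hh⟩ := exists_hasDerivAt_logDeriv_and_eq_mul_exp hr hf hne
  have hdiff : DifferentiableOn ℂ h (ball 0 r) := fun w hw ↦
    (hh w hw).1.differentiableAt.differentiableWithinAt
  have hre (w : ℂ) (hw : w ∈ ball 0 r) : (h w).re ≤ L := by
    have hexp := hfL w hw
    rw [(hh w hw).2, norm_mul, norm_exp] at hexp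
    exact Real.exp_le_exp.1 ((le_mul_of_one_le_left (Real.exp_pos _).le hf0).trans hexp)
  have hbound (w : ℂ) (hw : ‖w‖ ≤ r - d) : ‖h w‖ ≤ 2 * L * r / d := by
    have hwr : w ∈ ball 0 r := by rw [mem_ball_zero_iff]; linarith
    have hwr' : ‖w‖ ≤ r := by linarith
    have hdw : d ≤ r - ‖w‖ := by linarith
    calc ‖h w‖ ≤ 2 * L * ‖w‖ / (r - ‖w‖) := borelCaratheodory_zero hL hdiff hre hr hwr h0
      _ ≤ 2 * L * r / d := by gcongr
  have hball (w : ℂ) (hw : w ∈ closedBall z d) : ‖w‖ ≤ r - d := by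
    rw [mem_closedBall, dist_eq_norm] at hw
    linarith [norm_le_norm_add_norm_sub' w z]
  have hsub : closedBall z d ⊆ ball 0 r := fun w hw ↦ by
    rw [mem_ball_zero_iff]; linarith [hball w hw]
  have hiter : logDeriv₂ f z = iteratedDeriv 2 h z := by
    rw [iteratedDeriv_succ, iteratedDeriv_one, logDeriv₂]
    refine Filter.EventuallyEq.deriv_eq ?_
    filter_upwards [isOpen_ball.mem_nhds (hsub (mem_closedBall_self hd.le))] with w hw
    exact (hh w hw).1.deriv.symm
  calc ‖logDeriv₂ f z‖ = ‖iteratedDeriv 2 h z‖ := by rw [hiter]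
    _ ≤ (2).factorial * (2 * L * r / d) / d ^ 2 :=
        norm_iteratedDeriv_le_of_forall_mem_sphere_norm_le 2 hd
          (hdiff.mono (closure_ball_subset_closedBall.trans hsub)).diffContOnCl
          fun w hw ↦ hbound w (hball w (sphere_subset_closedBall hw))
    _ = 4 * L * r / d ^ 3 := by
        rw [Nat.factorial_two]; field_simp; norm_num

end ZeroFree

section ZeroFactorization

open Complex Metric ComplexConjugate

/-- `f` is the product of the linear factors vanishing at the points `a i` of the closed disc of
radius `r` about `0` and of the entire cofactor `g`. The `a i` are zeros of `f` listed with
multiplicity, but not necessarily all of them: `g` may still vanish. -/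
structure IsZeroFactorization (f : ℂ → ℂ) (r : ℝ) {n : ℕ} (a : Fin n → ℂ) (g : ℂ → ℂ) :
    Prop where
  differentiable_cofactor : Differentiable ℂ g
  norm_le : ∀ i, ‖a i‖ ≤ r
  eq_prod_mul : ∀ z, f z = (∏ i, (z - a i)) * g z

/-- The affine function vanishing at the mirror image of `a` in the circle of radius `R` about `0`,
normalised to have the same modulus as `z - a` on that circle. -/
noncomputable def reflectedFactor (R : ℝ) (a z : ℂ) : ℂ := R + -(conj a / R) * z

/-- The function obtained from `(∏ i, (z - a i)) * g z` by reflecting the zeros `a i` out of the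
disc of radius `R`, as in the proof of Jensen's inequality. -/
noncomputable def reflectZeros (R : ℝ) {n : ℕ} (a : Fin n → ℂ) (g : ℂ → ℂ) (z : ℂ) : ℂ :=
  (∏ i, reflectedFactor R (a i) z) * g z

lemma differentiable_reflectedFactor (R : ℝ) (a : ℂ) : Differentiable ℂ (reflectedFactor R a) := by
  unfold reflectedFactor
  fun_prop

lemma norm_reflectedFactor_of_norm_eq {R : ℝ} (hR : 0 < R) (a : ℂ) {z : ℂ} (hz : ‖z‖ = R) :
    ‖reflectedFactor R a z‖ = ‖z - a‖ := by
  have hR' : (R : ℂ) ≠ 0 := ofReal_ne_zero.2 hR.ne'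
  have hzz : (R : ℂ) * R = conj z * z := by
    rw [mul_comm, mul_comm (conj z), mul_conj, normSq_eq_norm_sq, hz]
    push_cast
    ring
  have hfactor : reflectedFactor R a z = conj (z - a) * (z / R) := by
    rw [reflectedFactor, map_sub]
    field_simp
    linear_combination hzz
  rw [hfactor, norm_mul, norm_conj, norm_div, hz, norm_real, Real.norm_of_nonneg hR.le,
    div_self hR.ne', mul_one]

lemma sub_le_norm_reflectedFactor {R r : ℝ} (hR : 0 < R) {a z : ℂ} (ha : ‖a‖ ≤ r) (hz : ‖z‖ ≤ R) :
    R - r ≤ ‖reflectedFactor R a z‖ := by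
  have hsmall : ‖-(conj a / R) * z‖ ≤ r := by
    rw [norm_mul, norm_neg, norm_div, norm_conj, norm_real, Real.norm_of_nonneg hR.le, div_mul_comm]
    exact (mul_le_of_le_one_left (norm_nonneg a) ((div_le_one hR).2 hz)).trans ha
  have htri := norm_sub_le_norm_add (R : ℂ) (-(conj a / R) * z)
  rw [norm_real, Real.norm_of_nonneg hR.le] at htri
  rw [reflectedFactor]
  linarith

lemma norm_logDeriv₂_reflectedFactor_le {R r : ℝ} (hrR : r < R) {a z : ℂ} (ha : ‖a‖ ≤ r)
    (hz : ‖z‖ ≤ R) : ‖logDeriv₂ (reflectedFactor R a) z‖ ≤ 1 / (R - r) ^ 2 := by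
  have hR : 0 < R := ((norm_nonneg a).trans ha).trans_lt hrR
  have hgap : 0 < R - r := sub_pos.2 hrR
  have hlower := sub_le_norm_reflectedFactor hR ha hz
  have hne : reflectedFactor R a z ≠ 0 := norm_pos_iff.1 (hgap.trans_le hlower)
  have hcoeff : ‖a‖ / R ≤ 1 := (div_le_one hR).2 (ha.trans hrR.le)
  have hexact : logDeriv₂ (reflectedFactor R a) z
      = -(-(conj a / R) / reflectedFactor R a z) ^ 2 := logDeriv₂_affine _ _ z hne
  rw [hexact, norm_neg, norm_pow, norm_div, norm_neg, norm_div, norm_conj, norm_real,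
    Real.norm_of_nonneg hR.le, ← one_div_pow]
  gcongr

namespace IsZeroFactorization

variable {f g : ℂ → ℂ} {n : ℕ} {a : Fin n → ℂ} {r R L : ℝ}

lemma differentiable_reflectZeros (h : IsZeroFactorization f r a g) (R : ℝ) :
    Differentiable ℂ (reflectZeros R a g) :=
  (Differentiable.fun_finsetProd fun i _ ↦ differentiable_reflectedFactor R (a i)).mul
    h.differentiable_cofactor

lemma apply_eq_zero (h : IsZeroFactorization f r a g) (i : Fin n) : f (a i) = 0 := by
  rw [h.eq_prod_mul, Finset.prod_eq_zero (Finset.mem_univ i) (sub_self _), zero_mul]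

lemma norm_reflectZeros_le (h : IsZeroFactorization f r a g) (hR : 0 < R) {M : ℝ}
    (hM : ∀ z, ‖z‖ ≤ R → ‖f z‖ ≤ M) {z : ℂ} (hz : ‖z‖ ≤ R) :
    ‖reflectZeros R a g z‖ ≤ M := by
  refine norm_le_of_forall_mem_frontier_norm_le (U := ball 0 R) isBounded_ball
    (h.differentiable_reflectZeros R).diffContOnCl (fun w hw ↦ ?_)
    (by rwa [closure_ball _ hR.ne', mem_closedBall_zero_iff])
  rw [frontier_ball _ hR.ne', mem_sphere_zero_iff_norm] at hw
  have hcircle : ‖reflectZeros R a g w‖ = ‖f w‖ := by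
    simp_rw [reflectZeros, h.eq_prod_mul, norm_mul, norm_prod,
      norm_reflectedFactor_of_norm_eq hR _ hw]
  exact hcircle.trans_le (hM w hw.le)

lemma pow_mul_norm_le (h : IsZeroFactorization f r a g) (hr : 0 < r) (hR : 0 < R) :
    (R / r) ^ n * ‖f 0‖ ≤ ‖reflectZeros R a g 0‖ := by
  have hprod : ∏ i, ‖(0 : ℂ) - a i‖ ≤ r ^ n := by
    calc ∏ i, ‖(0 : ℂ) - a i‖ ≤ ∏ _i : Fin n, r :=
          Finset.prod_le_prod (fun _ _ ↦ norm_nonneg _) fun i _ ↦ by simpa using h.norm_le i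
      _ = r ^ n := by simp
  have hreflect : ‖reflectZeros R a g 0‖ = R ^ n * ‖g 0‖ := by
    simp [reflectZeros, reflectedFactor, abs_of_pos hR]
  rw [hreflect, h.eq_prod_mul, norm_mul, norm_prod, div_pow, div_mul_eq_mul_div,
    div_le_iff₀ (by positivity)]
  calc R ^ n * ((∏ i, ‖(0 : ℂ) - a i‖) * ‖g 0‖) ≤ R ^ n * (r ^ n * ‖g 0‖) := by gcongr
    _ = R ^ n * ‖g 0‖ * r ^ n := by ring

lemma card_mul_log_le (h : IsZeroFactorization f r a g) (hr : 0 < r) (hR : 0 < R)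
    (hf0 : 1 ≤ ‖f 0‖) (hfL : ∀ z, ‖z‖ ≤ R → ‖f z‖ ≤ Real.exp L) :
    n * Real.log (R / r) ≤ L := by
  have hpow : (R / r) ^ n ≤ Real.exp L :=
    calc (R / r) ^ n ≤ (R / r) ^ n * ‖f 0‖ := le_mul_of_one_le_right (by positivity) hf0
      _ ≤ ‖reflectZeros R a g 0‖ := h.pow_mul_norm_le hr hR
      _ ≤ Real.exp L := h.norm_reflectZeros_le hR hfL (by simpa using hR.le)
  rw [← Real.log_pow]
  exact (Real.log_le_iff_le_exp (by positivity)).2 hpow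

lemma cons_dslope (h : IsZeroFactorization f r a g) {w : ℂ} (hw : ‖w‖ ≤ r) (hgw : g w = 0) :
    IsZeroFactorization f r (Fin.cons w a : Fin (n + 1) → ℂ) (dslope g w) where
  differentiable_cofactor := by
    rw [← differentiableOn_univ, differentiableOn_dslope Filter.univ_mem]
    exact h.differentiable_cofactor.differentiableOn
  norm_le := Fin.cases hw h.norm_le
  eq_prod_mul z := by
    have hslope := sub_smul_dslope g w z
    rw [hgw, sub_zero, smul_eq_mul] at hslope
    rw [h.eq_prod_mul, Fin.prod_univ_succ, Fin.cons_zero, ← hslope]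
    simp only [Fin.cons_succ]
    ring

lemma logDeriv₂_eq (h : IsZeroFactorization f r a g) (hrR : r < R) {z : ℂ} (hz : ‖z‖ ≤ R)
    (hfz : f z ≠ 0) :
    logDeriv₂ f z = logDeriv₂ (reflectZeros R a g) z
      + ∑ i, (-(1 / (z - a i)) ^ 2 - logDeriv₂ (reflectedFactor R (a i)) z) := by
  have hR (i : Fin n) : 0 < R := ((norm_nonneg _).trans (h.norm_le i)).trans_lt hrR
  rw [h.eq_prod_mul] at hfz
  have hgz := right_ne_zero_of_mul hfz
  have hlin (i : Fin n) : z - a i ≠ 0 :=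
    Finset.prod_ne_zero_iff.1 (left_ne_zero_of_mul hfz) i (Finset.mem_univ i)
  have hrefl (i : Fin n) : reflectedFactor R (a i) z ≠ 0 :=
    norm_pos_iff.1 ((sub_pos.2 hrR).trans_le (sub_le_norm_reflectedFactor (hR i) (h.norm_le i) hz))
  have hg : AnalyticAt ℂ g z := h.differentiable_cofactor.analyticAt z
  have hlinA (i : Fin n) : AnalyticAt ℂ (fun w ↦ w - a i) z := by fun_prop
  have hreflA (i : Fin n) : AnalyticAt ℂ (reflectedFactor R (a i)) z :=
    (differentiable_reflectedFactor R (a i)).analyticAt z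
  have hlin₂ (i : Fin n) : logDeriv₂ (fun w ↦ w - a i) z = -(1 / (z - a i)) ^ 2 := by
    simpa [neg_add_eq_sub] using
      logDeriv₂_affine (-a i) 1 z (by simpa [neg_add_eq_sub] using hlin i)
  have hleft : logDeriv₂ f z = ∑ i, -(1 / (z - a i)) ^ 2 + logDeriv₂ g z := by
    rw [funext h.eq_prod_mul, logDeriv₂_mul (Finset.univ.analyticAt_fun_prod fun i _ ↦ hlinA i) hg
      (left_ne_zero_of_mul hfz) hgz, logDeriv₂_prod _ (fun i _ ↦ hlinA i) (fun i _ ↦ hlin i)]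
    simp_rw [hlin₂]
  have hright : logDeriv₂ (reflectZeros R a g) z
      = ∑ i, logDeriv₂ (reflectedFactor R (a i)) z + logDeriv₂ g z := by
    unfold reflectZeros
    rw [logDeriv₂_mul (Finset.univ.analyticAt_fun_prod fun i _ ↦ hreflA i) hg
      (Finset.prod_ne_zero_iff.2 fun i _ ↦ hrefl i) hgz,
      logDeriv₂_prod _ (fun i _ ↦ hreflA i) (fun i _ ↦ hrefl i)]
  rw [hleft, hright, Finset.sum_sub_distrib]
  ring

end IsZeroFactorization

variable {f : ℂ → ℂ} {r R L : ℝ}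

lemma exists_isZeroFactorization_cofactor_ne_zero (hr : 0 < r) (hrR : r < R)
    (hf : Differentiable ℂ f) (hf0 : 1 ≤ ‖f 0‖) (hfL : ∀ z, ‖z‖ ≤ R → ‖f z‖ ≤ Real.exp L) :
    ∃ (n : ℕ) (a : Fin n → ℂ) (g : ℂ → ℂ),
      IsZeroFactorization f r a g ∧ ∀ z, ‖z‖ ≤ r → g z ≠ 0 := by
  let S : Set ℕ := {n | ∃ (a : Fin n → ℂ) (g : ℂ → ℂ), IsZeroFactorization f r a g}
  have hzero : 0 ∈ S := ⟨Fin.elim0, f, hf, fun i ↦ i.elim0, by simp⟩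
  have hlog : 0 < Real.log (R / r) := Real.log_pos ((one_lt_div hr).2 hrR)
  have hbdd : BddAbove S := by
    refine ⟨⌊L / Real.log (R / r)⌋₊, fun n ⟨a, g, h⟩ ↦ Nat.le_floor ?_⟩
    exact (le_div_iff₀ hlog).2 (h.card_mul_log_le hr (hr.trans hrR) hf0 hfL)
  obtain ⟨a, g, h⟩ := Nat.sSup_mem ⟨0, hzero⟩ hbdd
  refine ⟨sSup S, a, g, h, fun w hw hgw ↦ ?_⟩
  have hlarger : sSup S + 1 ∈ S := ⟨_, _, h.cons_dslope hw hgw⟩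
  exact (Nat.lt_succ_self _).not_ge (le_csSup hbdd hlarger)

lemma IsZeroFactorization.norm_logDeriv₂_le {g : ℂ → ℂ} {n : ℕ} {a : Fin n → ℂ} {d : ℝ}
    (h : IsZeroFactorization f r a g) (hr : 0 < r) (hrR : r < R) (hd : 0 < d) (hL : 0 < L)
    (hf0 : 1 ≤ ‖f 0‖) (hfL : ∀ z, ‖z‖ ≤ R → ‖f z‖ ≤ Real.exp L) (hg : ∀ z, ‖z‖ ≤ r → g z ≠ 0)
    {z : ℂ} (hz : ‖z‖ ≤ r - 2 * d) (hfz : f z ≠ 0) :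
    ‖logDeriv₂ f z‖ ≤ 4 * L * r / d ^ 3 + n / (R - r) ^ 2 + ∑ i, 1 / ‖z - a i‖ ^ 2 := by
  have hR : 0 < R := hr.trans hrR
  have hball (w : ℂ) (hw : w ∈ ball 0 r) : ‖w‖ ≤ r := (mem_ball_zero_iff.1 hw).le
  have hzR : ‖z‖ ≤ R := by linarith
  have hne (w : ℂ) (hw : w ∈ ball 0 r) : reflectZeros R a g w ≠ 0 := by
    refine mul_ne_zero (Finset.prod_ne_zero_iff.2 fun i _ ↦ norm_pos_iff.1 ?_) (hg w (hball w hw))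
    exact (sub_pos.2 hrR).trans_le
      (sub_le_norm_reflectedFactor hR (h.norm_le i) ((hball w hw).trans hrR.le))
  have hreflect : ‖logDeriv₂ (reflectZeros R a g) z‖ ≤ 4 * L * r / d ^ 3 :=
    norm_logDeriv₂_le_of_forall_ne_zero hL hd hr (h.differentiable_reflectZeros R).differentiableOn
      hne ((one_le_mul_of_one_le_of_one_le (one_le_pow₀ ((one_le_div hr).2 hrR.le)) hf0).trans
        (h.pow_mul_norm_le hr hR))
      (fun w hw ↦ h.norm_reflectZeros_le hR hfL ((hball w hw).trans hrR.le)) hz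
  have hterm (i : Fin n) : ‖-(1 / (z - a i)) ^ 2 - logDeriv₂ (reflectedFactor R (a i)) z‖
      ≤ 1 / ‖z - a i‖ ^ 2 + 1 / (R - r) ^ 2 := by
    refine (norm_sub_le _ _).trans (add_le_add (le_of_eq ?_)
      (norm_logDeriv₂_reflectedFactor_le hrR (h.norm_le i) hzR))
    rw [norm_neg, norm_pow, norm_div, norm_one, one_div_pow]
  calc ‖logDeriv₂ f z‖
      ≤ 4 * L * r / d ^ 3 + ∑ i, (1 / ‖z - a i‖ ^ 2 + 1 / (R - r) ^ 2) := by
        rw [h.logDeriv₂_eq hrR hzR hfz]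
        exact (norm_add_le _ _).trans (add_le_add hreflect
          (norm_sum_le_of_le _ fun i _ ↦ hterm i))
    _ = _ := by
        rw [Finset.sum_add_distrib, Finset.sum_const, Finset.card_univ, Fintype.card_fin,
          nsmul_eq_mul]
        ring

lemma exists_forall_norm_logDeriv₂_le_sum_zeros {ρ R : ℝ} (hρ : 0 < ρ) (hρR : ρ < R) :
    ∃ K > 0, ∀ (f : ℂ → ℂ) (L : ℝ), 0 < L → Differentiable ℂ f → 1 ≤ ‖f 0‖ →
      (∀ z, ‖z‖ ≤ R → ‖f z‖ ≤ Real.exp L) →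
      ∃ (n : ℕ) (a : Fin n → ℂ), (∀ i, f (a i) = 0) ∧ n ≤ K * L ∧
        ∀ z, ‖z‖ ≤ ρ → f z ≠ 0 → ‖logDeriv₂ f z‖ ≤ K * L + ∑ i, 1 / ‖z - a i‖ ^ 2 := by
  obtain ⟨d, hd, rfl⟩ : ∃ d > 0, R = ρ + 3 * d := ⟨(R - ρ) / 3, by linarith, by ring⟩
  set r := ρ + 2 * d
  have hr : 0 < r := by positivity
  have hrR : r < ρ + 3 * d := by linarith
  have hgap : ρ + 3 * d - r = d := by ring
  set k := Real.log ((ρ + 3 * d) / r)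
  have hk : 0 < k := Real.log_pos ((one_lt_div hr).2 hrR)
  refine ⟨4 * r / d ^ 3 + (1 / k) / d ^ 2 + 1 / k, by positivity, fun f L hL hf hf0 hfL ↦ ?_⟩
  obtain ⟨n, a, g, h, hg⟩ := exists_isZeroFactorization_cofactor_ne_zero hr hrR hf hf0 hfL
  have hcard : (n : ℝ) ≤ 1 / k * L := by
    rw [one_div_mul_eq_div, le_div_iff₀ hk]
    exact h.card_mul_log_le hr (hr.trans hrR) hf0 hfL
  refine ⟨n, a, h.apply_eq_zero, hcard.trans ?_, fun z hz hfz ↦ ?_⟩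
  · gcongr
    exact le_add_of_nonneg_left (by positivity)
  · refine (h.norm_logDeriv₂_le hr hrR hd hL hf0 hfL hg (by linarith) hfz).trans ?_
    rw [hgap]
    gcongr
    calc 4 * L * r / d ^ 3 + n / d ^ 2 ≤ 4 * L * r / d ^ 3 + 1 / k * L / d ^ 2 := by gcongr
      _ = (4 * r / d ^ 3 + 1 / k / d ^ 2) * L := by ring
      _ ≤ _ := mul_le_mul_of_nonneg_right (le_add_of_nonneg_right (by positivity)) hL.le

end ZeroFactorization

section RiemannZeta

open Filter Topology Set MeasureTheory Asymptotics

lemma riemannZeta₁_of_ne_one {s : ℂ} (hs : s ≠ 1) :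
    riemannZeta₁ s = (s - 1) * riemannZeta s := by
  rw [riemannZeta_eq_inv_sub_mul hs, mul_inv_cancel_left₀ (sub_ne_zero.2 hs)]

lemma riemannZeta₁_ne_zero (hRH : RiemannHypothesis) {s : ℂ} (hs : 1 / 2 < s.re) :
    riemannZeta₁ s ≠ 0 := by
  rcases eq_or_ne s 1 with rfl | hs1
  · simp
  rw [riemannZeta₁_of_ne_one hs1]
  refine mul_ne_zero (sub_ne_zero.2 hs1) fun hzero ↦ hs.ne' (hRH s hzero ?_ hs1)
  rintro ⟨n, rfl⟩
  have hre : ((-2 : ℂ) * ((n : ℂ) + 1)).re = -2 * ((n : ℝ) + 1) := by simp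
  linarith [n.cast_nonneg (α := ℝ)]

lemma two_sub_tsum_le_norm_riemannZeta {s : ℂ} (hs : 1 < s.re) :
    2 - ∑' n : ℕ, 1 / (n : ℝ) ^ s.re ≤ ‖riemannZeta s‖ := by
  have hterm (n : ℕ) : ‖(1 : ℂ) / (n : ℂ) ^ s‖ = 1 / (n : ℝ) ^ s.re := by
    rw [norm_div, norm_one, Complex.norm_natCast_cpow_of_re_ne_zero n (by linarith)]
  have hreal : Summable fun n : ℕ ↦ 1 / (n : ℝ) ^ s.re := Real.summable_one_div_nat_rpow.2 hs
  have hcomplex : Summable fun n : ℕ ↦ (1 : ℂ) / (n : ℂ) ^ s := .of_norm (by simpa only [hterm])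
  have hrealTail : HasSum (fun n : ℕ ↦ if n = 1 then 0 else 1 / (n : ℝ) ^ s.re)
      (∑' n : ℕ, 1 / (n : ℝ) ^ s.re - 1) := by
    convert! hreal.hasSum.update 1 (0 : ℝ) using 1
    · ext n; simp [Function.update_apply]
    · simp [neg_add_eq_sub]
  have htail : ‖∑' n : ℕ, if n = 1 then 0 else (1 : ℂ) / (n : ℂ) ^ s‖ ≤
      ∑' n : ℕ, 1 / (n : ℝ) ^ s.re - 1 :=
    tsum_of_norm_bounded hrealTail fun n ↦ by
      split_ifs
      · exact norm_zero.le
      · exact (hterm n).le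
  rw [zeta_eq_tsum_one_div_nat_cpow hs, hcomplex.tsum_eq_add_tsum_ite 1]
  have htriangle := norm_sub_le_norm_add (1 : ℂ)
    (∑' n : ℕ, if n = 1 then 0 else (1 : ℂ) / (n : ℂ) ^ s)
  simp only [norm_one, Nat.cast_one, Complex.one_cpow, div_one] at htriangle ⊢
  linarith

lemma one_third_le_norm_riemannZeta₁ {s : ℂ} (hs : s.re = 2) : 1 / 3 ≤ ‖riemannZeta₁ s‖ := by
  have hzeta : 1 / 3 ≤ ‖riemannZeta s‖ := by
    have hbound := two_sub_tsum_le_norm_riemannZeta (s := s) (by linarith)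
    rw [hs] at hbound
    simp only [Real.rpow_two, hasSum_zeta_two.tsum_eq] at hbound
    nlinarith [Real.pi_lt_d2, Real.pi_pos]
  have hfactor : 1 ≤ ‖s - 1‖ := by
    have hre := Complex.abs_re_le_norm (s - 1)
    rw [Complex.sub_re, Complex.one_re, hs] at hre
    norm_num at hre
    exact hre
  have hs1 : s ≠ 1 := by rintro rfl; norm_num at hs
  rw [riemannZeta₁_of_ne_one hs1, norm_mul]
  nlinarith

/-- The fractional part on `(1, ∞)`, extended by zero. Its Mellin transform at `-s` continues
`ζ(s)` to the half-plane `0 < re s`. -/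
noncomputable def fractTail : ℝ → ℂ := (Ioi 1).indicator fun t ↦ ((Int.fract t : ℝ) : ℂ)

lemma measurable_fractTail : Measurable fractTail :=
  (Complex.measurable_ofReal.comp measurable_fract).indicator measurableSet_Ioi

lemma norm_fractTail_le_one (t : ℝ) : ‖fractTail t‖ ≤ 1 := by
  refine (norm_indicator_le_norm_self _ _).trans ?_
  rw [Complex.norm_real, Real.norm_of_nonneg (Int.fract_nonneg t)]
  exact (Int.fract_lt_one t).le

lemma norm_cpow_mul_fract_le (s : ℂ) {t : ℝ} (ht : 0 < t) :
    ‖(t : ℂ) ^ s * ((Int.fract t : ℝ) : ℂ)‖ ≤ t ^ s.re := by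
  rw [norm_mul, Complex.norm_cpow_eq_rpow_re_of_pos ht, Complex.norm_real,
    Real.norm_of_nonneg (Int.fract_nonneg t)]
  exact mul_le_of_le_one_right (by positivity) (Int.fract_lt_one t).le

lemma mellin_fractTail (s : ℂ) :
    mellin fractTail s = ∫ t in Ioi (1 : ℝ), (t : ℂ) ^ (s - 1) * ((Int.fract t : ℝ) : ℂ) := by
  have hindicator (t : ℝ) : (t : ℂ) ^ (s - 1) • fractTail t =
      (Ioi 1).indicator (fun t : ℝ ↦ (t : ℂ) ^ (s - 1) * ((Int.fract t : ℝ) : ℂ)) t := by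
    simp only [fractTail, smul_eq_mul, indicator_apply, mul_ite, mul_zero]
  simp_rw [mellin, hindicator]
  rw [setIntegral_indicator measurableSet_Ioi, inter_eq_right.2 (Ioi_subset_Ioi zero_le_one)]

lemma integrableOn_cpow_mul_fract {s : ℂ} (hs : s.re < -1) :
    IntegrableOn (fun t : ℝ ↦ (t : ℂ) ^ s * ((Int.fract t : ℝ) : ℂ)) (Ioi 1) := by
  refine Integrable.mono' (integrableOn_Ioi_rpow_of_lt hs zero_lt_one) ?_ ?_
  · exact ((Complex.measurable_ofReal.pow_const s).mul
      (Complex.measurable_ofReal.comp measurable_fract)).aestronglyMeasurable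
  · filter_upwards [ae_restrict_mem measurableSet_Ioi] with t ht
    exact norm_cpow_mul_fract_le s (one_pos.trans ht)

lemma norm_mellin_fractTail_le {s : ℂ} (hs : s.re < 0) : ‖mellin fractTail s‖ ≤ 1 / -s.re := by
  have hre : (s - 1).re < -1 := by rw [Complex.sub_re, Complex.one_re]; linarith
  rw [mellin_fractTail]
  refine (norm_integral_le_of_norm_le (integrableOn_Ioi_rpow_of_lt hre zero_lt_one) ?_).trans_eq ?_
  · filter_upwards [ae_restrict_mem measurableSet_Ioi] with t ht
    exact norm_cpow_mul_fract_le _ (one_pos.trans ht)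
  · rw [integral_Ioi_rpow_of_lt hre zero_lt_one]
    simp [div_neg, neg_div]

lemma differentiableAt_mellin_fractTail {s : ℂ} (hs : s.re < 0) :
    DifferentiableAt ℂ (mellin fractTail) s := by
  refine mellin_differentiableAt_of_isBigO_rpow (a := 0) (b := s.re - 1) ?_ ?_ hs ?_ (by simp)
  · refine LocallyIntegrable.locallyIntegrableOn ?_ _
    refine (locallyIntegrable_const (1 : ℝ)).mono measurable_fractTail.aestronglyMeasurable ?_
    filter_upwards with t using by simpa using norm_fractTail_le_one t
  · refine .of_bound 1 ?_
    filter_upwards with t using by simpa using norm_fractTail_le_one t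
  · refine EventuallyEq.trans_isBigO (f₂ := fun _ ↦ (0 : ℂ)) ?_ (isBigO_zero _ _)
    filter_upwards [mem_nhdsWithin_of_mem_nhds (Iio_mem_nhds (zero_lt_one' ℝ))] with t ht
    exact indicator_of_notMem (notMem_Ioi.2 (mem_Iio.1 ht).le) _

lemma integral_floor_mul_cpow {s : ℂ} (hs : 1 < s.re) :
    ∫ t in Ioi (1 : ℝ), (⌊t⌋₊ : ℂ) * (t : ℂ) ^ (-(s + 1)) =
      1 / (s - 1) - mellin fractTail (-s) := by
  have hmain : ∫ t in Ioi (1 : ℝ), (t : ℂ) ^ (-s) = 1 / (s - 1) := by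
    rw [integral_Ioi_cpow_of_lt (by simpa using hs) one_pos, Complex.ofReal_one, Complex.one_cpow,
      ← neg_div_neg_eq, neg_neg, neg_add', neg_neg]
  rw [← hmain, mellin_fractTail, ← integral_sub
    (integrableOn_Ioi_cpow_of_lt (by simpa using hs) one_pos)
    (integrableOn_cpow_mul_fract (by
      rw [Complex.sub_re, Complex.neg_re, Complex.one_re]; linarith))]
  refine setIntegral_congr_fun measurableSet_Ioi fun t ht ↦ ?_
  have ht0 : (0 : ℝ) < t := one_pos.trans ht
  have hfloor : (⌊t⌋₊ : ℂ) = t - ((Int.fract t : ℝ) : ℂ) := by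
    rw [← Complex.ofReal_sub, Int.self_sub_fract, ← natCast_floor_eq_intCast_floor ht0.le,
      Complex.ofReal_natCast]
  have hpow : (t : ℂ) ^ (-s) = t * (t : ℂ) ^ (-(s + 1)) := by
    rw [show -s = 1 + -(s + 1) by ring, Complex.cpow_add _ _ (by exact_mod_cast ht0.ne'),
      Complex.cpow_one]
  simp only [hfloor, hpow, ← neg_add']
  ring

lemma riemannZeta₁_eq_mellin_fractTail_of_one_lt_re {s : ℂ} (hs : 1 < s.re) :
    riemannZeta₁ s = s - s * (s - 1) * mellin fractTail (-s) := by
  have hs1 : s ≠ 1 := by rintro rfl; simp at hs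
  have hs1' : s - 1 ≠ 0 := sub_ne_zero.2 hs1
  have hpartialSums : (fun n : ℕ ↦ ∑ k ∈ Finset.Icc 1 n, ‖(1 : ℕ → ℂ) k‖) =O[atTop]
      fun n ↦ (n : ℝ) ^ (1 : ℝ) := .of_bound 1 (by simp)
  rw [riemannZeta₁_of_ne_one hs1, ← LSeries_one_eq_riemannZeta hs, LSeries_eq_mul_integral' 1
    zero_le_one hs hpartialSums]
  simp only [Pi.one_apply, Finset.sum_const, Nat.card_Icc, add_tsub_cancel_right, nsmul_eq_mul,
    mul_one, integral_floor_mul_cpow hs]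
  field_simp

lemma riemannZeta₁_eq_mellin_fractTail {s : ℂ} (hs : 0 < s.re) :
    riemannZeta₁ s = s - s * (s - 1) * mellin fractTail (-s) := by
  have hopen (c : ℝ) : IsOpen {s : ℂ | c < s.re} :=
    isOpen_lt continuous_const Complex.continuous_re
  refine AnalyticOnNhd.eqOn_of_preconnected_of_eventuallyEq (z₀ := 2) (U := {s : ℂ | 0 < s.re})
    (differentiable_riemannZeta₁.differentiableOn.analyticOnNhd (hopen 0))
    (g := fun s ↦ s - s * (s - 1) * mellin fractTail (-s))
    (DifferentiableOn.analyticOnNhd (fun w hw ↦ ?_) (hopen 0))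
    (convex_halfSpace_re_gt 0).isPreconnected (by simp) ?_ hs
  · have hmellin : DifferentiableAt ℂ (fun s ↦ mellin fractTail (-s)) w :=
      DifferentiableAt.comp (g := mellin fractTail) w
        (differentiableAt_mellin_fractTail (by simpa using hw)) differentiableAt_id.neg
    exact (differentiableAt_id.sub ((differentiableAt_id.mul
      (differentiableAt_id.sub_const 1)).mul hmellin)).differentiableWithinAt
  · filter_upwards [(hopen 1).mem_nhds (show 1 < (2 : ℂ).re by simp)] with w hw
    exact riemannZeta₁_eq_mellin_fractTail_of_one_lt_re hw

lemma norm_riemannZeta₁_le {s : ℂ} (hs : 0 < s.re) :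
    ‖riemannZeta₁ s‖ ≤ ‖s‖ + ‖s‖ * ‖s - 1‖ / s.re := by
  have hmellin : ‖mellin fractTail (-s)‖ ≤ 1 / s.re := by
    simpa using norm_mellin_fractTail_le (s := -s) (by simpa using hs)
  calc ‖riemannZeta₁ s‖
      ≤ ‖s‖ + ‖s‖ * ‖s - 1‖ * ‖mellin fractTail (-s)‖ := by
        rw [riemannZeta₁_eq_mellin_fractTail hs, ← norm_mul, ← norm_mul]
        exact norm_sub_le _ _
    _ ≤ ‖s‖ + ‖s‖ * ‖s - 1‖ * (1 / s.re) := by gcongr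
    _ = ‖s‖ + ‖s‖ * ‖s - 1‖ / s.re := by rw [mul_one_div]

end RiemannZeta

section SecondLogDerivZeta

open Filter Topology ArithmeticFunction

lemma logDeriv_riemannZeta₁ {s : ℂ} (hs : 1 < s.re) :
    logDeriv riemannZeta₁ s = (s - 1)⁻¹ - LSeries (fun n ↦ (Λ n : ℂ)) s := by
  have hs1 : s ≠ 1 := by rintro rfl; simp at hs
  have hlocal : riemannZeta₁ =ᶠ[𝓝 s] fun w ↦ (w - 1) * riemannZeta w := by
    filter_upwards [isOpen_ne.mem_nhds hs1] with w hw using riemannZeta₁_of_ne_one hw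
  have hproduct : logDeriv riemannZeta₁ s = logDeriv (fun w ↦ (w - 1) * riemannZeta w) s := by
    simp only [logDeriv_apply, hlocal.deriv_eq, hlocal.eq_of_nhds]
  rw [hproduct, logDeriv_mul (f := fun w ↦ w - 1) s (sub_ne_zero.2 hs1)
    (riemannZeta_ne_zero_of_one_lt_re hs) (by fun_prop) (differentiableAt_riemannZeta hs1),
    LSeries_vonMangoldt_eq_deriv_riemannZeta_div hs, logDeriv_apply, logDeriv_apply,
    deriv_sub_const, deriv_id'', one_div, neg_div, sub_neg_eq_add]

lemma abscissaOfAbsConv_vonMangoldt_le_one :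
    LSeries.abscissaOfAbsConv (fun n ↦ (Λ n : ℂ)) ≤ 1 :=
  LSeries.abscissaOfAbsConv_le_of_forall_lt_LSeriesSummable' fun y hy ↦
    LSeriesSummable_vonMangoldt (by rw [Complex.ofReal_re]; exact_mod_cast hy)

lemma logDeriv₂_riemannZeta₁_eq_LSeries {s : ℂ} (hs : 1 < s.re) :
    logDeriv₂ riemannZeta₁ s =
      LSeries (LSeries.logMul fun n ↦ (Λ n : ℂ)) s - 1 / (s - 1) ^ 2 := by
  have hs1 : s - 1 ≠ 0 := by rw [sub_ne_zero]; rintro rfl; simp at hs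
  have hlocal : logDeriv riemannZeta₁ =ᶠ[𝓝 s]
      (fun w ↦ (w - 1)⁻¹) - LSeries fun n ↦ (Λ n : ℂ) := by
    filter_upwards [(isOpen_lt continuous_const Complex.continuous_re).mem_nhds hs] with w hw
    exact logDeriv_riemannZeta₁ hw
  have hpole : HasDerivAt (fun w : ℂ ↦ (w - 1)⁻¹) (-1 / (s - 1) ^ 2) s :=
    ((hasDerivAt_id s).sub_const 1).inv hs1
  have hLSeries := LSeries_hasDerivAt
    (abscissaOfAbsConv_vonMangoldt_le_one.trans_lt (by exact_mod_cast hs))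
  rw [logDeriv₂, hlocal.deriv_eq, (hpole.sub hLSeries).deriv]
  ring

lemma log_abs_add_two_pos (t : ℝ) : 0 < Real.log (|t| + 2) :=
  Real.log_pos (by linarith [abs_nonneg t])

lemma norm_three_mul_riemannZeta₁_le {T : ℝ} {s : ℂ}
    (hs : ‖s - (2 + T * Complex.I)‖ ≤ 19 / 10) :
    ‖3 * riemannZeta₁ s‖ ≤ Real.exp (12 * Real.log (|T| + 2)) := by
  set u := |T| + 2 with hu
  have hu2 : 2 ≤ u := by linarith [abs_nonneg T]
  have hre : 1 / 10 ≤ s.re := by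
    have hdist := (abs_le.1 (Complex.abs_re_le_norm (s - (2 + T * Complex.I)))).1
    simp only [Complex.sub_re, Complex.add_re, Complex.re_ofNat, Complex.re_ofReal_mul,
      Complex.I_re, mul_zero, add_zero] at hdist
    linarith
  have hnorm : ‖s‖ ≤ u + 2 := by
    have hcenter : ‖2 + T * Complex.I‖ ≤ u := (norm_add_le _ _).trans_eq (by simp [hu, add_comm])
    linarith [norm_le_norm_sub_add s (2 + T * Complex.I)]
  have hnorm_sub : ‖s - 1‖ ≤ u + 3 := (norm_sub_le s 1).trans (by rw [norm_one]; linarith)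
  calc ‖3 * riemannZeta₁ s‖
      ≤ 3 * (‖s‖ + ‖s‖ * ‖s - 1‖ / s.re) := by
        rw [norm_mul, Complex.norm_ofNat]
        gcongr
        exact norm_riemannZeta₁_le (by linarith)
    _ ≤ 3 * ((u + 2) + (u + 2) * (u + 3) / (1 / 10)) := by gcongr
    _ ≤ 2 ^ 10 * u ^ 2 := by nlinarith
    _ ≤ u ^ 10 * u ^ 2 := by gcongr
    _ = Real.exp (12 * Real.log u) := by
        rw [← pow_add, ← Real.rpow_natCast, Real.rpow_def_of_pos (by linarith), mul_comm]
        norm_num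

lemma exists_forall_norm_logDeriv₂_riemannZeta₁_le_sum_zeros : ∃ K > 0, ∀ T : ℝ,
    ∃ (n : ℕ) (a : Fin n → ℂ), (∀ i, riemannZeta₁ (a i) = 0) ∧ n ≤ K * Real.log (|T| + 2) ∧
      ∀ s : ℂ, ‖s - (2 + T * Complex.I)‖ ≤ 16 / 10 → riemannZeta₁ s ≠ 0 →
        ‖logDeriv₂ riemannZeta₁ s‖ ≤ K * Real.log (|T| + 2) + ∑ i, 1 / ‖s - a i‖ ^ 2 := by
  obtain ⟨K, hK, hlocal⟩ := exists_forall_norm_logDeriv₂_le_sum_zeros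
    (show (0 : ℝ) < 16 / 10 by norm_num) (show (16 / 10 : ℝ) < 19 / 10 by norm_num)
  refine ⟨K * 12, by positivity, fun T ↦ ?_⟩
  set c : ℂ := 2 + T * Complex.I with hc
  have hlower : 1 ≤ ‖3 * riemannZeta₁ (c + 0)‖ := by
    rw [norm_mul, Complex.norm_ofNat, add_zero]
    linarith [one_third_le_norm_riemannZeta₁ (s := c) (by simp [hc])]
  obtain ⟨n, a, hzero, hcard, hbound⟩ := hlocal (fun z ↦ 3 * riemannZeta₁ (c + z))
    (12 * Real.log (|T| + 2)) (mul_pos (by norm_num) (log_abs_add_two_pos T)) (by fun_prop) hlower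
    (fun z hz ↦ norm_three_mul_riemannZeta₁_le (by rwa [← hc, add_sub_cancel_left]))
  refine ⟨n, fun i ↦ c + a i, fun i ↦ by simpa using hzero i, by rwa [mul_assoc],
    fun s hs hs0 ↦ ?_⟩
  have hshift := hbound (s - c) hs (by simpa using hs0)
  rw [logDeriv₂_const_mul_comp_const_add (by norm_num), add_sub_cancel] at hshift
  simpa only [mul_assoc, sub_sub] using hshift

lemma differentiableAt_logDeriv₂_riemannZeta₁ (hRH : RiemannHypothesis) {s : ℂ}
    (hs : 1 / 2 < s.re) : DifferentiableAt ℂ (logDeriv₂ riemannZeta₁) s :=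
  differentiableAt_logDeriv₂ (differentiable_riemannZeta₁.analyticAt s)
    (riemannZeta₁_ne_zero hRH hs)

lemma continuous_logDeriv₂_riemannZeta₁_verticalLine (hRH : RiemannHypothesis) {σ : ℝ}
    (hσ : 1 / 2 < σ) : Continuous fun t : ℝ ↦ logDeriv₂ riemannZeta₁ (σ + t * Complex.I) := by
  rw [continuous_iff_continuousAt]
  intro t
  exact ContinuousAt.comp (f := fun t : ℝ ↦ (σ + t * Complex.I : ℂ))
    (differentiableAt_logDeriv₂_riemannZeta₁ hRH (by simpa using hσ)).continuousAt (by fun_prop)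

lemma sq_add_sq_le_norm_sub_zero_sq (hRH : RiemannHypothesis) {a : ℂ} (ha : riemannZeta₁ a = 0)
    {σ δ : ℝ} (t : ℝ) (hδ : 0 ≤ δ) (hσ : 1 / 2 + δ ≤ σ) :
    δ ^ 2 + (t - a.im) ^ 2 ≤ ‖(σ + t * Complex.I : ℂ) - a‖ ^ 2 := by
  have hre : a.re ≤ 1 / 2 := by
    by_contra! h
    exact riemannZeta₁_ne_zero hRH h ha
  have hδre : δ ^ 2 ≤ (σ - a.re) ^ 2 := by gcongr; linarith
  rw [← Complex.normSq_eq_norm_sq, Complex.normSq_apply]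
  simp only [Complex.sub_re, Complex.add_re, Complex.ofReal_re, Complex.re_ofReal_mul,
    Complex.I_re, mul_zero, add_zero, Complex.sub_im, Complex.add_im, Complex.ofReal_im,
    Complex.im_ofReal_mul, Complex.I_im, mul_one, zero_add]
  linarith

lemma exists_forall_norm_logDeriv₂_riemannZeta₁_le (hRH : RiemannHypothesis) :
    ∃ K > 0, ∀ δ σ t : ℝ, 0 < δ → δ ≤ 1 / 2 → 1 / 2 + δ ≤ σ → σ ≤ 2 →
      ‖logDeriv₂ riemannZeta₁ (σ + t * Complex.I)‖ ≤ K * Real.log (|t| + 2) / δ ^ 2 := by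
  obtain ⟨K, hK, hlocal⟩ := exists_forall_norm_logDeriv₂_riemannZeta₁_le_sum_zeros
  refine ⟨2 * K, by positivity, fun δ σ t hδ hδ2 hσ hσ2 ↦ ?_⟩
  obtain ⟨n, a, hzero, hcard, hbound⟩ := hlocal t
  have hlog := log_abs_add_two_pos t
  have hdist : ‖(σ + t * Complex.I : ℂ) - (2 + t * Complex.I)‖ ≤ 16 / 10 := by
    rw [add_sub_add_right_eq_sub, ← Complex.ofReal_ofNat, ← Complex.ofReal_sub, Complex.norm_real,
      Real.norm_eq_abs, abs_le]
    constructor <;> linarith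
  have hterm (i : Fin n) : 1 / ‖(σ + t * Complex.I : ℂ) - a i‖ ^ 2 ≤ 1 / δ ^ 2 := by
    refine one_div_le_one_div_of_le (by positivity) ?_
    linarith [sq_add_sq_le_norm_sub_zero_sq hRH (hzero i) t hδ.le hσ, sq_nonneg (t - (a i).im)]
  calc ‖logDeriv₂ riemannZeta₁ (σ + t * Complex.I)‖
      ≤ K * Real.log (|t| + 2) + ∑ i, 1 / ‖(σ + t * Complex.I : ℂ) - a i‖ ^ 2 :=
        hbound _ hdist (riemannZeta₁_ne_zero hRH (by
          rw [Complex.add_re, Complex.ofReal_re, Complex.re_ofReal_mul, Complex.I_re]; linarith))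
    _ ≤ K * Real.log (|t| + 2) + ∑ _i : Fin n, 1 / δ ^ 2 := by
        gcongr _ + ?_
        exact Finset.sum_le_sum fun i _ ↦ hterm i
    _ = K * Real.log (|t| + 2) + n / δ ^ 2 := by simp [div_eq_mul_inv]
    _ ≤ K * Real.log (|t| + 2) / δ ^ 2 + K * Real.log (|t| + 2) / δ ^ 2 := by
        gcongr
        exact le_div_self (by positivity) (by positivity) (pow_le_one₀ hδ.le (by linarith))
    _ = 2 * K * Real.log (|t| + 2) / δ ^ 2 := by ring

lemma continuous_one_div_sq_add_sq {δ : ℝ} (hδ : 0 < δ) (y : ℝ) :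
    Continuous fun t : ℝ ↦ 1 / (δ ^ 2 + (t - y) ^ 2) :=
  continuous_const.div₀ (by fun_prop) fun t ↦ by positivity

lemma integral_one_div_sq_add_sq_le {δ : ℝ} (hδ : 0 < δ) (y u v : ℝ) :
    ∫ t in u..v, 1 / (δ ^ 2 + (t - y) ^ 2) ≤ Real.pi / δ := by
  have hderiv (t : ℝ) : HasDerivAt (fun t ↦ Real.arctan ((t - y) / δ) / δ)
      (1 / (δ ^ 2 + (t - y) ^ 2)) t := by
    have hlinear : HasDerivAt (fun t ↦ (t - y) / δ) (1 / δ) t :=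
      ((hasDerivAt_id t).sub_const y).div_const δ
    convert! hlinear.arctan.div_const δ using 1
    field_simp
  rw [intervalIntegral.integral_eq_sub_of_hasDerivAt (fun t _ ↦ hderiv t)
    ((continuous_one_div_sq_add_sq hδ y).intervalIntegrable _ _), ← sub_div]
  gcongr
  linarith [Real.arctan_lt_pi_div_two ((v - y) / δ), Real.neg_pi_div_two_lt_arctan ((u - y) / δ)]

lemma integral_window_add_sum_one_div_sq_add_sq_le {ι : Type*} [Fintype ι] {δ : ℝ} (hδ : 0 < δ)
    (y : ι → ℝ) (B T : ℝ) :
    ∫ t in (T - 1 / 2)..(T + 1 / 2), (B + ∑ i, 1 / (δ ^ 2 + (t - y i) ^ 2)) ≤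
      B + Fintype.card ι * Real.pi / δ := by
  have hcont (i : ι) := continuous_one_div_sq_add_sq hδ (y i)
  calc ∫ t in (T - 1 / 2)..(T + 1 / 2), (B + ∑ i, 1 / (δ ^ 2 + (t - y i) ^ 2))
      = B + ∑ i, ∫ t in (T - 1 / 2)..(T + 1 / 2), 1 / (δ ^ 2 + (t - y i) ^ 2) := by
        rw [intervalIntegral.integral_add (by simp)
            ((continuous_finsetSum _ fun i _ ↦ hcont i).intervalIntegrable _ _),
          intervalIntegral.integral_finsetSum fun i _ ↦ (hcont i).intervalIntegrable _ _,
          intervalIntegral.integral_const, add_sub_sub_cancel, add_halves, one_smul]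
    _ ≤ B + ∑ _i : ι, Real.pi / δ := by
        gcongr with i
        exact integral_one_div_sq_add_sq_le hδ _ _ _
    _ = B + Fintype.card ι * Real.pi / δ := by simp [mul_div_assoc]

lemma exists_forall_integral_window_norm_logDeriv₂_riemannZeta₁_le (hRH : RiemannHypothesis) :
    ∃ K > 0, ∀ δ T : ℝ, 0 < δ → δ ≤ 1 / 2 →
      ∫ t in (T - 1 / 2)..(T + 1 / 2),
        ‖logDeriv₂ riemannZeta₁ ((1 / 2 + δ : ℝ) + t * Complex.I)‖ ≤
          K * Real.log (|T| + 2) / δ := by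
  obtain ⟨K, hK, hlocal⟩ := exists_forall_norm_logDeriv₂_riemannZeta₁_le_sum_zeros
  refine ⟨5 * K, by positivity, fun δ T hδ hδ2 ↦ ?_⟩
  obtain ⟨n, a, hzero, hcard, hbound⟩ := hlocal T
  have hlog := log_abs_add_two_pos T
  have hpointwise (t : ℝ) (ht : t ∈ Set.Icc (T - 1 / 2) (T + 1 / 2)) :
      ‖logDeriv₂ riemannZeta₁ ((1 / 2 + δ : ℝ) + t * Complex.I)‖ ≤
        K * Real.log (|T| + 2) + ∑ i, 1 / (δ ^ 2 + (t - (a i).im) ^ 2) := by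
    refine (hbound _ ?_ (riemannZeta₁_ne_zero hRH (by simp; linarith))).trans ?_
    · refine (sq_le_sq₀ (norm_nonneg _) (by norm_num)).1 ?_
      rw [← Complex.normSq_eq_norm_sq, Complex.normSq_apply]
      simp
      nlinarith [ht.1, ht.2]
    · gcongr with i
      exact sq_add_sq_le_norm_sub_zero_sq hRH (hzero i) t hδ.le le_rfl
  calc ∫ t in (T - 1 / 2)..(T + 1 / 2), ‖logDeriv₂ riemannZeta₁ ((1 / 2 + δ : ℝ) + t * Complex.I)‖
      ≤ ∫ t in (T - 1 / 2)..(T + 1 / 2),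
          (K * Real.log (|T| + 2) + ∑ i, 1 / (δ ^ 2 + (t - (a i).im) ^ 2)) :=
        intervalIntegral.integral_mono_on (by linarith)
          ((continuous_logDeriv₂_riemannZeta₁_verticalLine hRH
            (by linarith)).norm.intervalIntegrable _ _)
          ((continuous_const.add (continuous_finsetSum _ fun i _ ↦
            continuous_one_div_sq_add_sq hδ _)).intervalIntegrable _ _) hpointwise
    _ ≤ K * Real.log (|T| + 2) + n * Real.pi / δ := by
        simpa only [Fintype.card_fin] using
          integral_window_add_sum_one_div_sq_add_sq_le hδ (fun i ↦ (a i).im) _ T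
    _ ≤ K * Real.log (|T| + 2) / δ + K * Real.log (|T| + 2) * 4 / δ := by
        gcongr
        · exact le_div_self (by positivity) hδ (by linarith)
        · exact Real.pi_le_four
    _ = 5 * K * Real.log (|T| + 2) / δ := by ring

end SecondLogDerivZeta

section WeightedIntegral

open MeasureTheory Filter Topology

lemma sum_range_rpow_neg_one_sub_le {b : ℝ} (hb : 0 < b) (N : ℕ) :
    ∑ k ∈ Finset.range N, ((k : ℝ) + 1) ^ (-1 - b) ≤ 1 + 1 / b := by
  have hanti : AntitoneOn (fun u : ℝ ↦ u ^ (-1 - b)) (Set.Icc 1 (1 + (N : ℝ))) :=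
    fun u hu v _ huv ↦ Real.rpow_le_rpow_of_nonpos (by linarith [hu.1]) huv (by linarith)
  calc ∑ k ∈ Finset.range N, ((k : ℝ) + 1) ^ (-1 - b)
      ≤ ∑ k ∈ Finset.range (N + 1), ((k : ℝ) + 1) ^ (-1 - b) :=
        Finset.sum_le_sum_of_subset_of_nonneg (Finset.range_mono N.le_succ)
          fun _ _ _ ↦ by positivity
    _ = 1 + ∑ k ∈ Finset.range N, (1 + ((k + 1 : ℕ) : ℝ)) ^ (-1 - b) := by
        rw [Finset.sum_range_succ', add_comm]
        simp [add_comm]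
    _ ≤ 1 + ∫ u in (1 : ℝ)..(1 + N), u ^ (-1 - b) := by gcongr; exact hanti.sum_le_integral
    _ = 1 + (1 - (1 + (N : ℝ)) ^ (-b)) / b := by
        rw [integral_rpow (.inr ⟨by linarith,
            Set.notMem_uIcc_of_lt one_pos (by linarith [N.cast_nonneg (α := ℝ)])⟩),
          Real.one_rpow, show -1 - b + 1 = -b by ring, div_neg, ← neg_div, neg_sub]
    _ ≤ 1 + 1 / b := by gcongr; linarith [Real.rpow_nonneg (by positivity : 0 ≤ 1 + (N : ℝ)) (-b)]

lemma continuous_one_add_abs_rpow (b : ℝ) : Continuous fun t : ℝ ↦ (1 + |t|) ^ b :=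
  Continuous.rpow_const (by fun_prop) fun t ↦ .inl (by positivity)

lemma log_add_five_halves_le_rpow {a u : ℝ} (ha : 0 < a) (ha1 : a ≤ 1) (hu : 0 ≤ u) :
    Real.log (u + 5 / 2) ≤ 6 / a * (u + 1) ^ (a / 2) := by
  have hthree : (3 : ℝ) ^ (a / 2) ≤ 3 :=
    Real.rpow_le_self_of_one_le (by norm_num) (by linarith)
  calc Real.log (u + 5 / 2)
      ≤ Real.log (3 * (u + 1)) := Real.log_le_log (by positivity) (by linarith)
    _ ≤ (3 * (u + 1)) ^ (a / 2) / (a / 2) := Real.log_le_rpow_div (by positivity) (by positivity)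
    _ = 3 ^ (a / 2) * (u + 1) ^ (a / 2) / (a / 2) := by
        rw [Real.mul_rpow (by norm_num) (by positivity)]
    _ ≤ 3 * (u + 1) ^ (a / 2) / (a / 2) := by gcongr
    _ = 6 / a * (u + 1) ^ (a / 2) := by field_simp; ring

variable {h : ℝ → ℝ} {M a : ℝ}

lemma integral_unit_mul_one_add_abs_rpow_le (hc : Continuous h) (h0 : ∀ t, 0 ≤ h t) (hM : 0 ≤ M)
    (hw : ∀ T : ℝ, ∫ t in (T - 1 / 2)..(T + 1 / 2), h t ≤ M * Real.log (|T| + 2))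
    (ha : 0 < a) (ha1 : a ≤ 1) (k : ℕ) :
    ∫ t in (k : ℝ)..(k + 1 : ℕ), h t * (1 + |t|) ^ (-1 - a) ≤
      6 * M / a * ((k : ℝ) + 1) ^ (-1 - a / 2) := by
  have hwindow : ∫ t in (k : ℝ)..(k + 1 : ℕ), h t ≤ M * Real.log (k + 5 / 2) := by
    have hcentre := hw (k + 1 / 2)
    rwa [abs_of_nonneg (by positivity), add_sub_cancel_right, add_assoc (k : ℝ), add_halves,
      add_assoc (k : ℝ), show (1 / 2 + 2 : ℝ) = 5 / 2 by norm_num, ← Nat.cast_add_one] at hcentre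
  calc ∫ t in (k : ℝ)..(k + 1 : ℕ), h t * (1 + |t|) ^ (-1 - a)
      ≤ ∫ t in (k : ℝ)..(k + 1 : ℕ), h t * ((k : ℝ) + 1) ^ (-1 - a) := by
        refine intervalIntegral.integral_mono_on (by simp)
          ((hc.mul (continuous_one_add_abs_rpow _)).intervalIntegrable _ _)
          ((hc.mul continuous_const).intervalIntegrable _ _) fun t ht ↦ ?_
        refine mul_le_mul_of_nonneg_left ?_ (h0 t)
        exact Real.rpow_le_rpow_of_nonpos (by positivity) (by linarith [le_abs_self t, ht.1])
          (by linarith)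
    _ = (∫ t in (k : ℝ)..(k + 1 : ℕ), h t) * ((k : ℝ) + 1) ^ (-1 - a) :=
        intervalIntegral.integral_mul_const _ _
    _ ≤ M * (6 / a * ((k : ℝ) + 1) ^ (a / 2)) * ((k : ℝ) + 1) ^ (-1 - a) := by
        gcongr
        exact hwindow.trans (mul_le_mul_of_nonneg_left
          (log_add_five_halves_le_rpow ha ha1 k.cast_nonneg) hM)
    _ = 6 * M / a * (((k : ℝ) + 1) ^ (a / 2) * ((k : ℝ) + 1) ^ (-1 - a)) := by ring
    _ = 6 * M / a * ((k : ℝ) + 1) ^ (-1 - a / 2) := by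
        rw [← Real.rpow_add (by positivity)]
        ring_nf

lemma integral_zero_natCast_mul_one_add_abs_rpow_le (hc : Continuous h) (h0 : ∀ t, 0 ≤ h t)
    (hM : 0 ≤ M) (hw : ∀ T : ℝ, ∫ t in (T - 1 / 2)..(T + 1 / 2), h t ≤ M * Real.log (|T| + 2))
    (ha : 0 < a) (ha1 : a ≤ 1) (N : ℕ) :
    ∫ t in (0 : ℝ)..N, h t * (1 + |t|) ^ (-1 - a) ≤ 18 * M / a ^ 2 := by
  have hcont : Continuous fun t ↦ h t * (1 + |t|) ^ (-1 - a) :=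
    hc.mul (continuous_one_add_abs_rpow _)
  have hunits := intervalIntegral.sum_integral_adjacent_intervals (n := N)
    (a := fun k : ℕ ↦ (k : ℝ)) (μ := volume) fun k _ ↦
      hcont.intervalIntegrable (k : ℝ) (k + 1 : ℕ)
  rw [Nat.cast_zero] at hunits
  rw [← hunits]
  calc ∑ k ∈ Finset.range N, ∫ t in (k : ℝ)..(k + 1 : ℕ), h t * (1 + |t|) ^ (-1 - a)
      ≤ ∑ k ∈ Finset.range N, 6 * M / a * ((k : ℝ) + 1) ^ (-1 - a / 2) :=
        Finset.sum_le_sum fun k _ ↦ integral_unit_mul_one_add_abs_rpow_le hc h0 hM hw ha ha1 k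
    _ ≤ 6 * M / a * (1 + 1 / (a / 2)) := by
        rw [← Finset.mul_sum]
        gcongr
        exact sum_range_rpow_neg_one_sub_le (by positivity) N
    _ ≤ 6 * M / a * (3 / a) := by
        gcongr
        rw [le_div_iff₀ ha, add_mul, one_div_div, div_mul_cancel₀ _ ha.ne']
        linarith
    _ = 18 * M / a ^ 2 := by ring

lemma integral_neg_natCast_natCast_mul_one_add_abs_rpow_le (hc : Continuous h) (h0 : ∀ t, 0 ≤ h t)
    (hM : 0 ≤ M) (hw : ∀ T : ℝ, ∫ t in (T - 1 / 2)..(T + 1 / 2), h t ≤ M * Real.log (|T| + 2))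
    (ha : 0 < a) (ha1 : a ≤ 1) (N : ℕ) :
    ∫ t in (-(N : ℝ))..N, h t * (1 + |t|) ^ (-1 - a) ≤ 36 * M / a ^ 2 := by
  have hcont : Continuous fun t ↦ h t * (1 + |t|) ^ (-1 - a) :=
    hc.mul (continuous_one_add_abs_rpow _)
  have hwneg (T : ℝ) : ∫ t in (T - 1 / 2)..(T + 1 / 2), h (-t) ≤ M * Real.log (|T| + 2) := by
    rw [intervalIntegral.integral_comp_neg, ← abs_neg, neg_add', neg_sub', sub_neg_eq_add]
    exact hw (-T)
  have hright := integral_zero_natCast_mul_one_add_abs_rpow_le hc h0 hM hw ha ha1 N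
  have hleft := integral_zero_natCast_mul_one_add_abs_rpow_le (h := fun t ↦ h (-t)) (by fun_prop)
    (fun t ↦ h0 _) hM hwneg ha ha1 N
  have hreflect := intervalIntegral.integral_comp_neg (a := 0) (b := N)
    fun t ↦ h t * (1 + |t|) ^ (-1 - a)
  simp only [abs_neg, neg_zero] at hreflect
  rw [hreflect] at hleft
  rw [← intervalIntegral.integral_add_adjacent_intervals (b := 0)
    (hcont.intervalIntegrable _ _) (hcont.intervalIntegrable _ _)]
  calc _ ≤ 18 * M / a ^ 2 + 18 * M / a ^ 2 := add_le_add hleft hright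
    _ = 36 * M / a ^ 2 := by ring

lemma integrable_and_integral_mul_one_add_abs_rpow_le (hc : Continuous h) (h0 : ∀ t, 0 ≤ h t)
    (hM : 0 ≤ M) (hw : ∀ T : ℝ, ∫ t in (T - 1 / 2)..(T + 1 / 2), h t ≤ M * Real.log (|T| + 2))
    (ha : 0 < a) (ha1 : a ≤ 1) :
    Integrable (fun t ↦ h t * (1 + |t|) ^ (-1 - a)) ∧
      ∫ t, h t * (1 + |t|) ^ (-1 - a) ≤ 36 * M / a ^ 2 := by
  have hbound := integral_neg_natCast_natCast_mul_one_add_abs_rpow_le hc h0 hM hw ha ha1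
  have htop : Tendsto (fun N : ℕ ↦ (N : ℝ)) atTop atTop := tendsto_natCast_atTop_atTop
  have hbot := tendsto_neg_atTop_atBot.comp htop
  have hint : Integrable (fun t ↦ h t * (1 + |t|) ^ (-1 - a)) := by
    refine integrable_of_intervalIntegral_norm_bounded (36 * M / a ^ 2) (fun i : ℕ ↦
      (hc.mul (continuous_one_add_abs_rpow _)).integrableOn_Icc.mono_set Set.Ioc_subset_Icc_self)
      hbot htop (Eventually.of_forall fun N ↦ ?_)
    simp_rw [norm_mul, Real.norm_of_nonneg (h0 _),
      Real.norm_of_nonneg (Real.rpow_nonneg (add_nonneg zero_le_one (abs_nonneg _)) _)]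
    exact hbound N
  exact ⟨hint, le_of_tendsto' (intervalIntegral_tendsto_integral hint hbot htop) hbound⟩

lemma exists_forall_integral_norm_logDeriv₂_riemannZeta₁_le (hRH : RiemannHypothesis) :
    ∃ K > 0, ∀ δ a : ℝ, 0 < δ → δ ≤ 1 / 2 → 0 < a → a ≤ 1 →
      Integrable (fun t : ℝ ↦ ‖logDeriv₂ riemannZeta₁ ((1 / 2 + δ : ℝ) + t * Complex.I)‖ *
        (1 + |t|) ^ (-1 - a)) ∧
      ∫ t : ℝ, ‖logDeriv₂ riemannZeta₁ ((1 / 2 + δ : ℝ) + t * Complex.I)‖ * (1 + |t|) ^ (-1 - a) ≤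
        K / (δ * a ^ 2) := by
  obtain ⟨K, hK, hwindow⟩ := exists_forall_integral_window_norm_logDeriv₂_riemannZeta₁_le hRH
  refine ⟨36 * K, by positivity, fun δ a hδ hδ2 ha ha1 ↦ ?_⟩
  have hweighted := integrable_and_integral_mul_one_add_abs_rpow_le (M := K / δ)
    (continuous_logDeriv₂_riemannZeta₁_verticalLine hRH (by linarith)).norm
    (fun t ↦ norm_nonneg _) (by positivity)
    (fun T ↦ (hwindow δ T hδ hδ2).trans_eq (mul_div_right_comm _ _ _)) ha ha1
  exact ⟨hweighted.1, hweighted.2.trans_eq (by field_simp)⟩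

end WeightedIntegral

section LogPrimitive

open MeasureTheory Set

/-- The primitive `∫ f(t) dt/t` of `f` from `1`; it vanishes on `(-∞, 1]`, so that its Mellin
transform is an integral over `(1, ∞)`. -/
noncomputable def logPrimitive (f : ℝ → ℝ) (x : ℝ) : ℝ := ∫ t in Ioc 1 x, f t / t

lemma logPrimitive_of_le_one {f : ℝ → ℝ} {x : ℝ} (hx : x ≤ 1) : logPrimitive f x = 0 := by
  rw [logPrimitive, Ioc_eq_empty (not_lt.2 hx), setIntegral_empty]

lemma logPrimitive_one_eq_log {x : ℝ} (hx : 1 ≤ x) : logPrimitive (fun _ ↦ 1) x = Real.log x := by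
  rw [logPrimitive, ← intervalIntegral.integral_of_le hx, integral_one_div_of_pos one_pos
    (by linarith), div_one]

variable {f : ℝ → ℝ} {C κ : ℝ}

lemma nonneg_of_abs_le_mul_rpow (hb : ∀ t, 1 < t → |f t| ≤ C * t ^ κ) : 0 ≤ C :=
  nonneg_of_mul_nonneg_left ((abs_nonneg _).trans (hb 2 one_lt_two)) (by positivity)

lemma integrableOn_div_self_Ioc (hf : Measurable f) (hκ : 0 ≤ κ)
    (hb : ∀ t, 1 < t → |f t| ≤ C * t ^ κ) {a b : ℝ} (ha : 1 ≤ a) :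
    IntegrableOn (fun t ↦ f t / t) (Ioc a b) := by
  refine (Continuous.integrableOn_Ioc (f := fun t : ℝ ↦ C * t ^ κ)
    (by fun_prop (disch := assumption))).mono'
    (hf.div measurable_id).aestronglyMeasurable
    ((ae_restrict_mem measurableSet_Ioc).mono fun t ht ↦ ?_)
  have ht1 : 1 < t := ha.trans_lt ht.1
  rw [Real.norm_eq_abs, abs_div, abs_of_pos (by linarith : 0 < t)]
  exact (div_le_self (abs_nonneg _) ht1.le).trans (hb t ht1)

lemma continuous_logPrimitive (hf : Measurable f) (hκ : 0 ≤ κ)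
    (hb : ∀ t, 1 < t → |f t| ≤ C * t ^ κ) : Continuous (logPrimitive f) := by
  have hint (a b : ℝ) : IntervalIntegrable ((Ioi 1).indicator fun t ↦ f t / t) volume a b := by
    rw [intervalIntegrable_iff, IntegrableOn, integrable_indicator_iff measurableSet_Ioi,
      IntegrableOn, Measure.restrict_restrict measurableSet_Ioi]
    refine (integrableOn_div_self_Ioc hf hκ hb le_rfl (b := max a b)).mono_set fun t ht ↦ ?_
    exact ⟨ht.1, ht.2.2⟩
  convert intervalIntegral.continuous_primitive hint 1 using 2 with x
  rcases le_total x 1 with hx | hx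
  · rw [logPrimitive_of_le_one hx, intervalIntegral.integral_of_ge hx,
      setIntegral_eq_zero_of_forall_eq_zero, neg_zero]
    exact fun t ht ↦ indicator_of_notMem (not_lt.2 ht.2) _
  · rw [intervalIntegral.integral_of_le hx, setIntegral_indicator measurableSet_Ioi,
      inter_eq_left.2 Ioc_subset_Ioi_self, logPrimitive]

variable {s : ℂ}

lemma norm_mul_cpow_le_of_abs_le (hκ : 0 ≤ κ) (hb : ∀ t, 1 < t → |f t| ≤ C * t ^ κ)
    (hs : κ < s.re) {t x : ℝ} (ht : 1 < t) (htx : t ≤ x) :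
    ‖((f t / t : ℝ) : ℂ) * (x : ℂ) ^ (-(s + 1))‖ ≤
      C * (x ^ (-1 - (s.re - κ) / 2) * t ^ (-1 - (s.re - κ) / 2)) := by
  have ht0 : 0 < t := by linarith
  have hx0 : 0 < x := by linarith
  have hC := nonneg_of_abs_le_mul_rpow hb
  calc ‖((f t / t : ℝ) : ℂ) * (x : ℂ) ^ (-(s + 1))‖
      = |f t| / t * (x ^ (-1 - (s.re - κ) / 2) * x ^ (-(s.re + κ) / 2)) := by
        rw [norm_mul, Complex.norm_cpow_eq_rpow_re_of_pos hx0, Complex.norm_real,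
          Real.norm_eq_abs, abs_div, abs_of_pos ht0, ← Real.rpow_add hx0, Complex.neg_re,
          Complex.add_re, Complex.one_re]
        ring_nf
    _ ≤ C * t ^ κ / t * (x ^ (-1 - (s.re - κ) / 2) * t ^ (-(s.re + κ) / 2)) := by
        have hpow : x ^ (-(s.re + κ) / 2) ≤ t ^ (-(s.re + κ) / 2) :=
          Real.rpow_le_rpow_of_nonpos ht0 htx (by linarith)
        gcongr
        exact hb t ht
    _ = C * (x ^ (-1 - (s.re - κ) / 2) * t ^ (-1 - (s.re - κ) / 2)) := by
        rw [show -1 - (s.re - κ) / 2 = κ - 1 + -(s.re + κ) / 2 by ring, Real.rpow_add ht0 (κ - 1),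
          Real.rpow_sub_one ht0.ne']
        ring

lemma integrable_logPrimitive_kernel (hf : Measurable f) (hκ : 0 ≤ κ)
    (hb : ∀ t, 1 < t → |f t| ≤ C * t ^ κ) (hs : κ < s.re) :
    Integrable (fun p : ℝ × ℝ ↦ (Ici p.2).indicator
        (fun x : ℝ ↦ ((f p.2 / p.2 : ℝ) : ℂ) * (x : ℂ) ^ (-(s + 1))) p.1)
      ((volume.restrict (Ioi 1)).prod (volume.restrict (Ioi 1))) := by
  have hC := nonneg_of_abs_le_mul_rpow hb
  have hdom := integrableOn_Ioi_rpow_of_lt (a := -1 - (s.re - κ) / 2) (by linarith) one_pos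
  refine ((hdom.mul_prod hdom).const_mul C).mono' ?_ ?_
  · have hmeas : MeasurableSet {p : ℝ × ℝ | p.2 ≤ p.1} :=
      measurableSet_le measurable_snd measurable_fst
    exact (Measurable.indicator (f := fun p : ℝ × ℝ ↦
      ((f p.2 / p.2 : ℝ) : ℂ) * (p.1 : ℂ) ^ (-(s + 1))) (by fun_prop) hmeas).aestronglyMeasurable
  · rw [Measure.prod_restrict]
    filter_upwards [ae_restrict_mem (measurableSet_Ioi.prod measurableSet_Ioi)] with ⟨x, t⟩ hp
    obtain ⟨hx : 1 < x, ht : 1 < t⟩ := hp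
    by_cases htx : t ≤ x
    · rw [indicator_of_mem (mem_Ici.2 htx)]
      exact norm_mul_cpow_le_of_abs_le hκ hb hs ht htx
    · rw [indicator_of_notMem (by simpa using htx), norm_zero]
      positivity

lemma integral_logPrimitive_kernel_left (s : ℂ) {x : ℝ} :
    ∫ t in Ioi 1, (Ici t).indicator (fun x : ℝ ↦ ((f t / t : ℝ) : ℂ) * (x : ℂ) ^ (-(s + 1))) x =
      (logPrimitive f x : ℂ) * (x : ℂ) ^ (-(s + 1)) := by
  have hswap (t : ℝ) : (Ici t).indicator
      (fun x : ℝ ↦ ((f t / t : ℝ) : ℂ) * (x : ℂ) ^ (-(s + 1))) x =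
      (Iic x).indicator (fun t : ℝ ↦ ((f t / t : ℝ) : ℂ) * (x : ℂ) ^ (-(s + 1))) t := by
    simp only [indicator, mem_Ici, mem_Iic]
  simp_rw [hswap]
  rw [setIntegral_indicator measurableSet_Iic, Ioi_inter_Iic, integral_mul_const,
    integral_complex_ofReal, logPrimitive]

lemma integral_logPrimitive_kernel_right (hs : 0 < s.re) {t : ℝ} (ht : 1 < t) :
    ∫ x in Ioi 1, (Ici t).indicator (fun x : ℝ ↦ ((f t / t : ℝ) : ℂ) * (x : ℂ) ^ (-(s + 1))) x =
      1 / s * ((f t : ℂ) * (t : ℂ) ^ (-(s + 1))) := by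
  have ht0 : 0 < t := by linarith
  have ht0' : (t : ℂ) ≠ 0 := mod_cast ht0.ne'
  have hs0 : s ≠ 0 := by rintro rfl; simp at hs
  rw [setIntegral_indicator measurableSet_Ici,
    inter_eq_right.2 (Ici_subset_Ioi.2 ht), integral_Ici_eq_integral_Ioi,
    integral_const_mul, integral_Ioi_cpow_of_lt (by simpa using hs) ht0,
    Complex.cpow_add _ _ ht0', Complex.cpow_one, show -(s + 1) + 1 = -s by ring]
  push_cast
  field_simp

lemma integrableOn_logPrimitive_mul_cpow (hf : Measurable f) (hκ : 0 ≤ κ)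
    (hb : ∀ t, 1 < t → |f t| ≤ C * t ^ κ) (hs : κ < s.re) :
    IntegrableOn (fun x : ℝ ↦ (logPrimitive f x : ℂ) * (x : ℂ) ^ (-(s + 1))) (Ioi 1) :=
  (integrable_logPrimitive_kernel hf hκ hb hs).integral_prod_left.congr
    (.of_forall fun _ ↦ integral_logPrimitive_kernel_left s)

lemma integral_logPrimitive_mul_cpow (hf : Measurable f) (hκ : 0 ≤ κ)
    (hb : ∀ t, 1 < t → |f t| ≤ C * t ^ κ) (hs : κ < s.re) :
    ∫ x in Ioi (1 : ℝ), (logPrimitive f x : ℂ) * (x : ℂ) ^ (-(s + 1)) =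
      1 / s * ∫ t in Ioi (1 : ℝ), (f t : ℂ) * (t : ℂ) ^ (-(s + 1)) := by
  simp_rw [← integral_logPrimitive_kernel_left]
  rw [integral_integral_swap (integrable_logPrimitive_kernel hf hκ hb hs),
    setIntegral_congr_fun measurableSet_Ioi fun t ht ↦
      integral_logPrimitive_kernel_right (hκ.trans_lt hs) ht, integral_const_mul]

lemma integrableOn_mul_cpow_of_abs_le (hf : Measurable f)
    (hb : ∀ t, 1 < t → |f t| ≤ C * t ^ κ) (hs : κ < s.re) :
    IntegrableOn (fun t : ℝ ↦ (f t : ℂ) * (t : ℂ) ^ (-(s + 1))) (Ioi 1) := by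
  refine ((integrableOn_Ioi_rpow_of_lt (a := κ + -(s.re + 1)) (by linarith) one_pos).const_mul
    C).mono' (by fun_prop) ((ae_restrict_mem measurableSet_Ioi).mono fun t (ht : 1 < t) ↦ ?_)
  have ht0 : 0 < t := by linarith
  rw [norm_mul, Complex.norm_cpow_eq_rpow_re_of_pos ht0, Complex.norm_real, Real.norm_eq_abs,
    Real.rpow_add ht0, ← mul_assoc, Complex.neg_re, Complex.add_re, Complex.one_re]
  gcongr
  exact hb t ht

lemma mellinConvergent_neg_of_eqOn_zero {g : ℝ → ℂ} (hg : ∀ x ≤ 1, g x = 0)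
    (hint : IntegrableOn (fun x : ℝ ↦ g x * (x : ℂ) ^ (-(s + 1))) (Ioi 1)) :
    MellinConvergent g (-s) := by
  refine (hint.of_forall_sdiff_eq_zero (t := Ioi 0) measurableSet_Ioi fun x hx ↦ ?_).congr_fun
    (fun x _ ↦ ?_) measurableSet_Ioi
  · simp [hg x (not_lt.1 hx.2)]
  · rw [smul_eq_mul, mul_comm, show -s - 1 = -(s + 1) by ring]

lemma mellin_neg_of_eqOn_zero {g : ℝ → ℂ} (hg : ∀ x ≤ 1, g x = 0) :
    mellin g (-s) = ∫ x in Ioi (1 : ℝ), g x * (x : ℂ) ^ (-(s + 1)) := by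
  rw [mellin, setIntegral_eq_of_subset_of_forall_sdiff_eq_zero measurableSet_Ioi
    (Ioi_subset_Ioi zero_le_one) fun x hx ↦ by simp [hg x (not_lt.1 hx.2)]]
  simp_rw [smul_eq_mul, mul_comm (g _), show -s - 1 = -(s + 1) by ring]

end LogPrimitive

section SumLogVonMangoldt

open MeasureTheory Set Filter Topology
open scoped ArithmeticFunction.vonMangoldt

/-- The summatory function of `log n · Λ(n)`, the coefficients of the Dirichlet series of
`(ζ'/ζ)'`. -/
noncomputable def sumLogVonMangoldt (t : ℝ) : ℝ := ∑ k ∈ Finset.Icc 1 ⌊t⌋₊, Real.log k * Λ k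

/-- The value of `∫ log u du` over `[1, t]`: the main term of `sumLogVonMangoldt t`. -/
noncomputable def integralLog (t : ℝ) : ℝ := t * Real.log t - t + 1

/-- The error term of the prime number theorem in the form `∑ log n · Λ(n) ~ ∫ log`. -/
noncomputable def sumLogVonMangoldtError (t : ℝ) : ℝ := sumLogVonMangoldt t - integralLog t

/-- The logarithmic average of the error term. Averaging gains a factor `1 / s` in the Mellin
transform, which makes the inversion integral converge absolutely. -/
noncomputable def smoothedError : ℝ → ℝ := logPrimitive sumLogVonMangoldtError

/-- The Mellin transform of `smoothedError` at `-s`. -/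
noncomputable def errorKernel (s : ℂ) : ℂ := logDeriv₂ riemannZeta₁ s / s ^ 2

lemma logPrimitive_mul_log_eq_integralLog {x : ℝ} (hx : 1 ≤ x) :
    logPrimitive (fun t ↦ t * Real.log t) x = integralLog x := by
  have hcancel : EqOn (fun t : ℝ ↦ t * Real.log t / t) Real.log (Ioc 1 x) := fun t ht ↦
    mul_div_cancel_left₀ _ (by linarith [ht.1])
  rw [logPrimitive, setIntegral_congr_fun measurableSet_Ioc hcancel,
    ← intervalIntegral.integral_of_le hx, integral_log, Real.log_one, integralLog]
  ring

lemma log_mul_vonMangoldt_nonneg (k : ℕ) : 0 ≤ Real.log k * Λ k :=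
  mul_nonneg (Real.log_natCast_nonneg k) ArithmeticFunction.vonMangoldt_nonneg

lemma sumLogVonMangoldt_nonneg (t : ℝ) : 0 ≤ sumLogVonMangoldt t :=
  Finset.sum_nonneg fun k _ ↦ log_mul_vonMangoldt_nonneg k

lemma monotone_sumLogVonMangoldt : Monotone sumLogVonMangoldt := fun _ _ h ↦
  Finset.sum_le_sum_of_subset_of_nonneg (Finset.Icc_subset_Icc_right (Nat.floor_mono h))
    fun k _ _ ↦ log_mul_vonMangoldt_nonneg k

lemma measurable_sumLogVonMangoldtError : Measurable sumLogVonMangoldtError :=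
  monotone_sumLogVonMangoldt.measurable.sub (by unfold integralLog; fun_prop)

lemma log_four_le_two : Real.log 4 ≤ 2 := by
  rw [show (4 : ℝ) = 2 ^ 2 by norm_num, Real.log_pow]
  norm_num
  linarith [Real.log_two_lt_d9]

lemma sumLogVonMangoldt_le {t : ℝ} (ht : 1 ≤ t) : sumLogVonMangoldt t ≤ 6 * (t * Real.log t) := by
  have hlog := Real.log_nonneg ht
  calc sumLogVonMangoldt t
      ≤ ∑ k ∈ Finset.Icc 1 ⌊t⌋₊, Real.log t * Λ k := by
        refine Finset.sum_le_sum fun k hk ↦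
          mul_le_mul_of_nonneg_right ?_ ArithmeticFunction.vonMangoldt_nonneg
        rw [Finset.mem_Icc] at hk
        exact Real.log_le_log (mod_cast hk.1) ((Nat.le_floor_iff (by linarith)).1 hk.2)
    _ = Real.log t * Chebyshev.psi t := by rw [← Finset.mul_sum, Chebyshev.psi]; rfl
    _ ≤ Real.log t * ((2 + 4) * t) := by
        gcongr
        exact (Chebyshev.psi_le_const_mul_self (by linarith)).trans
          (by gcongr; exact log_four_le_two)
    _ = 6 * (t * Real.log t) := by ring

lemma integralLog_nonneg {t : ℝ} (ht : 0 < t) : 0 ≤ integralLog t := by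
  have hmul := mul_le_mul_of_nonneg_left (Real.one_sub_inv_le_log_of_pos ht) ht.le
  rw [mul_sub, mul_one, mul_inv_cancel₀ ht.ne'] at hmul
  rw [integralLog]
  linarith

lemma mul_log_le_mul_rpow {ε t : ℝ} (hε : 0 < ε) (ht : 0 < t) :
    t * Real.log t ≤ 1 / ε * t ^ (1 + ε) := by
  calc t * Real.log t ≤ t * (t ^ ε / ε) := by gcongr; exact Real.log_le_rpow_div ht.le hε
    _ = 1 / ε * t ^ (1 + ε) := by rw [Real.rpow_add ht, Real.rpow_one]; ring

lemma mul_log_le_two_mul_rpow {t : ℝ} (ht : 0 < t) : t * Real.log t ≤ 2 * t ^ (3 / 2 : ℝ) := by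
  have h := mul_log_le_mul_rpow (ε := 1 / 2) (by norm_num) ht
  norm_num at h
  exact h

lemma abs_sumLogVonMangoldtError_le {t : ℝ} (ht : 1 ≤ t) :
    |sumLogVonMangoldtError t| ≤ 12 * t ^ (3 / 2 : ℝ) := by
  have ht0 : 0 < t := by linarith
  have hlog := mul_log_le_two_mul_rpow ht0
  have hsum := sumLogVonMangoldt_le ht
  have hsum0 := sumLogVonMangoldt_nonneg t
  have hint0 := integralLog_nonneg ht0
  have hint : integralLog t ≤ t * Real.log t := by rw [integralLog]; linarith
  rw [sumLogVonMangoldtError, abs_le]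
  constructor <;> linarith [Real.rpow_nonneg ht0.le (3 / 2)]

variable {s : ℂ}

lemma integral_Ioi_one_log_mul_cpow (hs : 0 < s.re) :
    ∫ t in Ioi (1 : ℝ), (Real.log t : ℂ) * (t : ℂ) ^ (-(s + 1)) = 1 / s ^ 2 := by
  have hs0 : s ≠ 0 := by rintro rfl; simp at hs
  have hlog : EqOn (fun t : ℝ ↦ (logPrimitive (fun _ ↦ 1) t : ℂ) * (t : ℂ) ^ (-(s + 1)))
      (fun t : ℝ ↦ (Real.log t : ℂ) * (t : ℂ) ^ (-(s + 1))) (Ioi 1) := fun t ht ↦ by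
    simp only [logPrimitive_one_eq_log (le_of_lt ht)]
  rw [← setIntegral_congr_fun measurableSet_Ioi hlog, integral_logPrimitive_mul_cpow
    measurable_const le_rfl (C := 1) (by simp) hs]
  simp_rw [Complex.ofReal_one, one_mul]
  rw [integral_Ioi_cpow_of_lt (by simpa using hs) one_pos, Complex.ofReal_one, Complex.one_cpow,
    show -(s + 1) + 1 = -s by ring]
  field_simp

lemma abs_mul_log_le {ε t : ℝ} (hε : 0 < ε) (ht : 1 < t) :
    |t * Real.log t| ≤ 1 / ε * t ^ (1 + ε) := by
  rw [abs_of_nonneg (mul_nonneg (by linarith) (Real.log_nonneg ht.le))]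
  exact mul_log_le_mul_rpow hε (by linarith)

lemma integrableOn_integralLog_mul_cpow (hs : 1 < s.re) :
    IntegrableOn (fun t : ℝ ↦ (integralLog t : ℂ) * (t : ℂ) ^ (-(s + 1))) (Ioi 1) := by
  refine (integrableOn_logPrimitive_mul_cpow (s := s) (κ := 1 + (s.re - 1) / 2)
    (by fun_prop : Measurable fun t : ℝ ↦ t * Real.log t) (by linarith)
    (fun t ht ↦ abs_mul_log_le (by linarith) ht) (by linarith)).congr_fun (fun t ht ↦ ?_)
    measurableSet_Ioi
  simp only [logPrimitive_mul_log_eq_integralLog (le_of_lt ht)]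

lemma integral_integralLog_mul_cpow (hs : 1 < s.re) :
    ∫ t in Ioi (1 : ℝ), (integralLog t : ℂ) * (t : ℂ) ^ (-(s + 1)) = 1 / (s * (s - 1) ^ 2) := by
  have hprimitive : EqOn (fun t : ℝ ↦
      (logPrimitive (fun u ↦ u * Real.log u) t : ℂ) * (t : ℂ) ^ (-(s + 1)))
      (fun t : ℝ ↦ (integralLog t : ℂ) * (t : ℂ) ^ (-(s + 1))) (Ioi 1) := fun t ht ↦ by
    simp only [logPrimitive_mul_log_eq_integralLog (le_of_lt ht)]
  have hshift : EqOn (fun t : ℝ ↦ ((t * Real.log t : ℝ) : ℂ) * (t : ℂ) ^ (-(s + 1)))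
      (fun t : ℝ ↦ (Real.log t : ℂ) * (t : ℂ) ^ (-(s - 1 + 1))) (Ioi 1) := fun t ht ↦ by
    have ht0 : (t : ℂ) ≠ 0 := mod_cast (one_pos.trans ht).ne'
    simp only [Complex.ofReal_mul, show -(s - 1 + 1) = 1 + -(s + 1) by ring,
      Complex.cpow_add _ _ ht0, Complex.cpow_one]
    ring
  rw [← setIntegral_congr_fun measurableSet_Ioi hprimitive, integral_logPrimitive_mul_cpow
    (κ := 1 + (s.re - 1) / 2) (by fun_prop) (by linarith)
    (fun t ht ↦ abs_mul_log_le (by linarith) ht) (by linarith),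
    setIntegral_congr_fun measurableSet_Ioi hshift,
    integral_Ioi_one_log_mul_cpow (by simpa using hs), div_mul_div_comm, one_mul]

lemma integrableOn_sumLogVonMangoldtError_mul_cpow (hs : 3 / 2 < s.re) :
    IntegrableOn (fun t : ℝ ↦ (sumLogVonMangoldtError t : ℂ) * (t : ℂ) ^ (-(s + 1))) (Ioi 1) :=
  integrableOn_mul_cpow_of_abs_le measurable_sumLogVonMangoldtError
    (fun _ ht ↦ abs_sumLogVonMangoldtError_le ht.le) hs

lemma LSeries_logMul_vonMangoldt_eq_mul_integral (hs : 3 / 2 < s.re) :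
    LSeries (LSeries.logMul fun n ↦ (Λ n : ℂ)) s =
      s * ∫ t in Ioi (1 : ℝ), (sumLogVonMangoldt t : ℂ) * (t : ℂ) ^ (-(s + 1)) := by
  have hcoeff : (LSeries.logMul fun n ↦ (Λ n : ℂ)) =
      fun n : ℕ ↦ ((Real.log n * Λ n : ℝ) : ℂ) := by
    funext n
    simp [LSeries.logMul, Complex.natCast_log]
  rw [hcoeff, LSeries_eq_mul_integral_of_nonneg (fun n ↦ Real.log n * Λ n) (r := 3 / 2)
    (by norm_num) hs ?_ log_mul_vonMangoldt_nonneg]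
  · simp_rw [sumLogVonMangoldt, Complex.ofReal_sum]
  · refine Asymptotics.IsBigO.of_bound 12 ?_
    filter_upwards [eventually_ge_atTop 1] with n hn
    have hn1 : (1 : ℝ) ≤ n := mod_cast hn
    have hsum := sumLogVonMangoldt_le hn1
    rw [Real.norm_of_nonneg (Finset.sum_nonneg fun k _ ↦ log_mul_vonMangoldt_nonneg k),
      Real.norm_of_nonneg (by positivity)]
    rw [sumLogVonMangoldt, Nat.floor_natCast] at hsum
    linarith [mul_log_le_two_mul_rpow (one_pos.trans_le hn1)]

lemma integral_sumLogVonMangoldtError_mul_cpow (hs : 3 / 2 < s.re) :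
    ∫ t in Ioi (1 : ℝ), (sumLogVonMangoldtError t : ℂ) * (t : ℂ) ^ (-(s + 1)) =
      logDeriv₂ riemannZeta₁ s / s := by
  have hs0 : s ≠ 0 := by rintro rfl; norm_num at hs
  have hs1 : s - 1 ≠ 0 := sub_ne_zero.2 (by rintro rfl; norm_num at hs)
  have hsplit : ∫ t in Ioi (1 : ℝ), (sumLogVonMangoldt t : ℂ) * (t : ℂ) ^ (-(s + 1)) =
      (∫ t in Ioi (1 : ℝ), (sumLogVonMangoldtError t : ℂ) * (t : ℂ) ^ (-(s + 1))) +
        ∫ t in Ioi (1 : ℝ), (integralLog t : ℂ) * (t : ℂ) ^ (-(s + 1)) := by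
    rw [← integral_add (integrableOn_sumLogVonMangoldtError_mul_cpow hs)
      (integrableOn_integralLog_mul_cpow (by linarith))]
    simp_rw [← add_mul, ← Complex.ofReal_add, sumLogVonMangoldtError, sub_add_cancel]
  rw [logDeriv₂_riemannZeta₁_eq_LSeries (by linarith),
    LSeries_logMul_vonMangoldt_eq_mul_integral hs, hsplit,
    integral_integralLog_mul_cpow (by linarith)]
  field_simp
  ring

lemma mellinConvergent_smoothedError (hs : 3 / 2 < s.re) :
    MellinConvergent (fun x ↦ (smoothedError x : ℂ)) (-s) :=
  mellinConvergent_neg_of_eqOn_zero (fun _ hx ↦ by rw [smoothedError, logPrimitive_of_le_one hx,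
    Complex.ofReal_zero]) (integrableOn_logPrimitive_mul_cpow measurable_sumLogVonMangoldtError
      (by norm_num) (fun _ ht ↦ abs_sumLogVonMangoldtError_le ht.le) hs)

lemma mellin_smoothedError (hs : 3 / 2 < s.re) :
    mellin (fun x ↦ (smoothedError x : ℂ)) (-s) = errorKernel s := by
  rw [mellin_neg_of_eqOn_zero fun _ hx ↦ by
      rw [smoothedError, logPrimitive_of_le_one hx, Complex.ofReal_zero],
    smoothedError, integral_logPrimitive_mul_cpow measurable_sumLogVonMangoldtError (by norm_num)
      (fun _ ht ↦ abs_sumLogVonMangoldtError_le ht.le) hs,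
    integral_sumLogVonMangoldtError_mul_cpow hs, div_mul_div_comm, one_mul, ← sq,
    errorKernel]

lemma continuous_smoothedError : Continuous smoothedError :=
  continuous_logPrimitive measurable_sumLogVonMangoldtError (by norm_num)
    fun _ ht ↦ abs_sumLogVonMangoldtError_le ht.le

end SumLogVonMangoldt

section ContourShift

open MeasureTheory Set Filter Topology

lemma integrable_one_add_abs_rpow_neg {b : ℝ} (hb : 1 < b) :
    Integrable fun t : ℝ ↦ (1 + |t|) ^ (-b) := by
  simpa using integrable_one_add_norm (E := ℝ) (μ := volume) (r := b) (by simpa using hb)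

variable {g : ℂ → ℂ} {c d : ℝ}

lemma norm_verticalIntegral_sub_le {T M : ℝ} (hcd : c ≤ d)
    (hg : ∀ s : ℂ, s.re ∈ Icc c d → DifferentiableAt ℂ g s)
    (hM : ∀ σ t : ℝ, σ ∈ Icc c d → |t| = |T| → ‖g (σ + t * Complex.I)‖ ≤ M) :
    ‖(∫ t in (-T)..T, g (d + t * Complex.I)) - ∫ t in (-T)..T, g (c + t * Complex.I)‖ ≤
      2 * (M * (d - c)) := by
  have hrect := Complex.integral_boundary_rect_eq_zero_of_differentiableOn g ⟨c, -T⟩ ⟨d, T⟩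
    fun s hs ↦ (hg s (by
      have hre := (Complex.mem_reProdIm.1 hs).1
      rwa [uIcc_of_le hcd] at hre)).differentiableWithinAt
  have hside (y : ℝ) (hy : |y| = |T|) : ‖∫ σ in c..d, g (σ + y * Complex.I)‖ ≤ M * (d - c) := by
    rw [← abs_of_nonneg (sub_nonneg.2 hcd)]
    refine intervalIntegral.norm_integral_le_of_norm_le_const fun σ hσ ↦ ?_
    rw [uIoc_of_le hcd] at hσ
    exact hM σ y ⟨hσ.1.le, hσ.2⟩ hy
  have hbottom := hside (-T) (abs_neg T)
  have htop := hside T rfl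
  simp only [smul_eq_mul] at hrect
  set bottom := ∫ σ in c..d, g (σ + (-T : ℝ) * Complex.I)
  set top := ∫ σ in c..d, g (σ + T * Complex.I)
  set right := ∫ t in (-T)..T, g (d + t * Complex.I)
  set left := ∫ t in (-T)..T, g (c + t * Complex.I)
  have hcauchy : right - left = Complex.I * (bottom - top) := by
    linear_combination (-Complex.I) * hrect + (right - left) * Complex.I_mul_I
  rw [hcauchy, norm_mul, Complex.norm_I, one_mul]
  linarith [norm_sub_le bottom top]

lemma integral_verticalLine_eq_of_norm_le {K b : ℝ} (hcd : c ≤ d) (hb : 1 < b)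
    (hg : ∀ s : ℂ, s.re ∈ Icc c d → DifferentiableAt ℂ g s)
    (hK : ∀ σ t : ℝ, σ ∈ Icc c d → ‖g (σ + t * Complex.I)‖ ≤ K * (1 + |t|) ^ (-b)) :
    ∫ t : ℝ, g (d + t * Complex.I) = ∫ t : ℝ, g (c + t * Complex.I) := by
  have hcont (σ : ℝ) (hσ : σ ∈ Icc c d) : Continuous fun t : ℝ ↦ g (σ + t * Complex.I) :=
    continuous_iff_continuousAt.2 fun t ↦
      (hg (σ + t * Complex.I) (by simpa using hσ)).continuousAt.comp
        (f := fun t : ℝ ↦ (σ + t * Complex.I : ℂ)) (by fun_prop)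
  have hlim (σ : ℝ) (hσ : σ ∈ Icc c d) :
      Tendsto (fun N : ℕ ↦ ∫ t in (-(N : ℝ))..N, g (σ + t * Complex.I)) atTop
        (𝓝 (∫ t : ℝ, g (σ + t * Complex.I))) :=
    intervalIntegral_tendsto_integral
      (((integrable_one_add_abs_rpow_neg hb).const_mul K).mono' (hcont σ hσ).aestronglyMeasurable
        (.of_forall fun t ↦ hK σ t hσ))
      (tendsto_neg_atTop_atBot.comp tendsto_natCast_atTop_atTop) tendsto_natCast_atTop_atTop
  have hdecay : Tendsto (fun N : ℕ ↦ 2 * (K * (1 + (N : ℝ)) ^ (-b) * (d - c))) atTop (𝓝 0) := by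
    have hpow := (tendsto_rpow_neg_atTop (by linarith : 0 < b)).comp
      (tendsto_atTop_add_const_left _ (1 : ℝ) tendsto_natCast_atTop_atTop)
    simpa [Function.comp_def] using ((hpow.const_mul K).mul_const (d - c)).const_mul 2
  have hdiff := squeeze_zero_norm (fun N : ℕ ↦ norm_verticalIntegral_sub_le (T := N) hcd hg
    fun σ t hσ ht ↦ (hK σ t hσ).trans_eq (by rw [ht, Nat.abs_cast])) hdecay
  exact sub_eq_zero.1 (tendsto_nhds_unique ((hlim d (right_mem_Icc.2 hcd)).sub
    (hlim c (left_mem_Icc.2 hcd))) hdiff)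

end ContourShift

section Perron

open MeasureTheory Set

lemma re_ofReal_add_ofReal_mul_I (σ t : ℝ) : (σ + t * Complex.I : ℂ).re = σ := by simp

lemma im_ofReal_add_ofReal_mul_I (σ t : ℝ) : (σ + t * Complex.I : ℂ).im = t := by simp

lemma one_add_abs_div_three_le_norm {σ : ℝ} (hσ : 1 / 2 ≤ σ) (t : ℝ) :
    (1 + |t|) / 3 ≤ ‖(σ + t * Complex.I : ℂ)‖ := by
  have hre := Complex.abs_re_le_norm (σ + t * Complex.I : ℂ)
  have him := Complex.abs_im_le_norm (σ + t * Complex.I : ℂ)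
  rw [re_ofReal_add_ofReal_mul_I] at hre
  rw [im_ofReal_add_ofReal_mul_I] at him
  linarith [le_abs_self σ]

lemma log_abs_add_two_le_rpow (t : ℝ) : Real.log (|t| + 2) ≤ 4 * (1 + |t|) ^ (1 / 2 : ℝ) := by
  have hsqrt_four : (4 : ℝ) ^ (1 / 2 : ℝ) = 2 := by
    rw [← Real.sqrt_eq_rpow, show (4 : ℝ) = 2 ^ 2 by norm_num, Real.sqrt_sq zero_le_two]
  calc Real.log (|t| + 2) ≤ Real.log (4 * (1 + |t|)) :=
        Real.log_le_log (by positivity) (by linarith [abs_nonneg t])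
    _ ≤ (4 * (1 + |t|)) ^ (1 / 2 : ℝ) / (1 / 2) :=
        Real.log_le_rpow_div (by positivity) (by norm_num)
    _ = 4 * (1 + |t|) ^ (1 / 2 : ℝ) := by
        rw [Real.mul_rpow (by norm_num) (by positivity), hsqrt_four]
        ring

lemma exists_forall_norm_errorKernel_le (hRH : RiemannHypothesis) {c : ℝ} (hc : 1 / 2 < c) :
    ∃ K > 0, ∀ σ t : ℝ, σ ∈ Icc c 2 →
      ‖errorKernel (σ + t * Complex.I)‖ ≤ K * (1 + |t|) ^ (-(3 / 2) : ℝ) := by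
  obtain ⟨K, hK, hbound⟩ := exists_forall_norm_logDeriv₂_riemannZeta₁_le hRH
  set δ := min (c - 1 / 2) (1 / 2)
  have hδ : 0 < δ := lt_min (by linarith) (by norm_num)
  have hδc : δ ≤ c - 1 / 2 := min_le_left _ _
  refine ⟨36 * K / δ ^ 2, by positivity, fun σ t hσ ↦ ?_⟩
  have hnorm := one_add_abs_div_three_le_norm (by linarith [hσ.1] : 1 / 2 ≤ σ) t
  have hpow : (1 + |t|) ^ (-(3 / 2) : ℝ) = (1 + |t|) ^ (1 / 2 : ℝ) / (1 + |t|) ^ 2 := by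
    rw [← Real.rpow_two (1 + |t|), ← Real.rpow_sub (by positivity)]
    norm_num
  rw [errorKernel, norm_div, norm_pow]
  calc ‖logDeriv₂ riemannZeta₁ (σ + t * Complex.I)‖ / ‖(σ + t * Complex.I : ℂ)‖ ^ 2
      ≤ K * (4 * (1 + |t|) ^ (1 / 2 : ℝ)) / δ ^ 2 / ((1 + |t|) / 3) ^ 2 := by
        have hlog := log_abs_add_two_le_rpow t
        have hnum := (hbound δ σ t hδ (min_le_right _ _) (by linarith [hσ.1]) hσ.2).trans
          (by gcongr : _ ≤ K * (4 * (1 + |t|) ^ (1 / 2 : ℝ)) / δ ^ 2)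
        gcongr
    _ = 36 * K / δ ^ 2 * (1 + |t|) ^ (-(3 / 2) : ℝ) := by
        rw [hpow]
        field_simp
        norm_num

variable {c : ℝ}

lemma differentiableAt_errorKernel (hRH : RiemannHypothesis) {s : ℂ} (hs : 1 / 2 < s.re) :
    DifferentiableAt ℂ errorKernel s := by
  have hs0 : s ≠ 0 := by rintro rfl; norm_num at hs
  exact (differentiableAt_logDeriv₂_riemannZeta₁ hRH hs).div (by fun_prop) (pow_ne_zero 2 hs0)

lemma integrable_errorKernel_verticalLine (hRH : RiemannHypothesis) (hc : c ∈ Ioc (1 / 2) 2) :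
    Integrable fun t : ℝ ↦ errorKernel (c + t * Complex.I) := by
  obtain ⟨K, -, hbound⟩ := exists_forall_norm_errorKernel_le hRH hc.1
  have hcont : Continuous fun t : ℝ ↦ errorKernel (c + t * Complex.I) :=
    continuous_iff_continuousAt.2 fun t ↦
      (differentiableAt_errorKernel hRH (s := c + t * Complex.I)
        (by simpa using hc.1)).continuousAt.comp
        (f := fun t : ℝ ↦ (c + t * Complex.I : ℂ)) (by fun_prop)
  exact ((integrable_one_add_abs_rpow_neg (by norm_num)).const_mul K).mono'
    hcont.aestronglyMeasurable (.of_forall fun t ↦ hbound c t (left_mem_Icc.2 hc.2))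

lemma smoothedError_eq_integral_two (hRH : RiemannHypothesis) {x : ℝ} (hx : 0 < x) :
    (smoothedError x : ℂ) = (1 / (2 * Real.pi)) •
      ∫ t : ℝ, (x : ℂ) ^ ((2 : ℝ) + t * Complex.I : ℂ) * errorKernel ((2 : ℝ) + t * Complex.I) := by
  have hmellin (t : ℝ) : mellin (fun x ↦ (smoothedError x : ℂ)) ((-2 : ℝ) + t * Complex.I) =
      errorKernel ((2 : ℝ) + (-t : ℝ) * Complex.I) := by
    rw [← mellin_smoothedError (by norm_num)]
    congr 1
    push_cast
    ring
  have hconv : MellinConvergent (fun x ↦ (smoothedError x : ℂ)) ((-2 : ℝ) : ℂ) := by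
    simpa using mellinConvergent_smoothedError (s := 2) (by norm_num)
  have hvert : Complex.VerticalIntegrable (mellin fun x ↦ (smoothedError x : ℂ)) (-2) volume := by
    simp_rw [Complex.VerticalIntegrable, hmellin]
    exact (integrable_errorKernel_verticalLine hRH ⟨by norm_num, le_rfl⟩).comp_neg
  rw [← mellinInv_mellin_eq (-2) (fun x ↦ (smoothedError x : ℂ)) hx hconv hvert
    (Complex.continuous_ofReal.comp continuous_smoothedError).continuousAt, mellinInv,
    ← integral_neg_eq_self]
  congr 2
  funext t
  rw [hmellin, smul_eq_mul, neg_neg]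
  congr 2
  push_cast
  ring

lemma smoothedError_eq_integral (hRH : RiemannHypothesis) {x : ℝ} (hx : 1 ≤ x)
    (hc : c ∈ Ioc (1 / 2) 2) :
    (smoothedError x : ℂ) = (1 / (2 * Real.pi)) •
      ∫ t : ℝ, (x : ℂ) ^ (c + t * Complex.I : ℂ) * errorKernel (c + t * Complex.I) := by
  have hx0 : 0 < x := by linarith
  obtain ⟨K, -, hbound⟩ := exists_forall_norm_errorKernel_le hRH hc.1
  rw [smoothedError_eq_integral_two hRH hx0]
  congr 1
  refine integral_verticalLine_eq_of_norm_le (g := fun s ↦ (x : ℂ) ^ s * errorKernel s)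
    (K := x ^ (2 : ℝ) * K) (b := 3 / 2) hc.2 (by norm_num) (fun s hs ↦ ?_) (fun σ t hσ ↦ ?_)
  · exact (DifferentiableAt.const_cpow (by fun_prop) (.inl (mod_cast hx0.ne'))).mul
      (differentiableAt_errorKernel hRH (hc.1.trans_le hs.1))
  · rw [norm_mul, Complex.norm_cpow_eq_rpow_re_of_pos hx0, mul_assoc, re_ofReal_add_ofReal_mul_I]
    gcongr
    exacts [hσ.2, hbound σ t hσ]

end Perron

section SmoothedErrorIncrement

open MeasureTheory Set

lemma norm_exp_sub_one_le_rpow {z : ℂ} {b : ℝ} (hz : z.re ≤ 1) (hb : 0 ≤ b) (hb1 : b ≤ 1) :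
    ‖Complex.exp z - 1‖ ≤ 4 * ‖z‖ ^ b := by
  rcases le_total ‖z‖ 1 with hle | hge
  · have hpow : ‖z‖ ≤ ‖z‖ ^ b := Real.self_le_rpow_of_le_one (norm_nonneg z) hle hb1
    linarith [Complex.norm_exp_sub_one_le hle, norm_nonneg z]
  · have hpow : 1 ≤ ‖z‖ ^ b := Real.one_le_rpow hge hb
    have hexp : ‖Complex.exp z‖ ≤ 3 := by
      rw [Complex.norm_exp]
      linarith [Real.exp_le_exp.2 hz, Real.exp_one_lt_d9]
    linarith [norm_sub_le (Complex.exp z) 1, norm_one (α := ℂ)]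

lemma integrable_cpow_mul_errorKernel (hRH : RiemannHypothesis) {c x : ℝ} (hx : 0 < x)
    (hc : c ∈ Ioc (1 / 2) 2) :
    Integrable fun t : ℝ ↦ (x : ℂ) ^ (c + t * Complex.I : ℂ) * errorKernel (c + t * Complex.I) := by
  refine (integrable_errorKernel_verticalLine hRH hc).bdd_mul (c := x ^ c)
    (Continuous.const_cpow (by fun_prop) (.inl (mod_cast hx.ne'))).aestronglyMeasurable
    (.of_forall fun t ↦ ?_)
  rw [Complex.norm_cpow_eq_rpow_re_of_pos hx, re_ofReal_add_ofReal_mul_I]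

lemma ofReal_mul_exp_cpow {x : ℝ} (hx : 0 ≤ x) (κ : ℝ) (s : ℂ) :
    ((x * Real.exp κ : ℝ) : ℂ) ^ s = (x : ℂ) ^ s * Complex.exp (κ * s) := by
  rw [Complex.ofReal_mul, Complex.mul_cpow_ofReal_nonneg hx (Real.exp_pos κ).le,
    Complex.cpow_def_of_ne_zero (mod_cast (Real.exp_pos κ).ne' : ((Real.exp κ : ℝ) : ℂ) ≠ 0),
    ← Complex.ofReal_log (Real.exp_pos κ).le, Real.log_exp]

lemma smoothedError_mul_exp_sub_eq_integral (hRH : RiemannHypothesis) {c x κ : ℝ} (hx : 1 ≤ x)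
    (hxκ : 1 ≤ x * Real.exp κ) (hc : c ∈ Ioc (1 / 2) 2) :
    ((smoothedError (x * Real.exp κ) - smoothedError x : ℝ) : ℂ) = (1 / (2 * Real.pi)) •
      ∫ t : ℝ, (x : ℂ) ^ (c + t * Complex.I : ℂ) *
        (Complex.exp (κ * (c + t * Complex.I)) - 1) * errorKernel (c + t * Complex.I) := by
  have hx0 : 0 < x := by linarith
  rw [Complex.ofReal_sub, smoothedError_eq_integral hRH hxκ hc,
    smoothedError_eq_integral hRH hx hc, ← smul_sub,
    ← integral_sub (integrable_cpow_mul_errorKernel hRH (by positivity) hc)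
      (integrable_cpow_mul_errorKernel hRH hx0 hc)]
  simp_rw [ofReal_mul_exp_cpow hx0.le]
  ring_nf

lemma norm_rpow_div_norm_sq_le {a σ : ℝ} (ha : -1 ≤ a) (ha1 : a ≤ 1) (hσ : 1 / 2 ≤ σ) (t : ℝ) :
    ‖(σ + t * Complex.I : ℂ)‖ ^ (1 - a) / ‖(σ + t * Complex.I : ℂ)‖ ^ 2 ≤
      9 * (1 + |t|) ^ (-1 - a) := by
  have hnorm := one_add_abs_div_three_le_norm hσ t
  have hpos : 0 < ‖(σ + t * Complex.I : ℂ)‖ := lt_of_lt_of_le (by positivity) hnorm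
  have hthree : (3 : ℝ) ^ (1 + a) ≤ 9 := by
    calc (3 : ℝ) ^ (1 + a) ≤ 3 ^ (2 : ℝ) :=
          Real.rpow_le_rpow_of_exponent_le (by norm_num) (by linarith)
      _ = 9 := by norm_num
  calc ‖(σ + t * Complex.I : ℂ)‖ ^ (1 - a) / ‖(σ + t * Complex.I : ℂ)‖ ^ 2
      = ‖(σ + t * Complex.I : ℂ)‖ ^ (-1 - a) := by
        rw [← Real.rpow_two, ← Real.rpow_sub hpos]
        ring_nf
    _ ≤ ((1 + |t|) / 3) ^ (-1 - a) :=
        Real.rpow_le_rpow_of_nonpos (by positivity) hnorm (by linarith)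
    _ = 3 ^ (1 + a) * (1 + |t|) ^ (-1 - a) := by
        rw [Real.div_rpow (by positivity) (by norm_num), div_eq_mul_inv,
          ← Real.rpow_neg (by norm_num), mul_comm, neg_sub, sub_neg_eq_add, add_comm]
    _ ≤ 9 * (1 + |t|) ^ (-1 - a) := by gcongr

lemma norm_increment_integrand_le {a σ κ x : ℝ} (ha : 0 ≤ a) (ha1 : a ≤ 1)
    (hσ : σ ∈ Icc (1 / 2) 1) (hκ : |κ| ≤ 1) (hx : 0 < x) (t : ℝ) :
    ‖(x : ℂ) ^ (σ + t * Complex.I : ℂ) * (Complex.exp (κ * (σ + t * Complex.I)) - 1) *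
        errorKernel (σ + t * Complex.I)‖ ≤
      36 * x ^ σ * |κ| ^ (1 - a) *
        (‖logDeriv₂ riemannZeta₁ (σ + t * Complex.I)‖ * (1 + |t|) ^ (-1 - a)) := by
  have hre : (κ * (σ + t * Complex.I) : ℂ).re ≤ 1 := by
    rw [Complex.re_ofReal_mul, re_ofReal_add_ofReal_mul_I]
    nlinarith [(abs_le.1 hκ).2, hσ.1, hσ.2]
  have hexp := norm_exp_sub_one_le_rpow hre (b := 1 - a) (by linarith) (by linarith)
  have hquot := norm_rpow_div_norm_sq_le (by linarith) ha1 hσ.1 t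
  rw [norm_mul, Complex.norm_real, Real.norm_eq_abs,
    Real.mul_rpow (abs_nonneg κ) (norm_nonneg _)] at hexp
  rw [norm_mul, norm_mul, errorKernel, norm_div, norm_pow,
    Complex.norm_cpow_eq_rpow_re_of_pos hx, re_ofReal_add_ofReal_mul_I]
  set s : ℂ := σ + t * Complex.I
  calc x ^ σ * ‖Complex.exp (κ * s) - 1‖ * (‖logDeriv₂ riemannZeta₁ s‖ / ‖s‖ ^ 2)
      ≤ x ^ σ * (4 * (|κ| ^ (1 - a) * ‖s‖ ^ (1 - a))) *
          (‖logDeriv₂ riemannZeta₁ s‖ / ‖s‖ ^ 2) := by gcongr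
    _ = 4 * x ^ σ * |κ| ^ (1 - a) * ‖logDeriv₂ riemannZeta₁ s‖ *
          (‖s‖ ^ (1 - a) / ‖s‖ ^ 2) := by ring
    _ ≤ 4 * x ^ σ * |κ| ^ (1 - a) * ‖logDeriv₂ riemannZeta₁ s‖ *
          (9 * (1 + |t|) ^ (-1 - a)) := by gcongr
    _ = 36 * x ^ σ * |κ| ^ (1 - a) * (‖logDeriv₂ riemannZeta₁ s‖ * (1 + |t|) ^ (-1 - a)) := by
        ring

lemma exists_forall_abs_smoothedError_increment_le (hRH : RiemannHypothesis) :
    ∃ K > 0, ∀ δ a x κ : ℝ, 0 < δ → δ ≤ 1 / 2 → 0 < a → a ≤ 1 → 1 ≤ x → |κ| ≤ 1 →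
      1 ≤ x * Real.exp κ →
      |smoothedError (x * Real.exp κ) - smoothedError x| ≤
        K * x ^ (1 / 2 + δ) * |κ| ^ (1 - a) / (δ * a ^ 2) := by
  obtain ⟨K, hK, hweight⟩ := exists_forall_integral_norm_logDeriv₂_riemannZeta₁_le hRH
  refine ⟨36 * K, by positivity, fun δ a x κ hδ hδ2 ha ha1 hx hκ hxκ ↦ ?_⟩
  obtain ⟨hint, hle⟩ := hweight δ a hδ hδ2 ha ha1
  have hpi : 1 / (2 * Real.pi) ≤ 1 := by
    rw [div_le_one (by positivity)]
    linarith [Real.pi_gt_three]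
  have hintegral := norm_integral_le_of_norm_le
    (hint.const_mul (36 * x ^ (1 / 2 + δ) * |κ| ^ (1 - a)))
    (.of_forall (norm_increment_integrand_le ha.le ha1 ⟨by linarith, by linarith⟩ hκ
      (by linarith : 0 < x)))
  rw [integral_const_mul] at hintegral
  rw [← Real.norm_eq_abs, ← Complex.norm_real, smoothedError_mul_exp_sub_eq_integral hRH hx hxκ
    (c := 1 / 2 + δ) ⟨by linarith, by linarith⟩, norm_smul, Real.norm_of_nonneg (by positivity)]
  calc _ ≤ 1 * (36 * x ^ (1 / 2 + δ) * |κ| ^ (1 - a) * (K / (δ * a ^ 2))) := by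
        gcongr
        exact hintegral.trans (by gcongr)
    _ = 36 * K * x ^ (1 / 2 + δ) * |κ| ^ (1 - a) / (δ * a ^ 2) := by ring

end SmoothedErrorIncrement

section SumLogVonMangoldtAsymptotics

open MeasureTheory Set

lemma logPrimitive_sub {f : ℝ → ℝ} {u v : ℝ} (hu : 1 ≤ u) (huv : u ≤ v)
    (hf : IntegrableOn (fun t ↦ f t / t) (Ioc 1 v)) :
    logPrimitive f v - logPrimitive f u = ∫ t in u..v, f t / t := by
  rw [logPrimitive, logPrimitive, ← Ioc_union_Ioc_eq_Ioc hu huv,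
    setIntegral_union (Ioc_disjoint_Ioc_of_le le_rfl) measurableSet_Ioc
      (hf.mono_set (Ioc_subset_Ioc_right huv)) (hf.mono_set (Ioc_subset_Ioc_left hu)),
    add_sub_cancel_left, intervalIntegral.integral_of_le huv]

section

variable {f : ℝ → ℝ} {c u v : ℝ}

lemma intervalIntegrable_const_div (hu : 0 < u) (huv : u ≤ v) :
    IntervalIntegrable (fun t ↦ c / t) volume u v :=
  (continuousOn_const.div continuousOn_id fun _ ht ↦
    (hu.trans_le (uIcc_of_le huv ▸ ht).1).ne').intervalIntegrable

lemma integral_const_div (hu : 0 < u) (huv : u ≤ v) :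
    ∫ t in u..v, c / t = c * Real.log (v / u) := by
  simp_rw [div_eq_mul_inv c]
  rw [intervalIntegral.integral_const_mul, integral_inv_of_pos hu (hu.trans_le huv)]

lemma mul_log_le_logPrimitive_sub (hu : 1 ≤ u) (huv : u ≤ v)
    (hf : IntegrableOn (fun t ↦ f t / t) (Ioc 1 v)) (hc : ∀ t ∈ Ioo u v, c ≤ f t) :
    c * Real.log (v / u) ≤ logPrimitive f v - logPrimitive f u := by
  have hu0 : 0 < u := by linarith
  rw [logPrimitive_sub hu huv hf, ← integral_const_div hu0 huv]
  refine intervalIntegral.integral_mono_on_of_le_Ioo huv (intervalIntegrable_const_div hu0 huv)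
    ((intervalIntegrable_iff_integrableOn_Ioc_of_le huv).2
      (hf.mono_set (Ioc_subset_Ioc_left hu))) fun t ht ↦ ?_
  exact div_le_div_of_nonneg_right (hc t ht) (hu0.trans ht.1).le

lemma logPrimitive_sub_le_mul_log (hu : 1 ≤ u) (huv : u ≤ v)
    (hf : IntegrableOn (fun t ↦ f t / t) (Ioc 1 v)) (hc : ∀ t ∈ Ioo u v, f t ≤ c) :
    logPrimitive f v - logPrimitive f u ≤ c * Real.log (v / u) := by
  have hu0 : 0 < u := by linarith
  rw [logPrimitive_sub hu huv hf, ← integral_const_div hu0 huv]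
  refine intervalIntegral.integral_mono_on_of_le_Ioo huv
    ((intervalIntegrable_iff_integrableOn_Ioc_of_le huv).2
      (hf.mono_set (Ioc_subset_Ioc_left hu))) (intervalIntegrable_const_div hu0 huv) fun t ht ↦ ?_
  exact div_le_div_of_nonneg_right (hc t ht) (hu0.trans ht.1).le

end

variable {u v x η : ℝ}

lemma integral_log_eq_integralLog_sub (u v : ℝ) :
    ∫ t in u..v, Real.log t = integralLog v - integralLog u := by
  rw [integral_log, integralLog, integralLog]
  ring

lemma integralLog_le_integralLog (hu : 1 ≤ u) (huv : u ≤ v) : integralLog u ≤ integralLog v := by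
  rw [← sub_nonneg, ← integral_log_eq_integralLog_sub]
  exact intervalIntegral.integral_nonneg huv fun t ht ↦ Real.log_nonneg (hu.trans ht.1)

lemma integralLog_sub_le (hu : 0 < u) (huv : u ≤ v) :
    integralLog v - integralLog u ≤ (v - u) * Real.log v := by
  rw [← integral_log_eq_integralLog_sub, ← smul_eq_mul, ← intervalIntegral.integral_const]
  exact intervalIntegral.integral_mono_on huv intervalIntegral.intervalIntegrable_log'
    intervalIntegrable_const fun t ht ↦ Real.log_le_log (hu.trans_le ht.1) ht.2

lemma integrableOn_sumLogVonMangoldtError_div_self (v : ℝ) :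
    IntegrableOn (fun t ↦ sumLogVonMangoldtError t / t) (Ioc 1 v) :=
  integrableOn_div_self_Ioc measurable_sumLogVonMangoldtError (by norm_num)
    (fun _ ht ↦ abs_sumLogVonMangoldtError_le ht.le) le_rfl

lemma mul_log_le_smoothedError_sub (hu : 1 ≤ u) (huv : u ≤ v) :
    (sumLogVonMangoldt u - integralLog v) * Real.log (v / u) ≤
      smoothedError v - smoothedError u :=
  mul_log_le_logPrimitive_sub hu huv (integrableOn_sumLogVonMangoldtError_div_self v) fun _ ht ↦
    sub_le_sub (monotone_sumLogVonMangoldt ht.1.le)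
      (integralLog_le_integralLog (hu.trans ht.1.le) ht.2.le)

lemma smoothedError_sub_le_mul_log (hu : 1 ≤ u) (huv : u ≤ v) :
    smoothedError v - smoothedError u ≤
      (sumLogVonMangoldt v - integralLog u) * Real.log (v / u) :=
  logPrimitive_sub_le_mul_log hu huv (integrableOn_sumLogVonMangoldtError_div_self v) fun _ ht ↦
    sub_le_sub (monotone_sumLogVonMangoldt ht.2.le) (integralLog_le_integralLog hu ht.1.le)

lemma sumLogVonMangoldtError_le_of_increment {M : ℝ} (hx : 1 ≤ x) (hη : 0 < η) (hη1 : η ≤ 1)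
    (hM : |smoothedError (x * Real.exp η) - smoothedError x| ≤ M) :
    sumLogVonMangoldtError x ≤ M / η + 2 * x * η * (Real.log x + 1) := by
  have hx0 : 0 < x := by linarith
  have hlogx := Real.log_nonneg hx
  have hle : x ≤ x * Real.exp η := le_mul_of_one_le_right hx0.le (Real.one_le_exp hη.le)
  have hsandwich := mul_log_le_smoothedError_sub hx hle
  rw [mul_div_cancel_left₀ _ hx0.ne', Real.log_exp] at hsandwich
  have hsum := (le_div_iff₀ hη).2 (hsandwich.trans ((le_abs_self _).trans hM))
  have hmain := integralLog_sub_le hx0 hle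
  rw [Real.log_mul hx0.ne' (Real.exp_pos η).ne', Real.log_exp] at hmain
  have hexp : Real.exp η - 1 ≤ 2 * η := by
    simpa [abs_of_pos hη] using (le_abs_self _).trans (Real.abs_exp_sub_one_le (x := η)
      (by rwa [abs_of_pos hη]))
  have hlength : (x * Real.exp η - x) * (Real.log x + η) ≤ 2 * x * η * (Real.log x + 1) :=
    calc (x * Real.exp η - x) * (Real.log x + η)
        = x * (Real.exp η - 1) * (Real.log x + η) := by ring
      _ ≤ x * (2 * η) * (Real.log x + 1) := by gcongr
      _ = 2 * x * η * (Real.log x + 1) := by ring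
  rw [sumLogVonMangoldtError]
  linarith

lemma neg_le_sumLogVonMangoldtError_of_increment {M : ℝ} (hη : 0 < η)
    (hxη : 1 ≤ x * Real.exp (-η))
    (hM : |smoothedError (x * Real.exp (-η)) - smoothedError x| ≤ M) :
    -(M / η + x * η * Real.log x) ≤ sumLogVonMangoldtError x := by
  have hx0 : 0 < x := pos_of_mul_pos_left (one_pos.trans_le hxη) (Real.exp_pos _).le
  have hle : x * Real.exp (-η) ≤ x :=
    mul_le_of_le_one_right hx0.le (Real.exp_le_one_iff.2 (by linarith))
  have hsandwich := smoothedError_sub_le_mul_log hxη hle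
  rw [div_mul_cancel_left₀ hx0.ne', ← Real.exp_neg, neg_neg, Real.log_exp] at hsandwich
  rw [abs_sub_comm] at hM
  have hsum := (div_le_iff₀ hη).2 ((neg_le_of_abs_le hM).trans hsandwich)
  have hlogx := Real.log_nonneg (hxη.trans hle)
  have hmain : integralLog x - integralLog (x * Real.exp (-η)) ≤ x * η * Real.log x := by
    refine (integralLog_sub_le (by linarith) hle).trans ?_
    gcongr
    nlinarith [Real.add_one_le_exp (-η)]
  rw [sumLogVonMangoldtError]
  rw [neg_div] at hsum
  linarith

lemma exists_forall_abs_smoothedError_increment_le_log_cube (hRH : RiemannHypothesis) :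
    ∃ K > 0, ∀ x κ : ℝ, 1 ≤ x → 2 ≤ Real.log x → |κ| = (√x)⁻¹ → 1 ≤ x * Real.exp κ →
      |smoothedError (x * Real.exp κ) - smoothedError x| ≤ K * Real.log x ^ 3 := by
  obtain ⟨K, hK, hincr⟩ := exists_forall_abs_smoothedError_increment_le hRH
  refine ⟨K * Real.exp (3 / 2), by positivity, fun x κ hx hl hκ hxκ ↦ ?_⟩
  have hx0 : 0 < x := by linarith
  have hκ1 : |κ| ≤ 1 := hκ ▸ inv_le_one_of_one_le₀ (Real.one_le_sqrt.2 hx)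
  have hsqrt : √x = Real.exp (Real.log x / 2) := by
    rw [Real.sqrt_eq_rpow, Real.rpow_def_of_pos hx0]
    ring_nf
  set l := Real.log x with hldef
  have : 0 < l := by linarith
  refine (hincr l⁻¹ l⁻¹ x κ (by positivity) ?_ (by positivity)
    (inv_le_one_of_one_le₀ (by linarith)) hx hκ1 hxκ).trans_eq ?_
  · rw [one_div]
    exact inv_anti₀ two_pos hl
  rw [hκ, hsqrt, ← Real.exp_neg, ← Real.exp_mul, Real.rpow_def_of_pos hx0, ← hldef]
  have hexp : Real.exp (3 / 2) =
      Real.exp (l * (1 / 2 + l⁻¹)) * Real.exp (-(l / 2) * (1 - l⁻¹)) := by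
    rw [← Real.exp_add]
    congr 1
    field_simp
    ring
  rw [hexp]
  field_simp

lemma exists_forall_abs_sumLogVonMangoldtError_le_of_two_le_log (hRH : RiemannHypothesis) :
    ∃ C > 0, ∀ x : ℝ, 1 ≤ x → 2 ≤ Real.log x →
      |sumLogVonMangoldtError x| ≤ C * √x * Real.log x ^ 3 := by
  obtain ⟨K, hK, hincr⟩ := exists_forall_abs_smoothedError_increment_le_log_cube hRH
  refine ⟨K + 2, by positivity, fun x hx hl ↦ ?_⟩
  have hx3 : 3 ≤ x := by linarith [Real.log_le_sub_one_of_pos (by linarith : 0 < x)]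
  have hs1 : 1 ≤ √x := Real.one_le_sqrt.2 hx
  have hxs : x = √x * √x := (Real.mul_self_sqrt (by linarith)).symm
  set η := (√x)⁻¹ with hη
  have hη0 : 0 < η := by positivity
  have hη1 : η ≤ 1 := inv_le_one_of_one_le₀ hs1
  have hxη : x * η = √x := by rw [hη]; nth_rewrite 1 [hxs]; field_simp
  have hdown : 1 ≤ x * Real.exp (-η) := by nlinarith [Real.add_one_le_exp (-η)]
  have hup : 1 ≤ x * Real.exp η := by nlinarith [Real.one_le_exp hη0.le]
  have hlower := neg_le_sumLogVonMangoldtError_of_increment hη0 hdown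
    (hincr x (-η) hx hl (by rw [abs_neg, abs_of_pos hη0]) hdown)
  have hupper := sumLogVonMangoldtError_le_of_increment hx hη0 hη1
    (hincr x η hx hl (abs_of_pos hη0) hup)
  rw [mul_assoc 2, hxη, hη, div_inv_eq_mul] at hupper
  rw [hxη, hη, div_inv_eq_mul] at hlower
  have hcube : Real.log x + 1 ≤ Real.log x ^ 3 := by nlinarith [sq_nonneg (Real.log x - 1)]
  have hsecond : √x * (Real.log x + 1) ≤ √x * Real.log x ^ 3 := by gcongr
  rw [abs_le]
  constructor <;> nlinarith

lemma half_le_log {x : ℝ} (hx : 2 ≤ x) : 1 / 2 ≤ Real.log x := by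
  linarith [Real.log_two_gt_d9, Real.log_le_log two_pos hx]

theorem exists_forall_abs_sumLogVonMangoldtError_le (hRH : RiemannHypothesis) :
    ∃ C > 0, ∀ x : ℝ, 2 ≤ x → |sumLogVonMangoldtError x| ≤ C * √x * Real.log x ^ 3 := by
  obtain ⟨C, hC, hlarge⟩ := exists_forall_abs_sumLogVonMangoldtError_le_of_two_le_log hRH
  refine ⟨C + 12 * 9 ^ 2 * 8, by positivity, fun x hx ↦ ?_⟩
  have hlog := half_le_log hx
  rcases le_total 2 (Real.log x) with hl | hl
  · refine (hlarge x (by linarith) hl).trans ?_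
    gcongr
    norm_num
  · have hx9 : x ≤ 9 := by
      rw [Real.log_le_iff_le_exp (by linarith), ← one_add_one_eq_two, Real.exp_add] at hl
      nlinarith [Real.exp_one_lt_d9, Real.exp_pos 1]
    calc |sumLogVonMangoldtError x| ≤ 12 * x ^ (3 / 2 : ℝ) :=
          abs_sumLogVonMangoldtError_le (by linarith)
      _ ≤ 12 * x ^ (2 : ℝ) := by gcongr <;> linarith
      _ ≤ 12 * 9 ^ (2 : ℝ) := by gcongr
      _ = 12 * 9 ^ 2 * 8 * 1 * (1 / 2) ^ 3 := by norm_num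
      _ ≤ (C + 12 * 9 ^ 2 * 8) * √x * Real.log x ^ 3 := by
          gcongr
          · linarith
          · exact Real.one_le_sqrt.2 (by linarith)

end SumLogVonMangoldtAsymptotics

section AbelSummation

open MeasureTheory Set

variable {a b : ℝ} {f f' M w G : ℝ → ℝ}

lemma sum_mul_sub_integral_mul_eq (c : ℕ → ℝ) (ha : 0 ≤ a) (hab : a ≤ b)
    (hf : ∀ t ∈ Icc a b, HasDerivAt f (f' t) t) (hf' : ContinuousOn f' (Icc a b))
    (hM : ∀ t ∈ Icc a b, HasDerivAt M (w t) t) (hw : ContinuousOn w (Icc a b)) :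
    ∑ k ∈ Finset.Ioc ⌊a⌋₊ ⌊b⌋₊, f k * c k - ∫ t in a..b, f t * w t =
      f b * (∑ k ∈ Finset.Icc 0 ⌊b⌋₊, c k - M b) - f a * (∑ k ∈ Finset.Icc 0 ⌊a⌋₊, c k - M a) -
        ∫ t in a..b, f' t * (∑ k ∈ Finset.Icc 0 ⌊t⌋₊, c k - M t) := by
  have hderiv : EqOn (deriv f) f' (Icc a b) := fun t ht ↦ (hf t ht).deriv
  have hsum := sum_mul_eq_sub_sub_integral_mul c ha hab (fun t ht ↦ (hf t ht).differentiableAt)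
    (hf'.congr hderiv).integrableOn_Icc
  rw [setIntegral_congr_fun measurableSet_Ioc
    fun t ht ↦ congrArg (· * _) (hderiv (Ioc_subset_Icc_self ht)),
    ← intervalIntegral.integral_of_le hab] at hsum
  rw [← uIcc_of_le hab] at hf hM hf' hw
  have hparts := intervalIntegral.integral_mul_deriv_eq_deriv_mul hf hM hf'.intervalIntegrable
    hw.intervalIntegrable
  have hstep : IntervalIntegrable (fun t ↦ f' t * ∑ k ∈ Finset.Icc 0 ⌊t⌋₊, c k) volume a b := by
    rw [intervalIntegrable_iff_integrableOn_Icc_of_le hab]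
    exact integrableOn_mul_sum_Icc c ha (uIcc_of_le hab ▸ hf').integrableOn_Icc
  have hsmooth : IntervalIntegrable (fun t ↦ f' t * M t) volume a b :=
    (hf'.mul (HasDerivAt.continuousOn hM)).intervalIntegrable
  simp only [mul_sub]
  rw [intervalIntegral.integral_sub hstep hsmooth, hsum, hparts]
  ring

lemma abs_sum_primes_mul_sub_integral_mul_le (c : ℕ → ℝ) (ha : 0 ≤ a) (hab : a ≤ b)
    (hf : ∀ t ∈ Icc a b, HasDerivAt f (f' t) t) (hf' : ContinuousOn f' (Icc a b))
    (hM : ∀ t ∈ Icc a b, HasDerivAt M (w t) t) (hw : ContinuousOn w (Icc a b))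
    (hG : IntervalIntegrable G volume a b)
    (hfG : ∀ t ∈ Icc a b, |f' t| * |∑ p ∈ Nat.primesLE ⌊t⌋₊, c p - M t| ≤ G t) :
    |∑ p ∈ Finset.Ioc ⌊a⌋₊ ⌊b⌋₊ with p.Prime, f p * c p - ∫ t in a..b, f t * w t| ≤
      |f b| * |∑ p ∈ Nat.primesLE ⌊b⌋₊, c p - M b| +
        |f a| * |∑ p ∈ Nat.primesLE ⌊a⌋₊, c p - M a| + ∫ t in a..b, G t := by
  have habel := sum_mul_sub_integral_mul_eq (fun k ↦ if k.Prime then c k else 0) ha hab hf hf' hM hw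
  simp only [mul_ite, mul_zero, ← Finset.sum_filter, ← Nat.primesLE_eq_filter_Icc_zero] at habel
  have herror : |∫ t in a..b, f' t * (∑ p ∈ Nat.primesLE ⌊t⌋₊, c p - M t)| ≤
      ∫ t in a..b, G t := by
    rw [← Real.norm_eq_abs]
    refine intervalIntegral.norm_integral_le_of_norm_le hab (.of_forall fun t ht ↦ ?_) hG
    rw [norm_mul]
    exact hfG t (Ioc_subset_Icc_self ht)
  rw [habel, ← abs_mul, ← abs_mul]
  exact (abs_sub _ _).trans (add_le_add (abs_sub _ _) herror)

end AbelSummation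

section PrimeCounting

open MeasureTheory Set
open scoped ArithmeticFunction.vonMangoldt Nat.Prime

variable {t u v x : ℝ}

lemma sumLogVonMangoldt_sub_sum_primes (x : ℝ) :
    sumLogVonMangoldt x - ∑ p ∈ Nat.primesLE ⌊x⌋₊, Real.log p ^ 2 =
      ∑ n ∈ Finset.Ioc 0 ⌊x⌋₊ with ¬ n.Prime, Real.log n * Λ n := by
  have hprime : ∑ p ∈ Nat.primesLE ⌊x⌋₊, Real.log p ^ 2 =
      ∑ n ∈ Finset.Ioc 0 ⌊x⌋₊ with n.Prime, Real.log n * Λ n := by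
    rw [Nat.primesLE_eq_filter_Ioc_zero]
    refine Finset.sum_congr rfl fun p hp ↦ ?_
    rw [ArithmeticFunction.vonMangoldt_apply_prime (Finset.mem_filter.1 hp).2, sq]
  rw [hprime, sub_eq_iff_eq_add', Finset.sum_filter_add_sum_filter_not]
  rfl

lemma sum_primes_log_sq_le_sumLogVonMangoldt (x : ℝ) :
    ∑ p ∈ Nat.primesLE ⌊x⌋₊, Real.log p ^ 2 ≤ sumLogVonMangoldt x := by
  rw [← sub_nonneg, sumLogVonMangoldt_sub_sum_primes]
  exact Finset.sum_nonneg fun k _ ↦ log_mul_vonMangoldt_nonneg k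

lemma sumLogVonMangoldt_sub_sum_primes_le (hx : 1 ≤ x) :
    sumLogVonMangoldt x - ∑ p ∈ Nat.primesLE ⌊x⌋₊, Real.log p ^ 2 ≤ 2 * √x * Real.log x ^ 2 := by
  calc sumLogVonMangoldt x - ∑ p ∈ Nat.primesLE ⌊x⌋₊, Real.log p ^ 2
      = ∑ n ∈ Finset.Ioc 0 ⌊x⌋₊ with ¬ n.Prime, Real.log n * Λ n :=
        sumLogVonMangoldt_sub_sum_primes x
    _ ≤ ∑ n ∈ Finset.Ioc 0 ⌊x⌋₊ with ¬ n.Prime, Real.log x * Λ n := by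
        refine Finset.sum_le_sum fun n hn ↦
          mul_le_mul_of_nonneg_right ?_ ArithmeticFunction.vonMangoldt_nonneg
        obtain ⟨hn0, hnx⟩ := Finset.mem_Ioc.1 (Finset.mem_filter.1 hn).1
        exact Real.log_le_log (mod_cast hn0) ((Nat.le_floor_iff (by linarith)).1 hnx)
    _ = Real.log x * (Chebyshev.psi x - Chebyshev.theta x) := by
        rw [Chebyshev.psi_sub_theta_eq_sum_not_prime, Finset.mul_sum]
    _ ≤ Real.log x * (2 * √x * Real.log x) :=
        mul_le_mul_of_nonneg_left (Chebyshev.psi_sub_theta_le hx) (Real.log_nonneg hx)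
    _ = 2 * √x * Real.log x ^ 2 := by ring

lemma exists_forall_abs_sum_primes_log_sq_sub_integralLog_le (hRH : RiemannHypothesis) :
    ∃ C > 0, ∀ x : ℝ, 2 ≤ x →
      |∑ p ∈ Nat.primesLE ⌊x⌋₊, Real.log p ^ 2 - integralLog x| ≤ C * √x * Real.log x ^ 3 := by
  obtain ⟨C, hC, herror⟩ := exists_forall_abs_sumLogVonMangoldtError_le hRH
  refine ⟨C + 4, by positivity, fun x hx ↦ ?_⟩
  have hlog := half_le_log hx
  have hsquare : 2 * √x * Real.log x ^ 2 ≤ 4 * √x * Real.log x ^ 3 := by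
    have : 0 ≤ √x * Real.log x ^ 2 := by positivity
    nlinarith
  have hdiff := sumLogVonMangoldt_sub_sum_primes_le (by linarith : 1 ≤ x)
  have hle := sum_primes_log_sq_le_sumLogVonMangoldt x
  have hx := abs_le.1 (herror x hx)
  rw [sumLogVonMangoldtError] at hx
  rw [abs_le]
  constructor <;> linarith [hx.1, hx.2]

/-- The offset logarithmic integral `Li(x)`, the main term of `π(x)`. -/
noncomputable def logIntegral (x : ℝ) : ℝ := ∫ t in (2 : ℝ)..x, (Real.log t)⁻¹

lemma continuousAt_inv_log (ht : 1 < t) : ContinuousAt (fun t ↦ (Real.log t)⁻¹) t :=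
  (Real.continuousAt_log (by linarith)).inv₀ (Real.log_pos ht).ne'

lemma intervalIntegrable_inv_log (hu : 1 < u) (hv : 1 < v) :
    IntervalIntegrable (fun t ↦ (Real.log t)⁻¹) volume u v :=
  ContinuousOn.intervalIntegrable fun _ ht ↦
    (continuousAt_inv_log ((lt_min hu hv).trans_le ht.1)).continuousWithinAt

lemma hasDerivAt_logIntegral (ht : 1 < t) : HasDerivAt logIntegral (Real.log t)⁻¹ t :=
  intervalIntegral.integral_hasDerivAt_right (intervalIntegrable_inv_log one_lt_two ht)
    (ContinuousOn.stronglyMeasurableAtFilter isOpen_Ioi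
      (fun _ hs ↦ (continuousAt_inv_log hs).continuousWithinAt) t ht)
    (continuousAt_inv_log ht)

lemma logIntegral_sub (hu : 1 < u) (hv : 1 < v) :
    logIntegral v - logIntegral u = ∫ t in u..v, (Real.log t)⁻¹ :=
  intervalIntegral.integral_interval_sub_left (intervalIntegrable_inv_log one_lt_two hv)
    (intervalIntegrable_inv_log one_lt_two hu)

lemma logIntegral_sub_le (hu : 1 < u) (huv : u ≤ v) :
    logIntegral v - logIntegral u ≤ (v - u) / Real.log u := by
  have hv := hu.trans_le huv
  rw [logIntegral_sub hu hv, div_eq_mul_inv, ← smul_eq_mul, ← intervalIntegral.integral_const]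
  refine intervalIntegral.integral_mono_on huv (intervalIntegrable_inv_log hu hv) (by simp)
    fun t ht ↦ inv_anti₀ (Real.log_pos hu) (Real.log_le_log (by linarith) ht.1)

lemma le_logIntegral_sub (hu : 1 < u) (huv : u ≤ v) :
    (v - u) / Real.log v ≤ logIntegral v - logIntegral u := by
  have hv := hu.trans_le huv
  rw [logIntegral_sub hu hv, div_eq_mul_inv, ← smul_eq_mul, ← intervalIntegral.integral_const]
  refine intervalIntegral.integral_mono_on huv (by simp) (intervalIntegrable_inv_log hu hv)
    fun t ht ↦ inv_anti₀ (Real.log_pos (hu.trans_le ht.1)) (Real.log_le_log ?_ ht.2)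
  linarith [ht.1]

lemma hasDerivAt_integralLog (ht : t ≠ 0) : HasDerivAt integralLog (Real.log t) t := by
  refine (((hasDerivAt_id t).mul (Real.hasDerivAt_log ht)).sub (hasDerivAt_id t)).add_const 1
    |>.congr_deriv ?_
  simp [ht]

lemma hasDerivAt_inv_log_sq (ht : 1 < t) :
    HasDerivAt (fun t ↦ (Real.log t ^ 2)⁻¹) (-2 / (t * Real.log t ^ 3)) t := by
  have hlog := (Real.log_pos ht).ne'
  refine ((Real.hasDerivAt_log (by linarith)).pow 2).inv (pow_ne_zero 2 hlog) |>.congr_deriv ?_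
  simp only [Pi.pow_apply]
  field_simp
  simp [mul_comm]

lemma continuousOn_neg_two_div_mul_log_cube :
    ContinuousOn (fun t ↦ -2 / (t * Real.log t ^ 3)) (Ioi 1) := by
  have hlog : ContinuousOn Real.log (Ioi 1) :=
    Real.continuousOn_log.mono fun t (ht : 1 < t) ↦ (zero_lt_one.trans ht).ne'
  refine continuousOn_const.div (continuousOn_id.mul (hlog.pow 3)) fun t (ht : 1 < t) ↦ ?_
  exact mul_ne_zero (zero_lt_one.trans ht).ne' (pow_ne_zero 3 (Real.log_pos ht).ne')

lemma integral_rpow_neg_half (a b : ℝ) : ∫ t in a..b, t ^ (-(1 / 2) : ℝ) = 2 * (√b - √a) := by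
  rw [integral_rpow (Or.inl (by norm_num)), Real.sqrt_eq_rpow, Real.sqrt_eq_rpow]
  norm_num
  ring

lemma sum_primes_Ioc_two_inv_log_sq_mul_log_sq (hx : 2 ≤ x) :
    ∑ p ∈ Finset.Ioc ⌊(2 : ℝ)⌋₊ ⌊x⌋₊ with p.Prime, (Real.log p ^ 2)⁻¹ * Real.log p ^ 2 =
      π ⌊x⌋₊ - 1 := by
  have hfloor : 2 ≤ ⌊x⌋₊ := Nat.le_floor (mod_cast hx)
  have hterm : ∀ p ∈ Finset.Ioc 2 ⌊x⌋₊ |>.filter Nat.Prime,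
      (Real.log p ^ 2)⁻¹ * Real.log p ^ 2 = 1 := fun p hp ↦
    inv_mul_cancel₀ (pow_ne_zero 2 (Real.log_pos (mod_cast (Finset.mem_filter.1 hp).2.one_lt)).ne')
  rw [Nat.floor_ofNat, Finset.sum_congr rfl hterm, ← Nat.primesLE_card_eq_primeCounting,
    Nat.primesLE_eq_filter_Icc_two, ← Finset.Ioc_insert_left hfloor, Finset.filter_insert,
    if_pos Nat.prime_two, Finset.card_insert_of_notMem (by simp)]
  simp

lemma abs_inv_log_sq_mul_le {C e : ℝ} (ht : 1 < t) (he : |e| ≤ C * √t * Real.log t ^ 3) :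
    |(Real.log t ^ 2)⁻¹| * |e| ≤ C * √t * Real.log t := by
  have hlog := Real.log_pos ht
  rw [abs_of_pos (by positivity), inv_mul_le_iff₀ (by positivity)]
  linarith

lemma abs_neg_two_div_mul_log_cube_mul_le {C e : ℝ} (ht : 1 < t)
    (he : |e| ≤ C * √t * Real.log t ^ 3) :
    |-2 / (t * Real.log t ^ 3)| * |e| ≤ 2 * C * t ^ (-(1 / 2) : ℝ) := by
  have hlog := Real.log_pos ht
  have ht0 : 0 < t := by linarith
  calc |-2 / (t * Real.log t ^ 3)| * |e|
      ≤ 2 / (t * Real.log t ^ 3) * (C * √t * Real.log t ^ 3) := by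
        rw [neg_div, abs_neg, abs_of_pos (by positivity)]
        gcongr
    _ = 2 * C * (√t / t) := by field_simp
    _ = 2 * C * t ^ (-(1 / 2) : ℝ) := by
        rw [Real.sqrt_div_self, Real.rpow_neg ht0.le, Real.sqrt_eq_rpow, one_div]

theorem exists_forall_abs_primeCounting_sub_logIntegral_le (hRH : RiemannHypothesis) :
    ∃ K > 0, ∀ x : ℝ, 2 ≤ x → |π ⌊x⌋₊ - logIntegral x| ≤ K * √x * Real.log x := by
  obtain ⟨C, hC, herror⟩ := exists_forall_abs_sum_primes_log_sq_sub_integralLog_le hRH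
  refine ⟨10 * C + 2, by positivity, fun x hx ↦ ?_⟩
  have habel := abs_sum_primes_mul_sub_integral_mul_le (fun k ↦ Real.log k ^ 2) zero_le_two hx
    (fun t ht ↦ hasDerivAt_inv_log_sq (by linarith [ht.1]))
    (continuousOn_neg_two_div_mul_log_cube.mono fun t ht ↦ one_lt_two.trans_le ht.1)
    (fun t ht ↦ hasDerivAt_integralLog (by linarith [ht.1]))
    (Real.continuousOn_log.mono fun t ht ↦ (two_pos.trans_le ht.1).ne')
    ((intervalIntegral.intervalIntegrable_rpow' (by norm_num)).const_mul (2 * C))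
    (fun t ht ↦ abs_neg_two_div_mul_log_cube_mul_le (by linarith [ht.1]) (herror t ht.1))
  have hmain : ∫ t in (2 : ℝ)..x, (Real.log t ^ 2)⁻¹ * Real.log t = logIntegral x :=
    intervalIntegral.integral_congr fun t ht ↦ by
      rw [uIcc_of_le hx] at ht
      have := Real.log_pos (by linarith [ht.1] : 1 < t)
      field_simp
  rw [sum_primes_Ioc_two_inv_log_sq_mul_log_sq hx, hmain, intervalIntegral.integral_const_mul,
    integral_rpow_neg_half, sub_right_comm] at habel
  have hupper := abs_inv_log_sq_mul_le (by linarith) (herror x hx)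
  have hlower := abs_inv_log_sq_mul_le one_lt_two (herror 2 le_rfl)
  have hlog := half_le_log hx
  have hmono : C * √2 * Real.log 2 ≤ C * √x * Real.log x := by
    have := Real.log_nonneg one_le_two
    gcongr
  have hsqrt : √x ≤ 2 * (√x * Real.log x) := by nlinarith [Real.sqrt_nonneg x]
  have hone : 1 ≤ √x := Real.one_le_sqrt.2 (by linarith)
  have hshift := abs_sub_abs_le_abs_sub (π ⌊x⌋₊ - logIntegral x) 1
  rw [abs_one] at hshift
  nlinarith [mul_le_mul_of_nonneg_left hsqrt hC.le, mul_nonneg hC.le (Real.sqrt_nonneg 2)]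

end PrimeCounting

section SumPrimes

variable {t y : ℝ}

lemma sum_Icc_one_rpow_neg_le {s : ℝ} (hs0 : 0 ≤ s) (hs1 : s < 1) (N : ℕ) :
    ∑ k ∈ Finset.Icc 1 N, (k : ℝ) ^ (-s) ≤ (N : ℝ) ^ (1 - s) / (1 - s) := by
  have hs : 0 < 1 - s := by linarith
  induction N with
  | zero => simp [Real.zero_rpow hs.ne']
  | succ N ih =>
    have hN : (0 : ℝ) < N + 1 := by positivity
    have hbernoulli : (N : ℝ) ^ (1 - s) ≤
        (N + 1 : ℝ) ^ (1 - s) - (1 - s) * (N + 1 : ℝ) ^ (-s) := by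
      calc (N : ℝ) ^ (1 - s)
          = (N + 1 : ℝ) ^ (1 - s) * (1 + -(N + 1 : ℝ)⁻¹) ^ (1 - s) := by
            rw [← Real.mul_rpow hN.le (by field_simp; simp)]
            field_simp
            simp
        _ ≤ (N + 1 : ℝ) ^ (1 - s) * (1 + (1 - s) * -(N + 1 : ℝ)⁻¹) := by
            gcongr
            refine rpow_one_add_le_one_add_mul_self ?_ hs.le (by linarith)
            exact neg_le_neg (inv_le_one_of_one_le₀ (by linarith [N.cast_nonneg (α := ℝ)]))
        _ = (N + 1 : ℝ) ^ (1 - s) - (1 - s) * (N + 1 : ℝ) ^ (-s) := by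
            rw [sub_eq_add_neg 1 s, Real.rpow_add hN, Real.rpow_one]
            field_simp
            ring
    rw [le_div_iff₀ hs] at ih
    rw [Finset.sum_Icc_succ_top (by lia), le_div_iff₀ hs, add_mul]
    push_cast
    linarith

lemma abs_sum_primes_log_le (ht : 0 ≤ t) : |∑ p ∈ Nat.primesLE ⌊t⌋₊, Real.log p| ≤ 2 * t := by
  rw [← Chebyshev.theta_eq_sum_primesLE, abs_of_nonneg (Chebyshev.theta_nonneg t)]
  exact (Chebyshev.theta_le_log4_mul_x ht).trans
    (mul_le_mul_of_nonneg_right log_four_le_two ht)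

lemma rpow_neg_half_mul_self (ht : 0 < t) : t ^ (-(1 / 2) : ℝ) * t = √t := by
  rw [← Real.rpow_add_one ht.ne', Real.sqrt_eq_rpow]
  norm_num

lemma sum_primes_rpow_neg_half_mul_log_le (hy : 1 ≤ y) :
    ∑ p ∈ Nat.primesLE ⌊y⌋₊, (p : ℝ) ^ (-(1 / 2) : ℝ) * Real.log p ≤ 4 * √y := by
  have habel := abs_sum_primes_mul_sub_integral_mul_le (M := fun _ ↦ 0) (w := fun _ ↦ 0)
    (f := fun t ↦ t ^ (-(1 / 2) : ℝ)) (G := fun t ↦ t ^ (-(1 / 2) : ℝ))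
    (fun k ↦ Real.log k) zero_le_one hy
    (fun t ht ↦ Real.hasDerivAt_rpow_const (Or.inl (by linarith [ht.1])))
    (fun t ht ↦ ((Real.continuousAt_rpow_const t _
      (Or.inl (by linarith [ht.1]))).const_mul _).continuousWithinAt)
    (fun t _ ↦ hasDerivAt_const t 0) continuousOn_const
    (intervalIntegral.intervalIntegrable_rpow' (by norm_num)) (fun t ht ↦ ?_)
  · rw [Nat.floor_one, ← Nat.primesLE_eq_filter_Ioc_one, Nat.primesLE_one,
      integral_rpow_neg_half] at habel
    simp only [mul_zero, intervalIntegral.integral_zero, sub_zero, Finset.sum_empty, abs_zero,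
      add_zero, Real.sqrt_one] at habel
    have hboundary : |y ^ (-(1 / 2) : ℝ)| * |∑ p ∈ Nat.primesLE ⌊y⌋₊, Real.log p| ≤ 2 * √y := by
      rw [abs_of_nonneg (by positivity), ← rpow_neg_half_mul_self (by linarith), mul_left_comm]
      gcongr
      exact abs_sum_primes_log_le (by linarith)
    linarith [le_abs_self (∑ p ∈ Nat.primesLE ⌊y⌋₊, (p : ℝ) ^ (-(1 / 2) : ℝ) * Real.log p)]
  · have ht0 : 0 < t := by linarith [ht.1]
    rw [sub_zero, abs_mul, abs_neg, abs_of_pos one_half_pos, abs_of_pos (by positivity)]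
    calc 1 / 2 * t ^ (-(1 / 2) - 1 : ℝ) * |∑ p ∈ Nat.primesLE ⌊t⌋₊, Real.log p|
        ≤ 1 / 2 * t ^ (-(1 / 2) - 1 : ℝ) * (2 * t) := by
          gcongr
          exact abs_sum_primes_log_le ht0.le
      _ = t ^ (-(1 / 2) : ℝ) := by
          rw [Real.rpow_sub_one ht0.ne']
          field_simp

lemma log_mul_rpow_neg_half_le {k : ℝ} (hy : 0 < y) (hk : 0 < k) :
    Real.log y * k ^ (-(1 / 2) : ℝ) ≤
      k ^ (-(1 / 2) : ℝ) * Real.log k + 4 * y ^ (1 / 4 : ℝ) * k ^ (-(3 / 4) : ℝ) := by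
  have hlog : Real.log (y / k) ≤ (y / k) ^ (1 / 4 : ℝ) / (1 / 4) :=
    Real.log_le_rpow_div (by positivity) (by norm_num)
  rw [Real.log_div hy.ne' hk.ne', Real.div_rpow hy.le hk.le] at hlog
  have hpow : k ^ (-(3 / 4) : ℝ) = k ^ (-(1 / 2) : ℝ) / k ^ (1 / 4 : ℝ) := by
    rw [← Real.rpow_sub hk]
    norm_num
  calc Real.log y * k ^ (-(1 / 2) : ℝ)
      ≤ (Real.log k + 4 * (y ^ (1 / 4 : ℝ) / k ^ (1 / 4 : ℝ))) * k ^ (-(1 / 2) : ℝ) := by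
        gcongr
        linarith
    _ = k ^ (-(1 / 2) : ℝ) * Real.log k + 4 * y ^ (1 / 4 : ℝ) * k ^ (-(3 / 4) : ℝ) := by
        rw [hpow]
        ring

lemma sum_primes_rpow_neg_three_quarters_le (hy : 0 ≤ y) :
    ∑ p ∈ Nat.primesLE ⌊y⌋₊, (p : ℝ) ^ (-(3 / 4) : ℝ) ≤ 4 * y ^ (1 / 4 : ℝ) := by
  rw [Nat.primesLE_eq_filter_Icc_one]
  calc ∑ p ∈ Finset.Icc 1 ⌊y⌋₊ with p.Prime, (p : ℝ) ^ (-(3 / 4) : ℝ)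
      ≤ ∑ k ∈ Finset.Icc 1 ⌊y⌋₊, (k : ℝ) ^ (-(3 / 4) : ℝ) :=
        Finset.sum_le_sum_of_subset_of_nonneg (Finset.filter_subset _ _) fun _ _ _ ↦ by positivity
    _ ≤ (⌊y⌋₊ : ℝ) ^ (1 - 3 / 4 : ℝ) / (1 - 3 / 4) :=
        sum_Icc_one_rpow_neg_le (by norm_num) (by norm_num) _
    _ = 4 * (⌊y⌋₊ : ℝ) ^ (1 / 4 : ℝ) := by
        norm_num
        ring
    _ ≤ 4 * y ^ (1 / 4 : ℝ) := by
        gcongr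
        exact Nat.floor_le hy

-- Replacing `log y` by `log p` loses `log (y / p) ≪ (y / p) ^ (1 / 4)`, whose sum is still `≪ √y`.
lemma log_mul_sum_primes_rpow_neg_half_le (hy : 1 ≤ y) :
    Real.log y * ∑ p ∈ Nat.primesLE ⌊y⌋₊, (p : ℝ) ^ (-(1 / 2) : ℝ) ≤ 20 * √y := by
  have hy0 : 0 < y := by linarith
  calc Real.log y * ∑ p ∈ Nat.primesLE ⌊y⌋₊, (p : ℝ) ^ (-(1 / 2) : ℝ)
      ≤ ∑ p ∈ Nat.primesLE ⌊y⌋₊, (p : ℝ) ^ (-(1 / 2) : ℝ) * Real.log p +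
          4 * y ^ (1 / 4 : ℝ) * ∑ p ∈ Nat.primesLE ⌊y⌋₊, (p : ℝ) ^ (-(3 / 4) : ℝ) := by
        rw [Finset.mul_sum, Finset.mul_sum, ← Finset.sum_add_distrib]
        exact Finset.sum_le_sum fun p hp ↦
          log_mul_rpow_neg_half_le hy0 (mod_cast (Nat.prime_of_mem_primesLE hp).pos)
    _ ≤ 4 * √y + 4 * y ^ (1 / 4 : ℝ) * (4 * y ^ (1 / 4 : ℝ)) := by
        gcongr
        · exact sum_primes_rpow_neg_half_mul_log_le hy
        · exact sum_primes_rpow_neg_three_quarters_le hy0.le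
    _ = 4 * √y + 16 * (y ^ (1 / 4 : ℝ) * y ^ (1 / 4 : ℝ)) := by ring
    _ = 20 * √y := by
        rw [← Real.rpow_add hy0, Real.sqrt_eq_rpow]
        norm_num
        ring

end SumPrimes

section PrimePairs

open MeasureTheory Set
open scoped Nat.Prime

lemma card_primes_Ioc {m n : ℕ} (hmn : m ≤ n) :
    ((Finset.Ioc m n).filter Nat.Prime).card = (π n - π m : ℝ) := by
  rw [eq_sub_iff_add_eq', ← Nat.primesLE_card_eq_primeCounting,
    ← Nat.primesLE_card_eq_primeCounting, Nat.primesLE_eq_filter_Ioc_zero,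
    Nat.primesLE_eq_filter_Ioc_zero, ← Finset.Ioc_union_Ioc_eq_Ioc m.zero_le hmn,
    Finset.filter_union, Finset.card_union_of_disjoint (Finset.disjoint_filter_filter
      (Finset.Ioc_disjoint_Ioc_of_le le_rfl)), Nat.cast_add]

lemma NALG_eq_sum_card {r x : ℝ} (hr : 0 ≤ r) (hx : 0 ≤ x) :
    NALG r x = ∑ p ∈ Finset.Ioc ⌊√x / r⌋₊ ⌊√x⌋₊ with p.Prime,
      ((Finset.Ioc ⌊x / (r * p)⌋₊ ⌊x / p⌋₊).filter Nat.Prime).card := by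
  rw [NALG, ← Finset.card_sigma, ← Finset.card_map (Equiv.sigmaEquivProd ℕ ℕ).toEmbedding]
  refine Nat.subtype_card _ fun ⟨p, q⟩ ↦ ?_
  have hmem : (p, q) = Equiv.sigmaEquivProd ℕ ℕ ⟨p, q⟩ := rfl
  rw [hmem, ← Equiv.coe_toEmbedding, Finset.mem_map', Finset.mem_sigma, Finset.mem_filter,
    Finset.mem_filter, Finset.mem_Ioc, Finset.mem_Ioc, Nat.floor_lt (by positivity),
    Nat.floor_lt (by positivity), Nat.le_floor_iff (by positivity),
    Nat.le_floor_iff (by positivity)]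
  simp only [Equiv.coe_toEmbedding, Equiv.sigmaEquivProd_apply]
  tauto

lemma NALG_eq_sum_primeCounting {r x : ℝ} (hr : 1 ≤ r) (hx : 0 ≤ x) :
    (NALG r x : ℝ) = ∑ p ∈ Finset.Ioc ⌊√x / r⌋₊ ⌊√x⌋₊ with p.Prime,
      (π ⌊x / p⌋₊ - π ⌊x / (r * p)⌋₊ : ℝ) := by
  rw [NALG_eq_sum_card (by linarith) hx, Nat.cast_sum]
  refine Finset.sum_congr rfl fun p hp ↦ card_primes_Ioc (Nat.floor_le_floor ?_)
  have hp0 : (0 : ℝ) < p := mod_cast (Finset.mem_filter.1 hp).2.pos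
  gcongr
  exact le_mul_of_one_le_left hp0.le hr

/-- The expected number of primes `q` with `y ^ 2 / (r * s) < q ≤ y ^ 2 / s`. Throughout, `y` stands
for the `√x` of the theorem and `s` for the smaller prime factor. -/
noncomputable def logIntegralGap (y r s : ℝ) : ℝ :=
  logIntegral (y ^ 2 / s) - logIntegral (y ^ 2 / (r * s))

/-- The main term of `NALG r (y ^ 2)`: the count of pairs in which both prime factors are
distributed with density `1 / log`. -/
noncomputable def primePairIntegral (y r : ℝ) : ℝ :=
  ∫ s in (y / r)..y, logIntegralGap y r s * (Real.log s)⁻¹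

/-- The derivative of `logIntegralGap y r` at `s`. -/
noncomputable def logIntegralGapDeriv (y r s : ℝ) : ℝ :=
  y ^ 2 / s ^ 2 * ((r * Real.log (y ^ 2 / (r * s)))⁻¹ - (Real.log (y ^ 2 / s))⁻¹)

variable {K r s y : ℝ}

lemma pos_of_two_le_div (hr : 0 < r) (hyr : 2 ≤ y / r) : 0 < y :=
  (div_pos_iff_of_pos_right hr).1 (by linarith)

lemma div_le_sq_div_mul (hr : 0 < r) (hs : 0 < s) (hsy : s ≤ y) : y / r ≤ y ^ 2 / (r * s) := by
  rw [← div_div, div_right_comm]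
  gcongr
  rw [le_div_iff₀ hs]
  nlinarith

lemma sq_div_mul_le_sq_div (hr : 1 ≤ r) (hs : 0 < s) : y ^ 2 / (r * s) ≤ y ^ 2 / s := by
  gcongr
  exact le_mul_of_one_le_left hs.le hr

lemma sq_div_le_mul (hr : 0 < r) (hy : 0 < y) (hs : y / r ≤ s) : y ^ 2 / s ≤ r * y := by
  have hs0 : 0 < s := (by positivity : 0 < y / r).trans_le hs
  rw [div_le_iff₀ hr] at hs
  rw [div_le_iff₀ hs0]
  nlinarith

lemma le_sq_div (hs : 0 < s) (hsy : s ≤ y) : y ≤ y ^ 2 / s := by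
  rw [le_div_iff₀ hs]
  nlinarith

lemma log_le_mul_log_div (hr : 1 < r) (hyr : 2 ≤ y / r) :
    Real.log y ≤ (1 + 2 * Real.log r) * Real.log (y / r) := by
  have hr0 : 0 < r := by linarith
  have hy := pos_of_two_le_div hr0 hyr
  have hsplit := Real.log_div hy.ne' hr0.ne'
  nlinarith [half_le_log hyr, Real.log_pos hr]

lemma one_add_two_mul_log_le (hr : 0 < r) : 1 + 2 * Real.log r ≤ 2 * r := by
  linarith [Real.log_le_sub_one_of_pos hr]

lemma one_add_two_mul_log_le_sqrt (hr : 0 < r) : 1 + 2 * Real.log r ≤ 4 * √r := by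
  have hlog := Real.log_le_sub_one_of_pos (Real.sqrt_pos.2 hr)
  rw [Real.log_sqrt hr.le] at hlog
  linarith

lemma two_le_sq_div_mul (hr : 1 < r) (hyr : 2 ≤ y / r) (hs : s ∈ Icc (y / r) y) :
    2 ≤ y ^ 2 / (r * s) :=
  hyr.trans (div_le_sq_div_mul (by linarith) (by linarith [hs.1]) hs.2)

lemma two_le_sq_div (hr : 1 < r) (hyr : 2 ≤ y / r) (hs : s ∈ Icc (y / r) y) : 2 ≤ y ^ 2 / s :=
  (two_le_sq_div_mul hr hyr hs).trans (sq_div_mul_le_sq_div hr.le (by linarith [hs.1]))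

lemma logIntegralGap_le_div_log (hr : 1 < r) (hyr : 2 ≤ y / r) (hs : s ∈ Icc (y / r) y) :
    logIntegralGap y r s ≤ (y ^ 2 / s - y ^ 2 / (r * s)) / Real.log (y ^ 2 / (r * s)) :=
  logIntegral_sub_le (by linarith [two_le_sq_div_mul hr hyr hs])
    (sq_div_mul_le_sq_div hr.le (by linarith [hs.1]))

lemma div_log_le_logIntegralGap (hr : 1 < r) (hyr : 2 ≤ y / r) (hs : s ∈ Icc (y / r) y) :
    (y ^ 2 / s - y ^ 2 / (r * s)) / Real.log (y ^ 2 / s) ≤ logIntegralGap y r s :=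
  le_logIntegral_sub (by linarith [two_le_sq_div_mul hr hyr hs])
    (sq_div_mul_le_sq_div hr.le (by linarith [hs.1]))

lemma logIntegralGap_nonneg (hr : 1 < r) (hyr : 2 ≤ y / r) (hs : s ∈ Icc (y / r) y) :
    0 ≤ logIntegralGap y r s := by
  refine le_trans ?_ (div_log_le_logIntegralGap hr hyr hs)
  exact div_nonneg (sub_nonneg.2 (sq_div_mul_le_sq_div hr.le (by linarith [hs.1])))
    (Real.log_nonneg (by linarith [two_le_sq_div hr hyr hs]))

lemma logIntegralGap_le_sq_div (hr : 1 < r) (hyr : 2 ≤ y / r) (hs : s ∈ Icc (y / r) y) :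
    logIntegralGap y r s ≤ y ^ 2 / s / Real.log (y ^ 2 / (r * s)) := by
  have hgap := two_le_sq_div_mul hr hyr hs
  refine (logIntegralGap_le_div_log hr hyr hs).trans ?_
  exact div_le_div_of_nonneg_right (by linarith) (Real.log_nonneg (by linarith))

lemma hasDerivAt_logIntegralGap (hr : 1 < r) (hyr : 2 ≤ y / r) (hs : s ∈ Icc (y / r) y) :
    HasDerivAt (logIntegralGap y r) (logIntegralGapDeriv y r s) s := by
  have hs0 : s ≠ 0 := by linarith [hs.1]
  have hr0 : r ≠ 0 := by linarith
  have hupper : HasDerivAt (fun s ↦ y ^ 2 / s) (-y ^ 2 / s ^ 2) s :=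
    ((hasDerivAt_const s (y ^ 2)).div (hasDerivAt_id s) hs0).congr_deriv (by simp)
  have hlower : HasDerivAt (fun s ↦ y ^ 2 / (r * s)) (-(y ^ 2 * r) / (r * s) ^ 2) s :=
    ((hasDerivAt_const s (y ^ 2)).div ((hasDerivAt_id s).const_mul r)
      (mul_ne_zero hr0 hs0)).congr_deriv (by simp)
  have hupper' := (hasDerivAt_logIntegral (by linarith [two_le_sq_div hr hyr hs])).comp s hupper
  have hlower' := (hasDerivAt_logIntegral (by linarith [two_le_sq_div_mul hr hyr hs])).comp s hlower
  refine (hupper'.sub hlower').congr_deriv ?_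
  rw [logIntegralGapDeriv, mul_inv]
  field_simp
  ring

lemma continuousAt_logIntegralGapDeriv (hr : 1 < r) (hyr : 2 ≤ y / r) (hs : s ∈ Icc (y / r) y) :
    ContinuousAt (logIntegralGapDeriv y r) s := by
  have hs0 : s ≠ 0 := by linarith [hs.1]
  have hr0 : r ≠ 0 := by linarith
  have hupper := two_le_sq_div hr hyr hs
  have hlower := two_le_sq_div_mul hr hyr hs
  have hlog := (Real.log_pos (by linarith : 1 < y ^ 2 / s)).ne'
  have hlog' := (Real.log_pos (by linarith : 1 < y ^ 2 / (r * s))).ne'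
  have hquot : ContinuousAt (fun s ↦ y ^ 2 / s) s := by fun_prop (disch := assumption)
  have hquot' : ContinuousAt (fun s ↦ y ^ 2 / (r * s)) s := by
    fun_prop (disch := exact mul_ne_zero hr0 hs0)
  exact (by fun_prop (disch := simpa) : ContinuousAt (fun s ↦ y ^ 2 / s ^ 2) s).mul
    (((continuousAt_const.mul (hquot'.log (by linarith))).inv₀ (mul_ne_zero hr0 hlog')).sub
      ((hquot.log (by linarith)).inv₀ hlog))

lemma abs_logIntegralGapDeriv_le (hr : 1 < r) (hyr : 2 ≤ y / r) (hs : s ∈ Icc (y / r) y) :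
    |logIntegralGapDeriv y r s| ≤ 2 * (y ^ 2 / s ^ 2) * (Real.log s)⁻¹ := by
  have hs0 : 0 < s := by linarith [hs.1]
  have hr0 : 0 < r := by linarith
  have hlog : 0 < Real.log s := Real.log_pos (by linarith [hs.1])
  have hupper : Real.log s ≤ Real.log (y ^ 2 / s) :=
    Real.log_le_log hs0 (hs.2.trans (le_sq_div hs0 hs.2))
  have hlower : Real.log s ≤ 2 * (r * Real.log (y ^ 2 / (r * s))) :=
    calc Real.log s ≤ Real.log y := Real.log_le_log hs0 hs.2
      _ ≤ (1 + 2 * Real.log r) * Real.log (y / r) := log_le_mul_log_div hr hyr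
      _ ≤ 2 * r * Real.log (y ^ 2 / (r * s)) :=
          mul_le_mul (one_add_two_mul_log_le hr0)
            (Real.log_le_log (by linarith) (div_le_sq_div_mul hr0 hs0 hs.2))
            (Real.log_nonneg (by linarith)) (by linarith)
      _ = 2 * (r * Real.log (y ^ 2 / (r * s))) := by ring
  have hdiff : |(r * Real.log (y ^ 2 / (r * s)))⁻¹ - (Real.log (y ^ 2 / s))⁻¹| ≤
      2 * (Real.log s)⁻¹ := by
    refine abs_sub_le_of_nonneg_of_le (inv_nonneg.2 (by linarith)) ?_
      (inv_nonneg.2 (by linarith)) ?_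
    · rw [← div_eq_mul_inv, inv_le_comm₀ (by linarith) (by positivity), inv_div]
      linarith
    · linarith [inv_anti₀ hlog hupper, inv_pos.2 hlog]
  rw [logIntegralGapDeriv, abs_mul, abs_of_nonneg (by positivity)]
  calc y ^ 2 / s ^ 2 * |(r * Real.log (y ^ 2 / (r * s)))⁻¹ - (Real.log (y ^ 2 / s))⁻¹|
      ≤ y ^ 2 / s ^ 2 * (2 * (Real.log s)⁻¹) := by gcongr
    _ = 2 * (y ^ 2 / s ^ 2) * (Real.log s)⁻¹ := by ring

lemma le_logIntegralGap_mul_inv_log (hr : 1 < r) (hyr : 2 ≤ y / r) (hs : s ∈ Icc (y / r) y) :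
    y ^ 2 * (1 - 1 / r) / (Real.log y + Real.log r) ^ 2 * s⁻¹ ≤
      logIntegralGap y r s * (Real.log s)⁻¹ := by
  have hr0 : 0 < r := by linarith
  have hs0 : 0 < s := by linarith [hs.1]
  have hy := pos_of_two_le_div hr0 hyr
  have hlogs : 0 < Real.log s := Real.log_pos (by linarith [hs.1])
  have hlogsy := Real.log_le_log hs0 hs.2
  have hsub := sub_nonneg.2 (sq_div_mul_le_sq_div (y := y) hr.le hs0)
  have hupper : Real.log (y ^ 2 / s) ≤ Real.log y + Real.log r := by
    rw [add_comm, ← Real.log_mul hr0.ne' hy.ne']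
    exact Real.log_le_log (by positivity) (sq_div_le_mul hr0 hy hs.1)
  have hlogq : 0 < Real.log (y ^ 2 / s) := Real.log_pos (by linarith [two_le_sq_div hr hyr hs])
  have hlogy : 0 < Real.log y + Real.log r := hlogq.trans_le hupper
  calc y ^ 2 * (1 - 1 / r) / (Real.log y + Real.log r) ^ 2 * s⁻¹
      = (y ^ 2 / s - y ^ 2 / (r * s)) / (Real.log y + Real.log r) *
          (Real.log y + Real.log r)⁻¹ := by field_simp
    _ ≤ (y ^ 2 / s - y ^ 2 / (r * s)) / Real.log (y ^ 2 / s) * (Real.log s)⁻¹ := by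
        gcongr
        linarith [Real.log_pos hr]
    _ ≤ logIntegralGap y r s * (Real.log s)⁻¹ := by
        gcongr
        exact div_log_le_logIntegralGap hr hyr hs

lemma logIntegralGap_mul_inv_log_le (hr : 1 < r) (hyr : 2 ≤ y / r) (hs : s ∈ Icc (y / r) y) :
    logIntegralGap y r s * (Real.log s)⁻¹ ≤
      y ^ 2 * (1 - 1 / r) / (Real.log y - Real.log r) ^ 2 * s⁻¹ := by
  have hr0 : 0 < r := by linarith
  have hs0 : 0 < s := by linarith [hs.1]
  have hlog : 0 < Real.log (y / r) := Real.log_pos (by linarith)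
  have hlogs : Real.log (y / r) ≤ Real.log s := Real.log_le_log (by linarith) hs.1
  have hlogs0 : 0 < Real.log s := hlog.trans_le hlogs
  have hlogq : Real.log (y / r) ≤ Real.log (y ^ 2 / (r * s)) :=
    Real.log_le_log (by linarith) (div_le_sq_div_mul hr0 hs0 hs.2)
  have hsub := sub_nonneg.2 (sq_div_mul_le_sq_div (y := y) hr.le hs0)
  rw [← Real.log_div (pos_of_two_le_div hr0 hyr).ne' hr0.ne']
  calc logIntegralGap y r s * (Real.log s)⁻¹
      ≤ (y ^ 2 / s - y ^ 2 / (r * s)) / Real.log (y ^ 2 / (r * s)) * (Real.log s)⁻¹ := by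
        gcongr
        exact logIntegralGap_le_div_log hr hyr hs
    _ ≤ (y ^ 2 / s - y ^ 2 / (r * s)) / Real.log (y / r) * (Real.log (y / r))⁻¹ := by gcongr
    _ = y ^ 2 * (1 - 1 / r) / Real.log (y / r) ^ 2 * s⁻¹ := by ring

lemma abs_primeCounting_sub_sub_logIntegralGap_le (hr : 1 < r) (hyr : 2 ≤ y / r)
    (hs : s ∈ Icc (y / r) y) (hK : 0 ≤ K)
    (hpi : ∀ x : ℝ, 2 ≤ x → |π ⌊x⌋₊ - logIntegral x| ≤ K * √x * Real.log x) :
    |π ⌊y ^ 2 / s⌋₊ - π ⌊y ^ 2 / (r * s)⌋₊ - logIntegralGap y r s| ≤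
      4 * K * y * Real.log y * s ^ (-(1 / 2) : ℝ) := by
  have hs0 : 0 < s := by linarith [hs.1]
  have hy : 0 < y := by linarith [hs.2]
  have hsqrt : √(y ^ 2 / s) = y * s ^ (-(1 / 2) : ℝ) := by
    rw [Real.sqrt_div (sq_nonneg y), Real.sqrt_sq hy.le, Real.rpow_neg hs0.le, Real.sqrt_eq_rpow,
      div_eq_mul_inv]
  have hlog : Real.log (y ^ 2 / s) ≤ 2 * Real.log y := by
    rw [Real.log_div (by positivity) hs0.ne', Real.log_pow]
    have := Real.log_nonneg (by linarith [hs.1] : 1 ≤ s)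
    push_cast
    linarith
  have hbound : ∀ z, 2 ≤ z → z ≤ y ^ 2 / s →
      |π ⌊z⌋₊ - logIntegral z| ≤ K * (y * s ^ (-(1 / 2) : ℝ)) * (2 * Real.log y) := by
    intro z hz hzs
    refine (hpi z hz).trans ?_
    rw [← hsqrt]
    have := Real.log_nonneg (by linarith : 1 ≤ z)
    gcongr
    exact (Real.log_le_log (by linarith) hzs).trans hlog
  calc |π ⌊y ^ 2 / s⌋₊ - π ⌊y ^ 2 / (r * s)⌋₊ - logIntegralGap y r s|
      = |(π ⌊y ^ 2 / s⌋₊ - logIntegral (y ^ 2 / s)) -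
          (π ⌊y ^ 2 / (r * s)⌋₊ - logIntegral (y ^ 2 / (r * s)))| := by
        rw [logIntegralGap, sub_sub_sub_comm]
    _ ≤ K * (y * s ^ (-(1 / 2) : ℝ)) * (2 * Real.log y) +
          K * (y * s ^ (-(1 / 2) : ℝ)) * (2 * Real.log y) :=
        (abs_sub _ _).trans (add_le_add (hbound _ (two_le_sq_div hr hyr hs) le_rfl)
          (hbound _ (two_le_sq_div_mul hr hyr hs) (sq_div_mul_le_sq_div hr.le hs0)))
    _ = 4 * K * y * Real.log y * s ^ (-(1 / 2) : ℝ) := by ring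

lemma abs_logIntegralGapDeriv_mul_le (hr : 1 < r) (hyr : 2 ≤ y / r) (hs : s ∈ Icc (y / r) y)
    {e : ℝ} (he : |e| ≤ K * √s * Real.log s) :
    |logIntegralGapDeriv y r s| * |e| ≤ 2 * K * y ^ 2 * s ^ (-(3 / 2) : ℝ) := by
  have hs0 : 0 < s := by linarith [hs.1]
  have hlog : 0 < Real.log s := Real.log_pos (by linarith [hs.1])
  have hpow : √s / s ^ 2 = s ^ (-(3 / 2) : ℝ) := by
    rw [Real.sqrt_eq_rpow, ← Real.rpow_two, ← Real.rpow_sub hs0]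
    norm_num
  calc |logIntegralGapDeriv y r s| * |e|
      ≤ 2 * (y ^ 2 / s ^ 2) * (Real.log s)⁻¹ * (K * √s * Real.log s) :=
        mul_le_mul (abs_logIntegralGapDeriv_le hr hyr hs) he (abs_nonneg _) (by positivity)
    _ = 2 * K * y ^ 2 * (√s / s ^ 2) := by field_simp
    _ = 2 * K * y ^ 2 * s ^ (-(3 / 2) : ℝ) := by rw [hpow]

lemma div_le_self_of_two_le_div (hr : 1 < r) (hyr : 2 ≤ y / r) : y / r ≤ y :=
  div_le_self (pos_of_two_le_div (by linarith) hyr).le hr.le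

lemma integral_const_mul_inv_eq_mul_log (hr : 0 < r) (hy : 0 < y) (c : ℝ) :
    ∫ s in (y / r)..y, c * s⁻¹ = c * Real.log r := by
  rw [intervalIntegral.integral_const_mul, integral_inv_of_pos (by positivity) hy,
    div_div_cancel₀ hy.ne']

lemma intervalIntegrable_const_mul_inv (hr : 0 < r) (hy : 0 < y) (c : ℝ) :
    IntervalIntegrable (fun s ↦ c * s⁻¹) volume (y / r) y :=
  (intervalIntegral.intervalIntegrable_inv
    (fun _ hs h0 ↦ notMem_uIcc_of_lt (div_pos hy hr) hy (h0 ▸ hs)) continuousOn_id).const_mul c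

lemma intervalIntegrable_logIntegralGap_mul_inv_log (hr : 1 < r) (hyr : 2 ≤ y / r) :
    IntervalIntegrable (fun s ↦ logIntegralGap y r s * (Real.log s)⁻¹) volume (y / r) y := by
  refine ContinuousOn.intervalIntegrable fun s hs ↦ ContinuousAt.continuousWithinAt ?_
  rw [uIcc_of_le (div_le_self_of_two_le_div hr hyr)] at hs
  exact (hasDerivAt_logIntegralGap hr hyr hs).continuousAt.mul
    (continuousAt_inv_log (by linarith [hs.1]))

lemma le_primePairIntegral (hr : 1 < r) (hyr : 2 ≤ y / r) :
    y ^ 2 * (1 - 1 / r) / (Real.log y + Real.log r) ^ 2 * Real.log r ≤ primePairIntegral y r := by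
  have hr0 : 0 < r := by linarith
  have hy := pos_of_two_le_div hr0 hyr
  rw [← integral_const_mul_inv_eq_mul_log hr0 hy]
  exact intervalIntegral.integral_mono_on (div_le_self_of_two_le_div hr hyr)
    (intervalIntegrable_const_mul_inv hr0 hy _)
    (intervalIntegrable_logIntegralGap_mul_inv_log hr hyr)
    fun s hs ↦ le_logIntegralGap_mul_inv_log hr hyr hs

lemma primePairIntegral_le (hr : 1 < r) (hyr : 2 ≤ y / r) :
    primePairIntegral y r ≤ y ^ 2 * (1 - 1 / r) / (Real.log y - Real.log r) ^ 2 * Real.log r := by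
  have hr0 : 0 < r := by linarith
  have hy := pos_of_two_le_div hr0 hyr
  rw [← integral_const_mul_inv_eq_mul_log hr0 hy]
  exact intervalIntegral.integral_mono_on (div_le_self_of_two_le_div hr hyr)
    (intervalIntegrable_logIntegralGap_mul_inv_log hr hyr)
    (intervalIntegrable_const_mul_inv hr0 hy _)
    fun s hs ↦ logIntegralGap_mul_inv_log_le hr hyr hs

lemma sq_div_sqrt_div (hr : 0 < r) (hy : 0 < y) : y ^ 2 / √(y / r) = y * √y * √r := by
  rw [Real.sqrt_div hy.le]
  field_simp
  rw [Real.sq_sqrt hy.le]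

lemma mul_mul_sqrt_div (hr : 0 < r) (hy : 0 < y) : y * r * √(y / r) = y * √y * √r := by
  rw [Real.sqrt_div hy.le]
  field_simp
  rw [Real.sq_sqrt hr.le]

lemma integral_rpow_neg_three_halves_le (hr : 0 < r) (hy : 0 < y) :
    ∫ t in (y / r)..y, t ^ (-(3 / 2) : ℝ) ≤ 2 / √(y / r) := by
  have hexp : (-(3 / 2) + 1 : ℝ) = -(1 / 2) := by norm_num
  rw [integral_rpow (Or.inr ⟨by norm_num, notMem_uIcc_of_lt (div_pos hy hr) hy⟩), hexp,
    Real.rpow_neg (by positivity : 0 ≤ y / r), ← Real.sqrt_eq_rpow]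
  have := Real.rpow_nonneg hy.le (-(1 / 2))
  have hinv : 2 / √(y / r) = 2 * (√(y / r))⁻¹ := div_eq_mul_inv _ _
  linarith

lemma abs_logIntegralGap_self_mul_le {e : ℝ} (hK : 0 ≤ K) (hr : 1 < r) (hyr : 2 ≤ y / r)
    (he : |e| ≤ K * √y * Real.log y) :
    |logIntegralGap y r y| * |e| ≤ 4 * K * (y * √y * √r) := by
  have hr0 : 0 < r := by linarith
  have hy := pos_of_two_le_div hr0 hyr
  have hlog : 0 < Real.log (y / r) := Real.log_pos (by linarith)
  have hmem : y ∈ Icc (y / r) y := ⟨div_le_self_of_two_le_div hr hyr, le_rfl⟩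
  have hgap : logIntegralGap y r y ≤ y / Real.log (y / r) := by
    convert logIntegralGap_le_sq_div hr hyr hmem using 2 <;> field_simp
  rw [abs_of_nonneg (logIntegralGap_nonneg hr hyr hmem)]
  calc logIntegralGap y r y * |e|
      ≤ y / Real.log (y / r) * (K * √y * Real.log y) :=
        mul_le_mul hgap he (abs_nonneg _) (by positivity)
    _ ≤ y / Real.log (y / r) * (K * √y * ((1 + 2 * Real.log r) * Real.log (y / r))) := by
        gcongr
        exact log_le_mul_log_div hr hyr
    _ = K * (y * √y) * (1 + 2 * Real.log r) := by field_simp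
    _ ≤ K * (y * √y) * (4 * √r) := by
        gcongr
        exact one_add_two_mul_log_le_sqrt hr0
    _ = 4 * K * (y * √y * √r) := by ring

lemma abs_logIntegralGap_div_mul_le {e : ℝ} (hK : 0 ≤ K) (hr : 1 < r) (hyr : 2 ≤ y / r)
    (he : |e| ≤ K * √(y / r) * Real.log (y / r)) :
    |logIntegralGap y r (y / r)| * |e| ≤ K * (y * √y * √r) := by
  have hr0 : 0 < r := by linarith
  have hy := pos_of_two_le_div hr0 hyr
  have hle := div_le_self_of_two_le_div hr hyr
  have hlog : 0 < Real.log y := Real.log_pos (by linarith)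
  have hmem : y / r ∈ Icc (y / r) y := ⟨le_rfl, hle⟩
  have hgap : logIntegralGap y r (y / r) ≤ y * r / Real.log y := by
    convert logIntegralGap_le_sq_div hr hyr hmem using 2 <;> field_simp
  rw [abs_of_nonneg (logIntegralGap_nonneg hr hyr hmem)]
  calc logIntegralGap y r (y / r) * |e|
      ≤ y * r / Real.log y * (K * √(y / r) * Real.log (y / r)) :=
        mul_le_mul hgap he (abs_nonneg _) (by positivity)
    _ ≤ y * r / Real.log y * (K * √(y / r) * Real.log y) := by gcongr
    _ = K * (y * r * √(y / r)) := by field_simp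
    _ = K * (y * √y * √r) := by rw [mul_mul_sqrt_div hr0 hy]

lemma abs_sum_logIntegralGap_sub_primePairIntegral_le (hK : 0 ≤ K)
    (hpi : ∀ x : ℝ, 2 ≤ x → |π ⌊x⌋₊ - logIntegral x| ≤ K * √x * Real.log x)
    (hr : 1 < r) (hyr : 2 ≤ y / r) :
    |∑ p ∈ Finset.Ioc ⌊y / r⌋₊ ⌊y⌋₊ with p.Prime, logIntegralGap y r p - primePairIntegral y r| ≤
      9 * K * (y * √y * √r) := by
  have hr0 : 0 < r := by linarith
  have hy := pos_of_two_le_div hr0 hyr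
  have hle := div_le_self_of_two_le_div hr hyr
  have hcount (t : ℝ) : ∑ _p ∈ Nat.primesLE ⌊t⌋₊, (1 : ℝ) = π ⌊t⌋₊ := by
    rw [Finset.sum_const, Nat.primesLE_card_eq_primeCounting, nsmul_one]
  have habel := abs_sum_primes_mul_sub_integral_mul_le (fun _ ↦ 1) (by linarith) hle
    (G := fun t ↦ 2 * K * y ^ 2 * t ^ (-(3 / 2) : ℝ))
    (fun s hs ↦ hasDerivAt_logIntegralGap hr hyr hs)
    (fun s hs ↦ (continuousAt_logIntegralGapDeriv hr hyr hs).continuousWithinAt)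
    (fun s hs ↦ hasDerivAt_logIntegral (by linarith [hs.1]))
    (fun s hs ↦ (continuousAt_inv_log (by linarith [hs.1])).continuousWithinAt)
    ((intervalIntegral.intervalIntegrable_rpow
      (Or.inr (notMem_uIcc_of_lt (div_pos hy hr0) hy))).const_mul _)
    fun s hs ↦ abs_logIntegralGapDeriv_mul_le hr hyr hs
      (by rw [hcount]; exact hpi s (by linarith [hs.1]))
  simp only [mul_one, hcount] at habel
  have htail : ∫ t in (y / r)..y, 2 * K * y ^ 2 * t ^ (-(3 / 2) : ℝ) ≤ 4 * K * (y * √y * √r) := by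
    rw [intervalIntegral.integral_const_mul, ← sq_div_sqrt_div hr0 hy]
    calc 2 * K * y ^ 2 * ∫ t in (y / r)..y, t ^ (-(3 / 2) : ℝ)
        ≤ 2 * K * y ^ 2 * (2 / √(y / r)) := by
          gcongr
          exact integral_rpow_neg_three_halves_le hr0 hy
      _ = 4 * K * (y ^ 2 / √(y / r)) := by ring
  have hupper := abs_logIntegralGap_self_mul_le hK hr hyr (hpi y (by linarith))
  have hlower := abs_logIntegralGap_div_mul_le hK hr hyr (hpi (y / r) hyr)
  exact habel.trans (by linarith)

lemma abs_NALG_sub_sum_logIntegralGap_le (hK : 0 ≤ K)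
    (hpi : ∀ x : ℝ, 2 ≤ x → |π ⌊x⌋₊ - logIntegral x| ≤ K * √x * Real.log x)
    (hr : 1 < r) (hyr : 2 ≤ y / r) :
    |NALG r (y ^ 2) - ∑ p ∈ Finset.Ioc ⌊y / r⌋₊ ⌊y⌋₊ with p.Prime, logIntegralGap y r p| ≤
      80 * K * (y * √y) := by
  have hy := pos_of_two_le_div (by linarith) hyr
  have hle := div_le_self_of_two_le_div hr hyr
  have hlog : 0 ≤ Real.log y := Real.log_nonneg (by linarith)
  rw [NALG_eq_sum_primeCounting hr.le (sq_nonneg y), Real.sqrt_sq hy.le, ← Finset.sum_sub_distrib]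
  calc |∑ p ∈ Finset.Ioc ⌊y / r⌋₊ ⌊y⌋₊ with p.Prime,
        (π ⌊y ^ 2 / p⌋₊ - π ⌊y ^ 2 / (r * p)⌋₊ - logIntegralGap y r p)|
      ≤ ∑ p ∈ Finset.Ioc ⌊y / r⌋₊ ⌊y⌋₊ with p.Prime,
          4 * K * y * Real.log y * (p : ℝ) ^ (-(1 / 2) : ℝ) := by
        refine (Finset.abs_sum_le_sum_abs _ _).trans (Finset.sum_le_sum fun p hp ↦ ?_)
        rw [Finset.mem_filter, Finset.mem_Ioc, Nat.floor_lt (by linarith),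
          Nat.le_floor_iff hy.le] at hp
        exact abs_primeCounting_sub_sub_logIntegralGap_le hr hyr ⟨hp.1.1.le, hp.1.2⟩ hK hpi
    _ ≤ ∑ p ∈ Nat.primesLE ⌊y⌋₊, 4 * K * y * Real.log y * (p : ℝ) ^ (-(1 / 2) : ℝ) := by
        rw [Nat.primesLE_eq_filter_Ioc_zero]
        gcongr
        exact Nat.zero_le _
    _ = 4 * K * y * (Real.log y * ∑ p ∈ Nat.primesLE ⌊y⌋₊, (p : ℝ) ^ (-(1 / 2) : ℝ)) := by
        rw [← Finset.mul_sum, mul_assoc]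
    _ ≤ 4 * K * y * (20 * √y) :=
        mul_le_mul_of_nonneg_left (log_mul_sum_primes_rpow_neg_half_le (by linarith))
          (by positivity)
    _ = 80 * K * (y * √y) := by ring

theorem exists_forall_abs_NALG_sub_primePairIntegral_le (hRH : RiemannHypothesis) :
    ∃ C > 0, ∀ r y : ℝ, 1 < r → 2 ≤ y / r →
      |NALG r (y ^ 2) - primePairIntegral y r| ≤ C * (y * √y * √r) := by
  obtain ⟨K, hK, hpi⟩ := exists_forall_abs_primeCounting_sub_logIntegral_le hRH
  refine ⟨89 * K, by positivity, fun r y hr hyr ↦ ?_⟩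
  have hy := pos_of_two_le_div (by linarith) hyr
  have hcount := abs_NALG_sub_sum_logIntegralGap_le hK.le hpi hr hyr
  have hsum := abs_sum_logIntegralGap_sub_primePairIntegral_le hK.le hpi hr hyr
  have hsqrt : y * √y ≤ y * √y * √r :=
    le_mul_of_one_le_right (by positivity) (Real.one_le_sqrt.2 hr.le)
  have hscaled := mul_le_mul_of_nonneg_left hsqrt (by positivity : 0 ≤ 80 * K)
  exact (abs_sub_le _ _ _).trans (by linarith)

lemma div_sq_mul_four_mul_div_sq {L M x : ℝ} (hL : L ≠ 0) :
    (L / M) ^ 2 * (4 * x / L ^ 2) = x / (M / 2) ^ 2 := by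
  rw [div_pow, div_mul_div_cancel₀' (pow_ne_zero 2 hL)]
  ring

lemma rpow_three_quarters_mul_rpow_half {x : ℝ} (hx : 0 < x) :
    x ^ (3 / 4 : ℝ) * r ^ (1 / 2 : ℝ) = √x * √(√x) * √r := by
  simp only [Real.sqrt_eq_rpow]
  rw [← Real.rpow_mul hx.le, ← Real.rpow_add hx]
  norm_num

lemma exists_mem_Icc_mul_eq {a b D I : ℝ} (hD : 0 < D) (ha : a * D ≤ I) (hb : I ≤ b * D) :
    ∃ t ∈ Icc a b, t * D = I :=
  ⟨I / D, ⟨(le_div_iff₀ hD).2 ha, (div_le_iff₀ hD).2 hb⟩, div_mul_cancel₀ I hD.ne'⟩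

lemma exists_mem_Icc_mul_eq_primePairIntegral {x : ℝ} (hr : 1 < r) (hxr : 2 ≤ √x / r) :
    ∃ a ∈ Icc ((1 - 2 * Real.log r / (Real.log x + 2 * Real.log r)) ^ 2)
        ((1 + 2 * Real.log r / (Real.log x - 2 * Real.log r)) ^ 2),
      a * ((4 * x / Real.log x ^ 2) * (Real.log r - Real.log r / r)) =
        primePairIntegral (√x) r := by
  have hr0 : 0 < r := by linarith
  have hx : 0 < x := Real.sqrt_pos.1 (pos_of_two_le_div hr0 hxr)
  have hlogr := Real.log_pos hr
  have hlog : 2 * Real.log r < Real.log x := by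
    have := Real.log_pos (by linarith : 1 < √x / r)
    rw [Real.log_div (Real.sqrt_pos.2 hx).ne' hr0.ne', Real.log_sqrt hx.le] at this
    linarith
  have hfactor : 0 < Real.log r - Real.log r / r := sub_pos.2 (div_lt_self hlogr hr)
  have hlower := le_primePairIntegral hr hxr
  have hupper := primePairIntegral_le hr hxr
  rw [Real.sq_sqrt hx.le, Real.log_sqrt hx.le] at hlower hupper
  have hlogx : 0 < Real.log x := by linarith
  refine exists_mem_Icc_mul_eq (by positivity) (hlower.trans' (le_of_eq ?_))
    (hupper.trans (le_of_eq ?_))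
  · rw [one_sub_div (by positivity), add_sub_cancel_right, ← mul_assoc,
      div_sq_mul_four_mul_div_sq hlogx.ne', add_div, mul_div_cancel_left₀ _ two_ne_zero]
    ring
  · rw [one_add_div (by linarith), sub_add_cancel, ← mul_assoc,
      div_sq_mul_four_mul_div_sq hlogx.ne', sub_div, mul_div_cancel_left₀ _ two_ne_zero]
    ring

end PrimePairs

theorem NALG_asymptotics_general (hRH : RiemannHypothesis) :
    ∃ C : ℝ, 0 < C ∧ ∀ r x : ℝ, 1 < r → 2 ≤ √x / r →
      ∃ atil ∈ Set.Icc ((1 - 2 * Real.log r / (Real.log x + 2 * Real.log r)) ^ 2)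
                       ((1 + 2 * Real.log r / (Real.log x - 2 * Real.log r)) ^ 2),
        |(NALG r x : ℝ)
            - atil * (4 * x / (Real.log x) ^ 2) * (Real.log r - Real.log r / r)|
          ≤ C * x ^ ((3 : ℝ) / 4) * r ^ ((1 : ℝ) / 2) := by
  obtain ⟨C, hC, herror⟩ := exists_forall_abs_NALG_sub_primePairIntegral_le hRH
  refine ⟨C, hC, fun r x hr hxr ↦ ?_⟩
  have hx : 0 < x := Real.sqrt_pos.1 (pos_of_two_le_div (by linarith) hxr)
  obtain ⟨a, ha, hmain⟩ := exists_mem_Icc_mul_eq_primePairIntegral hr hxr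
  refine ⟨a, ha, ?_⟩
  have hxy := herror r (√x) hr hxr
  rwa [Real.sq_sqrt hx.le, ← rpow_three_quarters_mul_rpow_half hx, ← mul_assoc, ← hmain,
    ← mul_assoc] at hxy

/-- Theorem 4.7 of the paper (count of algorithmically inspired RSA integers, under RH). -/
theorem NALG_asymptotics (hRH : RiemannHypothesis) :
    ∃ C : ℝ, 0 < C ∧ ∀ r x : ℝ, 1 < r → 2 * Real.log r < Real.log x →
      (2657 : ℝ) ≤ Real.sqrt x / r →
      ∃ atil ∈ Set.Icc ((1 - 2 * Real.log r / (Real.log x + 2 * Real.log r)) ^ 2)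
                       ((1 + 2 * Real.log r / (Real.log x - 2 * Real.log r)) ^ 2),
        |(NALG r x : ℝ)
            - atil * (4 * x / (Real.log x) ^ 2) * (Real.log r - Real.log r / r)|
          ≤ C * x ^ ((3 : ℝ) / 4) * r ^ ((1 : ℝ) / 2) := by
  obtain ⟨C, hC, hbound⟩ := NALG_asymptotics_general hRH
  exact ⟨C, hC, fun r x hr _ hxr ↦ hbound r x hr (by linarith)⟩
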